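/- Let M be an oriented matroid program of rank r on [n] ∪ {f,g} with r ≤ 5 (so that M/{f,g} has rank at most 3), and let ṽ^1,…,ṽ^{r−2} be nodes of K_f, none of which is the source or the sink of K_f. Then there exists an extension 𝑀̃ of M/{f,g} by an element h such that for each i = 1,…,r−2 there is a cocircuit Z^i of 𝑀̃ with Z^i_h = + and Z^i_e ∈ {+,0} for all e ∈ ṽ^i. -/

import Mathlib

/-!
Extensions of the contraction `N = M / {f, g}` are constructed from topes. A node `v` that is
neither the source nor the sink has a covector of `N` that is positive on `v`
(`IsProgram.exists_positive`). Indeed, by the painting lemma an obstruction is a vector of `M` that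
is nonnegative on `v` and zero elsewhere, except at `f` and `g`. If it vanishes at `f`, it is
nonnegative, which is excluded by the nonnegative cocircuits of the program. Otherwise its sign at
`f` forces the directions from all other nodes to `v` to change the objective in the same way. The
direction from the sink to `v` or the one from the source to `v` then contradicts the absence of an
outgoing arc at the sink or of an incoming arc at the source, because a weakly feasible direction
can be replaced by an edge (`IsProgram.exists_edge`, `IsProgram.direction_sink`,
`IsProgram.direction_source`). Hence there are topes `T 1, …, T (r - 2)` of `N` with each `T i`
positive on the corresponding node.

The rank of `N` is `r - 2 ≤ 3` (`IsProgram.dep_contraction`, `IsProgram.indep_contraction`), so it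
remains to find, for `m ≤ 3` topes of an oriented matroid of rank `m`, a new element that is
positive on suitable extensions of all of them (`exists_extension_low`); a cocircuit conformally
below such an extension of a tope is as required (`exists_cocircuit_le`). In rank one a parallel
element will do. In rank two either the topes agree on some element, and a parallel or antiparallel
one will do, or they are opposite, and a new element cuts both (`exists_side_two`). In rank three
there is a pseudoline through two of the topes (`exists_side_three`), and one of its two sides
contains the third.

The new elements are described by their weakly positive sides, predicates on covectors that satisfy
a few axioms guaranteeing an extension (`IsSide`, `exists_extension_of_side`). The pseudoline in
rank three crosses the elements in the order of a gallery from one tope through the other to the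
opposite one, and a second gallery, in the contraction of the element `a` crossed first, decides
between its two sides (`Frame`, `Side`). The axioms are verified by comparing sign patterns on
three elements with the dependences among four elements.
-/

open Set

/-- A *sign vector* on an ambient type `α`. -/
abbrev SignVec (α : Type*) := α → SignType

namespace OMHK

variable {α : Type*}

/-- The support of a sign vector. -/
def supp (X : SignVec α) : Set α := {e | X e ≠ 0}

/-- A sign vector is nonnegative if every entry is `+` or `0`. -/
def Nonneg (X : SignVec α) : Prop := ∀ e, X e = 1 ∨ X e = 0

/-- Composition of sign vectors: `(X ∘ Y)ₑ = Xₑ` if `Xₑ ≠ 0`, else `Yₑ`. -/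
def compose (X Y : SignVec α) : SignVec α := fun e => if X e ≠ 0 then X e else Y e

/-- The separation set `S(X,Y) = {e : Xₑ = -Yₑ ≠ 0}`. -/
def sep (X Y : SignVec α) : Set α := {e | X e = -(Y e) ∧ X e ≠ 0}

/-- Two sign vectors are orthogonal if `S(X,Y)` and `S(X,-Y)` are both empty
or both nonempty. -/
def Orth (X Y : SignVec α) : Prop :=
  (sep X Y = ∅ ∧ sep X (-Y) = ∅) ∨ (sep X Y ≠ ∅ ∧ sep X (-Y) ≠ ∅)

/-- An oriented matroid with finite ground set inside the ambient type `α`,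
presented by its collection of covectors (sign vectors supported on the
ground set), satisfying the covector axioms. -/
structure OrientedMatroid (α : Type*) where
  ground : Set α
  ground_finite : ground.Finite
  covectors : Set (SignVec α)
  supp_subset : ∀ X ∈ covectors, supp X ⊆ ground
  zero_mem : (0 : SignVec α) ∈ covectors
  neg_mem : ∀ X ∈ covectors, -X ∈ covectors
  compose_mem : ∀ X ∈ covectors, ∀ Y ∈ covectors, compose X Y ∈ covectors
  elim : ∀ X ∈ covectors, ∀ Y ∈ covectors, ∀ e ∈ sep X Y,
    ∃ Z ∈ covectors, Z e = 0 ∧ ∀ e' ∉ sep X Y, Z e' = compose X Y e'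

namespace OrientedMatroid

variable (M : OrientedMatroid α)

/-- A cocircuit: a nonzero covector of minimal support. -/
def IsCocircuit (X : SignVec α) : Prop :=
  X ∈ M.covectors ∧ X ≠ 0 ∧
    ∀ Y ∈ M.covectors, Y ≠ 0 → supp Y ⊆ supp X → supp Y = supp X

/-- A vector: a sign vector supported on the ground set and orthogonal to
every covector. -/
def IsVector (X : SignVec α) : Prop :=
  supp X ⊆ M.ground ∧ ∀ Y ∈ M.covectors, Orth X Y

/-- A circuit: a nonzero vector of minimal support. -/
def IsCircuit (X : SignVec α) : Prop :=
  M.IsVector X ∧ X ≠ 0 ∧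
    ∀ Y, M.IsVector Y → Y ≠ 0 → supp Y ⊆ supp X → supp Y = supp X

/-- A set is independent if it is contained in the ground set and contains
the support of no circuit. -/
def Indep (A : Set α) : Prop :=
  A ⊆ M.ground ∧ ∀ X, M.IsCircuit X → ¬ supp X ⊆ A

/-- The rank of a subset: maximal cardinality of an independent subset of it. -/
noncomputable def rk (A : Set α) : ℕ :=
  sSup {k | ∃ I : Set α, I ⊆ A ∧ M.Indep I ∧ I.ncard = k}

/-- The rank of the oriented matroid. -/
noncomputable def rank : ℕ := M.rk M.ground

end OrientedMatroid

open scoped Classical in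
/-- Zero out the coordinates in `A` (the restriction to the complement of `A`,
in ambient terms). -/
noncomputable def restrictAway (A : Set α) (X : SignVec α) : SignVec α :=
  fun e => if e ∈ A then 0 else X e

/-- `M'` is the deletion `M ∖ A`: its ground set is `M.ground ∖ A` and its
circuits are the circuits of `M` vanishing on `A`. -/
def IsDeletion (M : OrientedMatroid α) (A : Set α) (M' : OrientedMatroid α) : Prop :=
  M'.ground = M.ground \ A ∧
  ∀ X, M'.IsCircuit X ↔ (M.IsCircuit X ∧ ∀ e ∈ A, X e = 0)

/-- `M'` is the contraction `M / A`: its ground set is `M.ground ∖ A` and its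
circuits are the nonzero minimal-support members of the restrictions away from
`A` of circuits of `M`. -/
def IsContraction (M : OrientedMatroid α) (A : Set α) (M' : OrientedMatroid α) : Prop :=
  M'.ground = M.ground \ A ∧
  ∀ X, M'.IsCircuit X ↔
    (X ≠ 0 ∧ (∃ Y, M.IsCircuit Y ∧ X = restrictAway A Y) ∧
      ∀ Z : SignVec α, Z ≠ 0 → (∃ Y, M.IsCircuit Y ∧ Z = restrictAway A Y) →
        supp Z ⊆ supp X → supp Z = supp X)

/-- `Nh` is an extension of `N` by the new element `h` (same rank). -/
def IsExtension (N : OrientedMatroid α) (h : α) (Nh : OrientedMatroid α) : Prop :=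
  h ∉ N.ground ∧ Nh.ground = insert h N.ground ∧ Nh.rank = N.rank ∧
    IsDeletion Nh {h} N

/-- The element `h` is in general position in `Nh`: every circuit whose support
contains `h` has support of cardinality `rank + 1`. -/
def GenPos (Nh : OrientedMatroid α) (h : α) : Prop :=
  ∀ X, Nh.IsCircuit X → X h ≠ 0 → (supp X).ncard = Nh.rank + 1

/-- A directed path from `a` to `b` in the digraph with arc relation `A`. -/
def IsDipath {V : Type*} (A : V → V → Prop) (p : List V) (a b : V) : Prop :=
  p ≠ [] ∧ p.head? = some a ∧ p.getLast? = some b ∧ p.Chain' A ∧ p.Nodup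

/-! ### Oriented matroid programs.
We fix the ambient type `ℕ`; the ground set of a program is `[n] ∪ {f, g}`
where `[n] = {0, …, n-1}`, the objective element is `f = n` and the right hand
side element is `g = n + 1`.  Extensions use the fresh element `h = n + 2`. -/

/-- `[n] = {0, …, n - 1}`. -/
def nset (n : ℕ) : Set ℕ := {k | k < n}

/-- `M` is an oriented matroid program of rank `r` on `[n] ∪ {f, g}`
(`f = n`, `g = n + 1`), where `Mf` denotes the deletion `M ∖ f`:
(i) every nonnegative cocircuit of `M ∖ f` has `g` in its support;
(ii) for every `e ∈ [n]` there is a nonnegative cocircuit `Y` of `M ∖ f`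
with `Y e = +`; (iii) every circuit of `M` whose support contains `f` has
support of cardinality `r + 1`. -/
def IsProgram (M Mf : OrientedMatroid ℕ) (n r : ℕ) : Prop :=
  M.ground = nset n ∪ {n, n + 1} ∧ M.rank = r ∧ IsDeletion M {n} Mf ∧
  (∀ Y, Mf.IsCocircuit Y → Nonneg Y → Y (n + 1) ≠ 0) ∧
  (∀ e, e < n → ∃ Y, Mf.IsCocircuit Y ∧ Nonneg Y ∧ Y e = 1) ∧
  (∀ X, M.IsCircuit X → X n ≠ 0 → (supp X).ncard = r + 1)

/-- A node of the program: `[n] ∖ supp Y` for `Y` a nonnegative cocircuit of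
`M ∖ f`. -/
def IsNode (Mf : OrientedMatroid ℕ) (n : ℕ) (v : Set ℕ) : Prop :=
  ∃ Y, Mf.IsCocircuit Y ∧ Nonneg Y ∧ v = nset n \ supp Y

/-- The arc relation of the digraph `K_f`: `v → v'` when `v, v'` are adjacent
nodes and the witnessing cocircuit `Y''` of `M` (zero at `g`, positive on
`v' ∖ v`, negative on `v ∖ v'`, zero on `v ∩ v'`, nonzero at `f`) satisfies
`Y'' f = Y'' e` for `e ∈ v ∖ v'`. -/
def Arc (M Mf : OrientedMatroid ℕ) (n r : ℕ) (v v' : Set ℕ) : Prop :=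
  IsNode Mf n v ∧ IsNode Mf n v' ∧ v ≠ v' ∧ M.rk (v ∩ v') = r - 2 ∧
  ∃ Y, M.IsCocircuit Y ∧ Y (n + 1) = 0 ∧
    (∀ e ∈ v' \ v, Y e = 1) ∧ (∀ e ∈ v \ v', Y e = -1) ∧
    (∀ e ∈ v ∩ v', Y e = 0) ∧ Y n ≠ 0 ∧ (∀ e ∈ v \ v', Y n = Y e)

/-- The source of `K_f`: the node with no incoming arcs. -/
def IsSource (M Mf : OrientedMatroid ℕ) (n r : ℕ) (v : Set ℕ) : Prop :=
  IsNode Mf n v ∧ ∀ u, ¬ Arc M Mf n r u v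

/-- The sink of `K_f`: the node with no outgoing arcs. -/
def IsSink (M Mf : OrientedMatroid ℕ) (n r : ℕ) (v : Set ℕ) : Prop :=
  IsNode Mf n v ∧ ∀ u, ¬ Arc M Mf n r v u

/-- The arc relation of the digraph `K_h` determined by an extension `M̂` of
`M/g` by `h = n + 2` in general position; `Mhf` denotes `M̂ ∖ f`. -/
def ArcH (M Mf Mhf : OrientedMatroid ℕ) (n r : ℕ) (v v' : Set ℕ) : Prop :=
  IsNode Mf n v ∧ IsNode Mf n v' ∧ v ≠ v' ∧ M.rk (v ∩ v') = r - 2 ∧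
  ∃ Y, Mhf.IsCocircuit Y ∧
    (∀ e ∈ v' \ v, Y e = 1) ∧ (∀ e ∈ v \ v', Y e = -1) ∧
    (∀ e ∈ v ∩ v', Y e = 0) ∧ Y (n + 2) ≠ 0 ∧ (∀ e ∈ v \ v', Y (n + 2) = Y e)

/-- `x` is a vertex of the subdigraph `K_{[f,-h]}`: there is a vector `X` of
`M̂` with `X₊ = x ∪ {h}` and `X₋ = {f}`. -/
def InKfmh (Mhat : OrientedMatroid ℕ) (n : ℕ) (x : Set ℕ) : Prop :=
  ∃ X, Mhat.IsVector X ∧ {e | X e = 1} = x ∪ {n + 2} ∧ {e | X e = -1} = {n}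

/-- `x` is a vertex of the subdigraph `K_{[-h,-f]}`: there is a vector `X` of
`M̂` with `X₊ = x ∪ {f, h}` and `X₋ = ∅`. -/
def InKmhmf (Mhat : OrientedMatroid ℕ) (n : ℕ) (x : Set ℕ) : Prop :=
  ∃ X, Mhat.IsVector X ∧ {e | X e = 1} = x ∪ {n, n + 2} ∧ {e | X e = -1} = (∅ : Set ℕ)

end OMHK
namespace OMHK

open OrientedMatroid

open scoped Classical in
/-- `N` has an adjoint: an oriented matroid `A` of the same rank together with
an injection `am` from the ground set of `A` into the cocircuits of `N` whose
image contains exactly one cocircuit of each opposite pair, such that for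
every `e` in the ground set of `N` the sign vector `b ↦ (am b) e` is a
cocircuit of `A`. -/
def HasAdjoint (N : OrientedMatroid ℕ) : Prop :=
  ∃ (β : Type) (A : OrientedMatroid β) (am : β → SignVec ℕ),
    A.rank = N.rank ∧
    (∀ b ∈ A.ground, N.IsCocircuit (am b)) ∧
    Set.InjOn am A.ground ∧
    (∀ Y, N.IsCocircuit Y →
      Xor' (∃ b ∈ A.ground, am b = Y) (∃ b ∈ A.ground, am b = -Y)) ∧
    (∀ e ∈ N.ground, A.IsCocircuit (fun b => if b ∈ A.ground then am b e else 0))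

/-- The generalized Levi intersection property for an oriented matroid `N` of
rank `s`: for every list of `s - 1` covectors `Y¹, …, Y^{s-1}` of `N` there is
an extension `N̂` of `N` by an element `h` and covectors `W¹, …, W^{s-1}` of
`N̂` with `Wⁱ h = 0` and `Wⁱ e = Yⁱ e` for all `e ≠ h`. -/
def GenLevi (N : OrientedMatroid ℕ) : Prop :=
  ∀ Y : Fin (N.rank - 1) → SignVec ℕ, (∀ i, Y i ∈ N.covectors) →
    ∃ h ∉ N.ground, ∃ Nh : OrientedMatroid ℕ, IsExtension N h Nh ∧
      ∃ W : Fin (N.rank - 1) → SignVec ℕ,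
        ∀ i, W i ∈ Nh.covectors ∧ W i h = 0 ∧ ∀ e, e ≠ h → W i e = Y i e

/-- `p ∈ conv_N(A)`: there is a circuit `X` of `N` with `X₊ ⊆ A` and
`X₋ = {p}`. -/
def MemConv (N : OrientedMatroid ℕ) (p : ℕ) (A : Set ℕ) : Prop :=
  ∃ X, N.IsCircuit X ∧ {e | X e = 1} ⊆ A ∧ {e | X e = -1} = {p}

/-- A face of `N`: the complement in the ground set of the support of a
nonnegative covector. -/
def IsFace (N : OrientedMatroid ℕ) (F : Set ℕ) : Prop :=
  ∃ Y ∈ N.covectors, Nonneg Y ∧ F = N.ground \ supp Y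

/-- A facet of `N`: a face of rank `rank N - 1`. -/
def IsFacet (N : OrientedMatroid ℕ) (F : Set ℕ) : Prop :=
  IsFace N F ∧ N.rk F = N.rank - 1

/-- `S` is a subdivision of the oriented matroid `N`. -/
def IsSubdivision (N : OrientedMatroid ℕ) (S : Set (Set ℕ)) : Prop :=
  (∀ σ ∈ S, σ ⊆ N.ground ∧ N.rk σ = N.rank) ∧
  (∀ f ∉ N.ground, ∀ Nf : OrientedMatroid ℕ, IsExtension N f Nf →
    ∀ σ1 ∈ S, ∀ σ2 ∈ S,
      MemConv Nf f σ1 → MemConv Nf f σ2 → MemConv Nf f (σ1 ∩ σ2)) ∧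
  (∀ σ1 ∈ S, ∀ σ2 ∈ S, ∀ N1 : OrientedMatroid ℕ,
    IsDeletion N (N.ground \ σ1) N1 → IsFace N1 (σ1 ∩ σ2)) ∧
  (∀ σ ∈ S, ∀ Nσ : OrientedMatroid ℕ, IsDeletion N (N.ground \ σ) Nσ →
    ∀ F, IsFacet Nσ F →
      (∃ G, IsFacet N G ∧ F ⊆ G) ∨ ({τ ∈ S | F ⊆ τ}.ncard = 2))

/-- The arc relation of the digraph `K_f` on the cells of a subdivision `S` of
`N`, induced by an extension `Nf` of `N` by `f` in general position. -/
def CellArc (N Nf : OrientedMatroid ℕ) (f : ℕ) (S : Set (Set ℕ))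
    (σ1 σ2 : Set ℕ) : Prop :=
  σ1 ∈ S ∧ σ2 ∈ S ∧ σ1 ≠ σ2 ∧ N.rk (σ1 ∩ σ2) = N.rank - 1 ∧
  ∃ Y, Nf.IsCocircuit Y ∧ (∀ e ∈ σ1 ∩ σ2, Y e = 0) ∧ Y f = 1 ∧
    ∀ e ∈ σ1 \ σ2, Y e = 1

/-- The source of the cell digraph: the cell `σ` admitting a vector `C` of
`N ∪ f` with `C f = -` and `C₊ = σ`. -/
def IsCellSource (Nf : OrientedMatroid ℕ) (f : ℕ) (S : Set (Set ℕ))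
    (σ : Set ℕ) : Prop :=
  σ ∈ S ∧ ∃ C, Nf.IsVector C ∧ C f = -1 ∧ {e | C e = 1} = σ

/-- The sink of the cell digraph: the cell `σ` admitting a vector `C` of
`N ∪ f` with `C f = +` and `C₊ = σ`. -/
def IsCellSink (Nf : OrientedMatroid ℕ) (f : ℕ) (S : Set (Set ℕ))
    (σ : Set ℕ) : Prop :=
  σ ∈ S ∧ ∃ C, Nf.IsVector C ∧ C f = 1 ∧ {e | C e = 1} = σ

/-- Property (P) for an oriented matroid of rank `n` on `[2n]`: every circuit
`Y` has `Y i = Y (n+i) ≠ 0` for some `i < n`. -/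
def PropertyP (N : OrientedMatroid ℕ) (n : ℕ) : Prop :=
  ∀ X, N.IsCircuit X → ∃ i, i < n ∧ X i = X (n + i) ∧ X i ≠ 0

/-- The cells of the cube subdivision: sets `B ⊆ [2n]` with
`|B ∩ {i, n+i}| = 1` for every `i < n`. -/
def cubeCells (n : ℕ) : Set (Set ℕ) :=
  {B | B ⊆ nset (2 * n) ∧
    ∀ i, i < n → ((i ∈ B ∧ n + i ∉ B) ∨ (i ∉ B ∧ n + i ∈ B))}

open OrientedMatroid

section Duality

variable {α : Type*}

/-! ### Signs, orthogonality, deletion and contraction of covectors -/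

theorem compose_apply (X Y : SignVec α) (e : α) :
    compose X Y e = if X e ≠ 0 then X e else Y e := rfl

theorem compose_of_ne {X Y : SignVec α} {e : α} (h : X e ≠ 0) : compose X Y e = X e := by
  simp [compose, h]

theorem compose_of_eq {X Y : SignVec α} {e : α} (h : X e = 0) : compose X Y e = Y e := by
  simp [compose, h]

theorem mem_sep {X Y : SignVec α} {e : α} : e ∈ sep X Y ↔ X e = -(Y e) ∧ X e ≠ 0 := Iff.rfl

theorem mem_supp {X : SignVec α} {e : α} : e ∈ supp X ↔ X e ≠ 0 := Iff.rfl

theorem res_mem {A : Set α} {X : SignVec α} {e : α} (h : e ∈ A) : restrictAway A X e = 0 := by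
  simp [restrictAway, h]

theorem res_not_mem {A : Set α} {X : SignVec α} {e : α} (h : e ∉ A) :
    restrictAway A X e = X e := by
  simp [restrictAway, h]

theorem orth_iff (X Y : SignVec α) :
    Orth X Y ↔ ((∃ e, X e * Y e = 1) ↔ (∃ e, X e * Y e = -1)) := by
  have h1 : ∀ x y : SignType, (x = -y ∧ x ≠ 0) ↔ x * y = -1 := by decide
  have h2 : ∀ x y : SignType, (x = - -y ∧ x ≠ 0) ↔ x * y = 1 := by decide
  have e1 : sep X Y = ∅ ↔ ¬ ∃ e, X e * Y e = -1 := by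
    rw [Set.eq_empty_iff_forall_notMem, not_exists]
    exact forall_congr' fun e => not_congr (h1 _ _)
  have e2 : sep X (-Y) = ∅ ↔ ¬ ∃ e, X e * Y e = 1 := by
    rw [Set.eq_empty_iff_forall_notMem, not_exists]
    exact forall_congr' fun e => not_congr (h2 _ _)
  unfold Orth
  rw [Ne, Ne, e1, e2]
  tauto

theorem orth_comm {X Y : SignVec α} : Orth X Y ↔ Orth Y X := by
  rw [orth_iff, orth_iff]; simp only [mul_comm]

theorem orth_neg_left {X Y : SignVec α} (h : Orth X Y) : Orth (-X) Y := by
  rw [orth_iff] at *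
  simp only [Pi.neg_apply, neg_mul, neg_eq_iff_eq_neg]
  simpa using h.symm

theorem orth_neg_right {X Y : SignVec α} (h : Orth X Y) : Orth X (-Y) :=
  orth_comm.1 (orth_neg_left (orth_comm.1 h))

/-- A product of orthogonal sign vectors that is nowhere negative vanishes. -/
theorem orth_nonneg {X Y : SignVec α} (h : Orth X Y) (hn : ∀ e, X e * Y e ≠ -1) (e : α) :
    X e * Y e = 0 := by
  rw [orth_iff] at h
  have h1 : X e * Y e ≠ 1 := fun h' => by
    obtain ⟨a, ha⟩ := h.1 ⟨e, h'⟩; exact hn a ha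
  have := hn e
  revert h1 this
  generalize X e * Y e = z
  revert z; decide

theorem orth_nonpos {X Y : SignVec α} (h : Orth X Y) (hn : ∀ e, X e * Y e ≠ 1) (e : α) :
    X e * Y e = 0 := by
  have := orth_nonneg (orth_neg_left h) (fun e => by
    have := hn e
    simpa [neg_eq_iff_eq_neg] using this) e
  simpa using this

theorem sign_cases (x : SignType) : x = 0 ∨ x = 1 ∨ x = -1 := by revert x; decide

theorem sign_cases_of (s x : SignType) (hs : s ≠ 0) : x = 0 ∨ x = s ∨ x = -s := by
  revert s x; decide

/-- Deletion, on the level of covectors. -/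
noncomputable def del (M : OrientedMatroid α) (A : Set α) : OrientedMatroid α where
  ground := M.ground \ A
  ground_finite := M.ground_finite.sdiff
  covectors := restrictAway A '' M.covectors
  supp_subset := by
    rintro _ ⟨X, hX, rfl⟩ e he
    by_cases hA : e ∈ A
    · exact absurd (res_mem hA) he
    · rw [mem_supp, res_not_mem hA] at he
      exact ⟨M.supp_subset X hX he, hA⟩
  zero_mem := ⟨0, M.zero_mem, by funext e; by_cases h : e ∈ A <;> simp [restrictAway, h]⟩
  neg_mem := by
    rintro _ ⟨X, hX, rfl⟩
    exact ⟨-X, M.neg_mem X hX, by funext e; by_cases h : e ∈ A <;> simp [restrictAway, h]⟩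
  compose_mem := by
    rintro _ ⟨X, hX, rfl⟩ _ ⟨Y, hY, rfl⟩
    exact ⟨compose X Y, M.compose_mem X hX Y hY, by
      funext e; by_cases h : e ∈ A <;> simp [restrictAway, compose, h]⟩
  elim := by
    rintro _ ⟨X, hX, rfl⟩ _ ⟨Y, hY, rfl⟩ e he
    have heA : e ∉ A := fun h => he.2 (res_mem h)
    have he' : e ∈ sep X Y := by simpa [mem_sep, res_not_mem heA] using he
    obtain ⟨Z, hZ, hZe, hZs⟩ := M.elim X hX Y hY e he'
    refine ⟨_, ⟨Z, hZ, rfl⟩, by rw [res_not_mem heA, hZe], fun a ha => ?_⟩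
    by_cases haA : a ∈ A
    · simp [compose, res_mem haA]
    · have : a ∉ sep X Y := fun h => ha (by simpa [mem_sep, res_not_mem haA] using h)
      simpa [compose, res_not_mem haA] using hZs a this

/-- Contraction, on the level of covectors. -/
def con (M : OrientedMatroid α) (A : Set α) : OrientedMatroid α where
  ground := M.ground \ A
  ground_finite := M.ground_finite.sdiff
  covectors := {X | X ∈ M.covectors ∧ ∀ a ∈ A, X a = 0}
  supp_subset := fun X hX e he => ⟨M.supp_subset X hX.1 he, fun h => he (hX.2 e h)⟩
  zero_mem := ⟨M.zero_mem, fun _ _ => rfl⟩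
  neg_mem := fun X hX => ⟨M.neg_mem X hX.1, fun a ha => by simp [hX.2 a ha]⟩
  compose_mem := fun X hX Y hY => ⟨M.compose_mem X hX.1 Y hY.1, fun a ha => by
    simp [compose, hX.2 a ha, hY.2 a ha]⟩
  elim := by
    rintro X hX Y hY e he
    obtain ⟨Z, hZ, hZe, hZs⟩ := M.elim X hX.1 Y hY.1 e he
    refine ⟨Z, ⟨hZ, fun a ha => ?_⟩, hZe, hZs⟩
    rw [hZs a (fun h => h.2 (hX.2 a ha))]
    simp [compose, hX.2 a ha, hY.2 a ha]

theorem mem_con {M : OrientedMatroid α} {A : Set α} {X : SignVec α} :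
    X ∈ (con M A).covectors ↔ X ∈ M.covectors ∧ ∀ a ∈ A, X a = 0 := Iff.rfl

theorem eq_zero_of_not_ground (M : OrientedMatroid α) {X : SignVec α} (hX : X ∈ M.covectors)
    {e : α} (he : e ∉ M.ground) : X e = 0 := by
  by_contra h; exact he (M.supp_subset X hX h)

theorem vector_del_iff (M : OrientedMatroid α) (A : Set α) (V : SignVec α) :
    (del M A).IsVector V ↔ M.IsVector V ∧ ∀ a ∈ A, V a = 0 := by
  have key : (∀ a ∈ A, V a = 0) → ∀ Y : SignVec α, ∀ e, V e * restrictAway A Y e = V e * Y e := by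
    intro h Y e
    by_cases he : e ∈ A
    · simp [h e he]
    · rw [res_not_mem he]
  constructor
  · rintro ⟨h1, h2⟩
    have h0 : ∀ a ∈ A, V a = 0 := fun a ha => by
      by_contra h; exact (h1 h).2 ha
    refine ⟨⟨h1.trans Set.sdiff_subset, fun Y hY => ?_⟩, h0⟩
    have := h2 _ ⟨Y, hY, rfl⟩
    rw [orth_iff] at this ⊢
    simpa only [key h0] using this
  · rintro ⟨⟨h1, h2⟩, h0⟩
    refine ⟨fun e he => ⟨h1 he, fun h => he (h0 e h)⟩, ?_⟩
    rintro _ ⟨Y, hY, rfl⟩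
    have := h2 Y hY
    rw [orth_iff] at this ⊢
    simpa only [key h0] using this

/-- A vector of the contraction by one element extends to a vector: if no sign at `a` worked,
the three offending covectors could be eliminated to a covector of the contraction that is
nonnegative, but not zero, on the support of the vector. -/
theorem vector_con_lift (M : OrientedMatroid α) {a : α} (ha : a ∈ M.ground) {V : SignVec α}
    (hV : (con M {a}).IsVector V) : ∃ W, M.IsVector W ∧ ∀ b, b ≠ a → W b = V b := by
  classical
  have hVa : V a = 0 := by
    by_contra h; exact (hV.1 h).2 rfl
  have hsup : ∀ s : SignType, supp (Function.update V a s) ⊆ M.ground := by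
    intro s e he
    by_cases hea : e = a
    · exact hea ▸ ha
    · rw [mem_supp, Function.update_of_ne hea] at he
      exact (hV.1 he).1
  -- a failing sign `s` yields a covector nonnegative on `supp V`, with product `≥ 0` at `a`
  have fail : ∀ s : SignType, ¬ M.IsVector (Function.update V a s) →
      ∃ Y ∈ M.covectors, (∀ b, V b * Y b ≠ -1) ∧ s * Y a ≠ -1 ∧
        (s * Y a = 1 ∨ ∃ b, V b * Y b = 1) := by
    intro s hs
    have : ∃ Y ∈ M.covectors, ¬ Orth (Function.update V a s) Y := by
      by_contra hc; push Not at hc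
      exact hs ⟨hsup s, hc⟩
    obtain ⟨Y, hY, hno⟩ := this
    have conv : ∀ Y : SignVec α, (∀ b, Function.update V a s b * Y b ≠ -1) →
        (∃ b, Function.update V a s b * Y b = 1) →
        (∀ b, V b * Y b ≠ -1) ∧ s * Y a ≠ -1 ∧ (s * Y a = 1 ∨ ∃ b, V b * Y b = 1) := by
      intro Y h1 h2
      refine ⟨fun b => ?_, by simpa using h1 a, ?_⟩
      · by_cases hb : b = a
        · subst hb; simp [hVa]
        · simpa [Function.update_of_ne hb] using h1 b
      · obtain ⟨b, hb⟩ := h2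
        by_cases hba : b = a
        · subst hba; left; simpa using hb
        · right; exact ⟨b, by simpa [Function.update_of_ne hba] using hb⟩
    rw [orth_iff] at hno
    by_cases hpos : ∃ b, Function.update V a s b * Y b = 1
    · have hneg : ¬ ∃ b, Function.update V a s b * Y b = -1 := fun h => hno ⟨fun _ => h, fun _ => hpos⟩
      push Not at hneg
      exact ⟨Y, hY, conv Y hneg hpos⟩
    · have hneg : ∃ b, Function.update V a s b * Y b = -1 := by
        by_contra h; exact hno ⟨fun h' => absurd h' hpos, fun h' => absurd h' h⟩
      push Not at hpos
      refine ⟨-Y, M.neg_mem Y hY, conv (-Y) (fun b => ?_) ?_⟩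
      · have := hpos b
        simpa using this
      · obtain ⟨b, hb⟩ := hneg
        exact ⟨b, by simp [hb]⟩
  by_contra hcon
  push Not at hcon
  have nov : ∀ s, ¬ M.IsVector (Function.update V a s) := fun s hs => by
    obtain ⟨b, hb, hb'⟩ := hcon _ hs
    exact hb' (Function.update_of_ne hb _ _)
  obtain ⟨Y0, hY0, h0a, -, h0c⟩ := fail 0 (nov 0)
  have h0c : ∃ b, V b * Y0 b = 1 := by simpa using h0c
  -- covectors vanishing at `a` cannot be nonnegative and nonzero on `supp V`
  have nocon : ∀ Z ∈ M.covectors, Z a = 0 → (∀ b, V b * Z b ≠ -1) → ¬ ∃ b, V b * Z b = 1 := by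
    rintro Z hZ hZa h1 ⟨b, hb⟩
    have := orth_nonneg (hV.2 Z ⟨hZ, by simpa using hZa⟩) h1 b
    rw [this] at hb; exact absurd hb (by decide)
  have hY0a : Y0 a ≠ 0 := fun h => nocon Y0 hY0 h h0a h0c
  obtain ⟨Y1, hY1, h1a, h1b, h1c⟩ := fail (-Y0 a) (nov _)
  have hY1a : Y1 a = -Y0 a := by
    have : Y1 a ≠ 0 := fun h => nocon Y1 hY1 h h1a (by simpa [h] using h1c)
    revert h1b this hY0a; generalize Y1 a = x; generalize Y0 a = y
    revert x y; decide
  obtain ⟨Z, hZ, hZa, hZs⟩ := M.elim Y0 hY0 Y1 hY1 a ⟨by rw [hY1a, neg_neg], hY0a⟩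
  have sg : ∀ v x y : SignType, v * x ≠ -1 → v * y ≠ -1 → v ≠ 0 →
      ¬ (x = -y ∧ x ≠ 0) ∧ v * (if x ≠ 0 then x else y) ≠ -1 ∧
        (v * x = 1 → v * (if x ≠ 0 then x else y) = 1) := by decide
  refine nocon Z hZ hZa (fun b => ?_) ?_
  · by_cases hb : V b = 0
    · simp [hb]
    · obtain ⟨g1, g2, -⟩ := sg _ _ _ (h0a b) (h1a b) hb
      rw [hZs b g1]; exact g2
  · obtain ⟨b, hb⟩ := h0c
    have hVb : V b ≠ 0 := fun h => by simp [h] at hb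
    obtain ⟨g1, -, g3⟩ := sg _ _ _ (h0a b) (h1a b) hVb
    exact ⟨b, by rw [hZs b g1]; exact g3 hb⟩

/-- The painting lemma (Farkas, Minty): elements outside `D` are constrained to the sign `S`,
elements of `D` are free for the covector and forbidden for the vector; where `S` vanishes the
covector must vanish and the vector is free. -/
theorem painting (D : Set α) (S : SignVec α) {e : α} (heD : e ∉ D) (hSe : S e ≠ 0) (k : ℕ) :
    ∀ M : OrientedMatroid α, e ∈ M.ground → (M.ground \ {e}).ncard = k →
    (∃ Y ∈ M.covectors, Y e = S e ∧ ∀ a ∉ D, Y a = 0 ∨ Y a = S a) ∨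
    (∃ V, M.IsVector V ∧ V e = S e ∧ (∀ a ∈ D, V a = 0) ∧
      ∀ a ∉ D, S a ≠ 0 → V a = 0 ∨ V a = S a) := by
  classical
  induction k with
  | zero =>
    intro M he hk
    have hk' : M.ground \ {e} = ∅ := (Set.ncard_eq_zero M.ground_finite.sdiff).1 hk
    have hz : ∀ Y ∈ M.covectors, ∀ a, a ≠ e → Y a = 0 := fun Y hY a ha =>
      eq_zero_of_not_ground M hY (fun h => by
        have : a ∈ M.ground \ {e} := ⟨h, ha⟩
        rw [hk'] at this; exact this)
    by_cases h : ∃ Y ∈ M.covectors, Y e = S e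
    · obtain ⟨Y, hY, hYe⟩ := h
      refine Or.inl ⟨Y, hY, hYe, fun a _ => ?_⟩
      by_cases ha : a = e
      · subst ha; exact Or.inr hYe
      · exact Or.inl (hz Y hY a ha)
    · have hz' : ∀ Y ∈ M.covectors, ∀ a, Y a = 0 := fun Y hY a => by
        by_cases ha : a = e
        · subst ha
          rcases sign_cases_of (S a) (Y a) hSe with h1 | h1 | h1
          · exact h1
          · exact absurd ⟨Y, hY, h1⟩ h
          · exact absurd ⟨-Y, M.neg_mem Y hY, by simp [h1]⟩ h
        · exact hz Y hY a ha
      refine Or.inr ⟨Function.update 0 e (S e), ⟨fun a ha => ?_, fun Y hY => ?_⟩, by simp,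
        fun a ha => ?_, fun a _ _ => ?_⟩
      · by_cases hae : a = e
        · exact hae ▸ he
        · simp [mem_supp, Function.update_of_ne hae] at ha
      · rw [orth_iff]; simp [hz' Y hY]
      · have hae : a ≠ e := fun h => heD (h ▸ ha)
        rw [Function.update_of_ne hae]; rfl
      · by_cases hae : a = e
        · subst hae; right; simp
        · left; rw [Function.update_of_ne hae]; rfl
  | succ k ih =>
    intro M he hk
    have : (M.ground \ {e}).Nonempty := by
      rw [Set.nonempty_iff_ne_empty]; intro h; rw [h] at hk; simp at hk
    obtain ⟨a, haM, hae⟩ := this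
    have hae : a ≠ e := hae
    have hcard : ((M.ground \ {a}) \ {e}).ncard = k := by
      have h1 : (M.ground \ {a}) \ {e} = (M.ground \ {e}) \ {a} := by
        rw [Set.sdiff_sdiff_comm]
      have h2 := Set.ncard_sdiff_singleton_of_mem (s := M.ground \ {e}) (a := a) ⟨haM, hae⟩
      rw [h1, h2, hk]; rfl
    have he' : e ∈ M.ground \ {a} := ⟨he, fun h => hae h.symm⟩
    have IHd := ih (del M {a}) he' hcard
    have IHc := ih (con M {a}) he' hcard
    rcases IHd with ⟨_, ⟨Y, hY, rfl⟩, hYe, hYa⟩ | ⟨V, hV, hVe⟩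
    swap
    · exact Or.inr ⟨V, ((vector_del_iff M _ V).1 hV).1, hVe⟩
    rw [res_not_mem (fun h => hae (Set.mem_singleton_iff.1 h).symm)] at hYe
    have hYb : ∀ b ∉ D, b ≠ a → Y b = 0 ∨ Y b = S b := fun b hb hba => by
      have := hYa b hb
      rwa [res_not_mem (by simpa using hba)] at this
    by_cases hok : a ∈ D ∨ Y a = 0 ∨ Y a = S a
    · refine Or.inl ⟨Y, hY, hYe, fun b hb => ?_⟩
      by_cases hba : b = a
      · subst hba; exact hok.resolve_left hb
      · exact hYb b hb hba
    push Not at hok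
    obtain ⟨haD, hYa0, hYaS⟩ := hok
    rcases IHc with ⟨Y', hY', hY'e⟩ | ⟨V', hV', hV'e, hV'D, hV'S⟩
    · exact Or.inl ⟨Y', hY'.1, hY'e⟩
    obtain ⟨V, hV, hVV'⟩ := vector_con_lift M haM hV'
    have hVe : V e = S e := by rw [hVV' e hae.symm, hV'e]
    have hVD : ∀ b ∈ D, V b = 0 := fun b hb => by
      rw [hVV' b (fun h => haD (h ▸ hb)), hV'D b hb]
    have hVS : ∀ b ∉ D, b ≠ a → S b ≠ 0 → V b = 0 ∨ V b = S b := fun b hb hba hS => by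
      rw [hVV' b hba]; exact hV'S b hb hS
    by_cases hfin : S a = 0 ∨ V a = 0 ∨ V a = S a
    · refine Or.inr ⟨V, hV, hVe, hVD, fun b hb hS => ?_⟩
      by_cases hba : b = a
      · subst hba; exact hfin.resolve_left hS
      · exact hVS b hb hba hS
    push Not at hfin
    obtain ⟨hSa, hVa0, hVaS⟩ := hfin
    exfalso
    have horth := hV.2 Y hY
    have hnn := orth_nonneg horth (fun b => by
      by_cases hb : b ∈ D
      · simp [hVD b hb]
      by_cases hba : b = a
      · subst hba
        revert hSa hVa0 hVaS hYa0 hYaS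
        generalize V b = v; generalize Y b = y; generalize S b = s
        revert v y s; decide
      by_cases hSb : S b = 0
      · rcases hYb b hb hba with h | h <;> simp [h, hSb]
      · have h1 := hYb b hb hba
        have h2 := hVS b hb hba hSb
        revert h1 h2
        generalize V b = v; generalize Y b = y; generalize S b = s
        revert v y s; decide) e
    rw [hVe, hYe] at hnn
    revert hSe hnn; generalize S e = s; revert s; decide

/-- The painting lemma at an element `e`: either a covector or a vector, conformal to `S` where it is
constrained, takes the sign of `S` at `e`. -/
theorem paint (M : OrientedMatroid α) (D : Set α) (S : SignVec α) {e : α} (he : e ∈ M.ground)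
    (heD : e ∉ D) (hSe : S e ≠ 0) :
    (∃ Y ∈ M.covectors, Y e = S e ∧ ∀ a ∉ D, Y a = 0 ∨ Y a = S a) ∨
    (∃ V, M.IsVector V ∧ V e = S e ∧ (∀ a ∈ D, V a = 0) ∧
      ∀ a ∉ D, S a ≠ 0 → V a = 0 ∨ V a = S a) :=
  painting D S heD hSe _ M he rfl

end Duality

section Duality

variable {α : Type*}

/-! ### Duality and conformal decomposition -/

/-- If each nonzero sign of `S` on `Q` is attained by a member of `C` conformal to `S` on `Q`, the
composition of these members agrees with `S` on all of `Q`. -/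
theorem compose_all {C : Set (SignVec α)} (h0 : (0 : SignVec α) ∈ C)
    (hc : ∀ X ∈ C, ∀ Y ∈ C, compose X Y ∈ C) {S : SignVec α} (hS : (supp S).Finite)
    {Q : Set α} (h : ∀ f ∈ Q, S f ≠ 0 → ∃ U ∈ C, U f = S f ∧ ∀ a ∈ Q, U a = 0 ∨ U a = S a) :
    ∃ U ∈ C, ∀ a ∈ Q, U a = S a := by
  classical
  have key : ∀ t : Finset α, (∀ f ∈ t, f ∈ Q ∧ S f ≠ 0) →
      ∃ U ∈ C, (∀ a ∈ Q, U a = 0 ∨ U a = S a) ∧ ∀ f ∈ t, U f = S f := by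
    intro t
    induction t using Finset.induction_on with
    | empty => exact fun _ => ⟨0, h0, fun _ _ => Or.inl rfl, by simp⟩
    | insert f t _ ih =>
      intro ht
      obtain ⟨U, hU, hUQ, hUt⟩ := ih fun a ha => ht a (Finset.mem_insert_of_mem ha)
      have hf := ht f (Finset.mem_insert_self _ _)
      obtain ⟨W, hW, hWf, hWQ⟩ := h f hf.1 hf.2
      refine ⟨compose U W, hc U hU W hW, fun a ha => ?_, fun a ha => ?_⟩
      · by_cases hz : U a = 0
        · rw [compose_of_eq hz]; exact hWQ a ha
        · rw [compose_of_ne hz]; exact hUQ a ha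
      · rcases Finset.mem_insert.1 ha with rfl | ha
        · by_cases hz : U a = 0
          · rw [compose_of_eq hz, hWf]
          · rw [compose_of_ne hz]; exact (hUQ a hf.1).resolve_left hz
        · have := hUt a ha
          rw [compose_of_ne (by rw [this]; exact (ht a (Finset.mem_insert_of_mem ha)).2), this]
  have hfin : (supp S ∩ Q).Finite := hS.subset Set.inter_subset_left
  obtain ⟨U, hU, hUQ, hUt⟩ := key hfin.toFinset (by
    intro f hf; rw [Set.Finite.mem_toFinset] at hf; exact ⟨hf.2, hf.1⟩)
  refine ⟨U, hU, fun a ha => ?_⟩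
  by_cases hz : S a = 0
  · rcases hUQ a ha with h | h
    · rw [h, hz]
    · exact h
  · exact hUt a (by rw [Set.Finite.mem_toFinset]; exact ⟨hz, ha⟩)

theorem orth_compose {V W Y : SignVec α} (hV : Orth V Y) (hW : Orth W Y) :
    Orth (compose V W) Y := by
  by_cases h : ∃ e, V e * Y e ≠ 0
  · have up : ∀ s : SignType, s ≠ 0 → (∃ e, V e * Y e = s) → ∃ e, compose V W e * Y e = s := by
      rintro s hs ⟨e, he⟩
      refine ⟨e, ?_⟩
      rw [compose_of_ne]
      · exact he
      · intro h0; rw [h0, zero_mul] at he; exact hs he.symm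
    have both : (∃ e, V e * Y e = 1) ∧ (∃ e, V e * Y e = -1) := by
      rw [orth_iff] at hV
      obtain ⟨e, he⟩ := h
      rcases sign_cases (V e * Y e) with h1 | h1 | h1
      · exact absurd h1 he
      · exact ⟨⟨e, h1⟩, hV.1 ⟨e, h1⟩⟩
      · exact ⟨hV.2 ⟨e, h1⟩, ⟨e, h1⟩⟩
    rw [orth_iff]
    exact ⟨fun _ => up _ (by decide) both.2, fun _ => up _ (by decide) both.1⟩
  · push Not at h
    have : ∀ e, compose V W e * Y e = W e * Y e := by
      intro e
      by_cases hz : V e = 0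
      · rw [compose_of_eq hz]
      · have := h e
        have hY : Y e = 0 := by
          revert this hz; generalize V e = v; generalize Y e = y; revert v y; decide
        simp [hY]
    rw [orth_iff] at *
    simpa only [this] using hW

theorem vector_compose (M : OrientedMatroid α) {V W : SignVec α} (hV : M.IsVector V)
    (hW : M.IsVector W) : M.IsVector (compose V W) := by
  refine ⟨fun e he => ?_, fun Y hY => orth_compose (hV.2 Y hY) (hW.2 Y hY)⟩
  by_cases hz : V e = 0
  · rw [mem_supp, compose_of_eq hz] at he; exact hW.1 he
  · exact hV.1 hz

theorem vector_zero (M : OrientedMatroid α) : M.IsVector 0 :=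
  ⟨fun e he => absurd rfl he, fun Y _ => by rw [orth_iff]; simp⟩

theorem vector_neg (M : OrientedMatroid α) {V : SignVec α} (hV : M.IsVector V) :
    M.IsVector (-V) :=
  ⟨fun e he => hV.1 (show V e ≠ 0 from fun h => he (by simp [h])),
    fun Y hY => orth_neg_left (hV.2 Y hY)⟩

/-- Vectors satisfy elimination: each coordinate outside the separation set is reached by the
painting lemma, and the resulting vectors are composed. -/
theorem vector_elim (M : OrientedMatroid α) {V W : SignVec α} (hV : M.IsVector V)
    (hW : M.IsVector W) {e : α} (he : e ∈ sep V W) :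
    ∃ U, M.IsVector U ∧ U e = 0 ∧ ∀ a ∉ sep V W, U a = compose V W a := by
  classical
  set S : SignVec α := fun a => if a ∈ sep V W then 0 else compose V W a with hSdef
  have hS1 : ∀ a ∈ sep V W, S a = 0 := fun a ha => by simp [hSdef, ha]
  have hS2 : ∀ a ∉ sep V W, S a = compose V W a := fun a ha => by simp [hSdef, ha]
  have hSg : supp S ⊆ M.ground := fun a ha => by
    by_cases has : a ∈ sep V W
    · exact absurd (hS1 a has) ha
    · rw [mem_supp, hS2 a has] at ha; exact (vector_compose M hV hW).1 ha
  obtain ⟨U, hU, hUS⟩ := compose_all (C := {U | M.IsVector U}) (vector_zero M)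
    (fun X hX Y hY => vector_compose M hX hY) (M.ground_finite.subset hSg)
    (Q := {e} ∪ (sep V W)ᶜ) (by
      intro f hfQ hSf
      have hfs : f ∉ sep V W := fun h => hSf (hS1 f h)
      rcases paint M ({e} ∪ {a | a ∉ sep V W ∧ S a = 0}) S (hSg hSf)
        (by
          rintro (h | h)
          · exact hfs (h ▸ he)
          · exact hSf h.2) hSf with ⟨Y, hY, hYf, hYD⟩ | ⟨U, hU, hUf, hUD, hUS⟩
      · exfalso
        have hcon : ∀ a, a ≠ e → (a ∈ sep V W → Y a = 0) ∧
            (a ∉ sep V W → compose V W a ≠ 0 → Y a = 0 ∨ Y a = compose V W a) := by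
          intro a hae
          refine ⟨fun ha => ?_, fun ha hne => ?_⟩
          · have := hYD a (by
              rintro (h | h)
              · exact hae h
              · exact h.1 ha)
            rwa [hS1 a ha, or_self] at this
          · rw [← hS2 a ha] at hne ⊢
            exact hYD a (by
              rintro (h | h)
              · exact hae h
              · exact hne h.2)
        have hVn : ∀ a, a ≠ e → V a * Y a ≠ -1 ∧ W a * Y a ≠ -1 := by
          intro a hae
          obtain ⟨h1, h2⟩ := hcon a hae
          by_cases ha : a ∈ sep V W
          · simp [h1 ha]
          · have h2 := h2 ha
            rw [mem_sep] at ha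
            rw [compose_apply] at h2
            revert h2 ha
            generalize V a = v; generalize W a = w; generalize Y a = y
            revert v w y; decide
        have hfe : f ≠ e := fun h => hfs (h ▸ he)
        have hf' : V f * Y f ≠ 0 ∨ W f * Y f ≠ 0 := by
          rw [hS2 f hfs, compose_apply] at hYf hSf
          revert hYf hSf
          generalize V f = v; generalize W f = w; generalize Y f = y
          revert v w y; decide
        have full : ∀ U : SignVec α, (∀ a, a ≠ e → U a * Y a ≠ -1) → U e * Y e ≠ -1 →
            ∀ a, U a * Y a ≠ -1 := fun U h1 h2 a => by
          by_cases hae : a = e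
          · rw [hae]; exact h2
          · exact h1 a hae
        have hcase : (Y e = 0) ∨ (V e * Y e = 1) ∨ (W e * Y e = 1) := by
          rw [mem_sep] at he
          revert he
          generalize V e = v; generalize W e = w; generalize Y e = y
          revert v w y; decide
        rcases hcase with h | h | h
        · have n1 := orth_nonneg (hV.2 Y hY) (full V (fun a ha => (hVn a ha).1) (by simp [h])) f
          have n2 := orth_nonneg (hW.2 Y hY) (full W (fun a ha => (hVn a ha).2) (by simp [h])) f
          exact hf'.elim (fun h => h n1) (fun h => h n2)
        · have n1 := orth_nonneg (hV.2 Y hY)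
            (full V (fun a ha => (hVn a ha).1) (by rw [h]; decide)) e
          rw [h] at n1; exact absurd n1 (by decide)
        · have n1 := orth_nonneg (hW.2 Y hY)
            (full W (fun a ha => (hVn a ha).2) (by rw [h]; decide)) e
          rw [h] at n1; exact absurd n1 (by decide)
      · refine ⟨U, hU, hUf, fun a ha => ?_⟩
        by_cases hD : a ∈ ({e} ∪ {a | a ∉ sep V W ∧ S a = 0} : Set α)
        · exact Or.inl (hUD a hD)
        · refine hUS a hD fun h0 => hD ?_
          rcases ha with ha | ha
          · exact Or.inl ha
          · exact Or.inr ⟨ha, h0⟩)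
  refine ⟨U, hU, ?_, fun a ha => ?_⟩
  · rw [hUS e (Or.inl rfl), hS1 e he]
  · rw [hUS a (Or.inr ha), hS2 a ha]

/-- The dual oriented matroid, whose covectors are the vectors of `M`. -/
def dual (M : OrientedMatroid α) : OrientedMatroid α where
  ground := M.ground
  ground_finite := M.ground_finite
  covectors := {V | M.IsVector V}
  supp_subset := fun _ hV => hV.1
  zero_mem := vector_zero M
  neg_mem := fun _ hV => vector_neg M hV
  compose_mem := fun _ hV _ hW => vector_compose M hV hW
  elim := fun _ hV _ hW _ he => vector_elim M hV hW he

/-- Covectors are exactly the sign vectors orthogonal to all vectors: if `X` is orthogonal to all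
vectors, the painting lemma yields for each of its signs a covector conformal to `X` attaining it. -/
theorem mem_covectors_of_orth (M : OrientedMatroid α) {X : SignVec α} (hX : supp X ⊆ M.ground)
    (h : ∀ V, M.IsVector V → Orth V X) : X ∈ M.covectors := by
  obtain ⟨U, hU, hUS⟩ := compose_all M.zero_mem M.compose_mem (M.ground_finite.subset hX)
    (Q := Set.univ) (fun f _ hf => by
      rcases paint M ∅ X (hX hf) (by simp) hf with ⟨Y, hY, hYf, hYD⟩ | ⟨V, hV, hVf, -, hVS⟩
      · exact ⟨Y, hY, hYf, fun a _ => hYD a (by simp)⟩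
      · exfalso
        have := orth_nonneg (h V hV) (fun a => by
          by_cases ha : X a = 0
          · simp [ha]
          · have := hVS a (by simp) ha
            revert this; generalize V a = v; generalize X a = x; revert v x; decide) f
        rw [hVf] at this
        revert this hf; generalize X f = x; revert x; decide)
  have : U = X := funext fun a => hUS a trivial
  exact this ▸ hU

theorem dual_vector (M : OrientedMatroid α) (X : SignVec α) :
    (dual M).IsVector X ↔ X ∈ M.covectors := by
  constructor
  · rintro ⟨h1, h2⟩
    exact mem_covectors_of_orth M h1 fun V hV => orth_comm.1 (h2 V hV)
  · intro h
    exact ⟨M.supp_subset X h, fun V hV => orth_comm.1 (hV.2 X h)⟩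

/-- Every covector is, at each of its elements, conformally above a cocircuit. -/
theorem exists_cocircuit_le (M : OrientedMatroid α) {X : SignVec α} (hX : X ∈ M.covectors) {e : α}
    (he : X e ≠ 0) : ∃ Y, M.IsCocircuit Y ∧ Y e = X e ∧ ∀ a, Y a = 0 ∨ Y a = X a := by
  have fin : ∀ X ∈ M.covectors, (supp X).Finite := fun X hX =>
    M.ground_finite.subset (M.supp_subset X hX)
  induction hk : (supp X).ncard using Nat.strong_induction_on generalizing X with
  | _ k ih =>
  by_cases hc : M.IsCocircuit X
  · exact ⟨X, hc, rfl, fun _ => Or.inr rfl⟩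
  have : ∃ Y ∈ M.covectors, Y ≠ 0 ∧ supp Y ⊆ supp X ∧ supp Y ≠ supp X := by
    by_contra h
    push Not at h
    exact hc ⟨hX, fun h0 => he (by rw [h0]; rfl), h⟩
  obtain ⟨Y0, hY0, hY0n, hY0s, hY0ne⟩ := this
  have start : ∃ Z ∈ M.covectors, Z e = X e ∧ supp Z ⊆ supp X ∧ ∃ b, X b ≠ 0 ∧ Z b = 0 := by
    have hb : ∃ b, X b ≠ 0 ∧ Y0 b = 0 := by
      by_contra h; push Not at h
      exact hY0ne (Set.Subset.antisymm hY0s h)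
    rcases sign_cases_of (X e) (Y0 e) he with h | h | h
    · obtain ⟨f, hf⟩ : ∃ f, Y0 f ≠ 0 := by
        by_contra h'; push Not at h'; exact hY0n (funext h')
      have : ∃ Y1 ∈ M.covectors, Y1 e = 0 ∧ supp Y1 ⊆ supp X ∧ X f = -(Y1 f) := by
        rcases sign_cases_of (X f) (Y0 f) (hY0s hf) with h1 | h1 | h1
        · exact absurd h1 hf
        · exact ⟨-Y0, M.neg_mem _ hY0, by simp [h], fun a ha => hY0s (by simpa [mem_supp] using ha),
            by simp [h1]⟩
        · exact ⟨Y0, hY0, h, hY0s, by simp [h1]⟩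
      obtain ⟨Y1, hY1, hY1e, hY1s, hY1f⟩ := this
      obtain ⟨Z, hZ, hZf, hZs⟩ := M.elim X hX Y1 hY1 f ⟨hY1f, hY0s hf⟩
      refine ⟨Z, hZ, ?_, fun a ha => ?_, f, hY0s hf, hZf⟩
      · rw [hZs e (by rw [mem_sep, hY1e, neg_zero]; exact fun h => h.2 h.1), compose_of_ne he]
      · by_contra hXa
        have hXa : X a = 0 := by simpa [mem_supp] using hXa
        have hYa : Y1 a = 0 := by
          by_contra h; exact hY1s h hXa
        refine ha ?_
        rw [hZs a (fun h => h.2 hXa), compose_of_eq hXa, hYa]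
    · exact ⟨Y0, hY0, h, hY0s, hb⟩
    · exact ⟨-Y0, M.neg_mem _ hY0, by simp [h], fun a ha => hY0s (by simpa [mem_supp] using ha),
        by simpa using hb⟩
  have improve : ∀ m, ∀ Z ∈ M.covectors, Z e = X e → supp Z ⊆ supp X → (∃ b, X b ≠ 0 ∧ Z b = 0) →
      (sep X Z).ncard = m → ∃ Z ∈ M.covectors, Z e = X e ∧ (∃ b, X b ≠ 0 ∧ Z b = 0) ∧
        ∀ a, Z a = 0 ∨ Z a = X a := by
    intro m
    induction m using Nat.strong_induction_on with
    | _ m ihm =>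
    intro Z hZ hZe hZX hb hm
    by_cases hs : ∃ f, f ∈ sep X Z
    · obtain ⟨f, hf⟩ := hs
      obtain ⟨U, hU, hUf, hUs⟩ := M.elim X hX Z hZ f hf
      have hUX : ∀ a, a ∉ sep X Z → U a = X a := fun a ha => by
        rw [hUs a ha]
        by_cases h0 : X a = 0
        · rw [compose_of_eq h0, h0]
          by_contra h; exact hZX h h0
        · exact compose_of_ne h0
      refine ihm _ ?_ U hU (hUX e fun h => ?_) (fun a ha => ?_) ⟨f, hf.2, hUf⟩ rfl
      · rw [← hm]
        refine Set.ncard_lt_ncard ?_ ((fin X hX).subset fun a ha => ha.2)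
        refine ⟨fun a ha => ?_, fun h => ?_⟩
        · by_contra hn
          have h1 := hUX a hn
          have h2 := ha.1; have h3 := ha.2
          rw [h1] at h2
          revert h2 h3; generalize X a = x; revert x; decide
        · have := h hf
          have h2 := this.1
          rw [hUf, neg_zero] at h2
          exact this.2 h2
      · have h1 := h.1; rw [hZe] at h1
        revert h1 he; generalize X e = x; revert x; decide
      · by_cases hs : a ∈ sep X Z
        · exact hs.2
        · rw [mem_supp, hUX a hs] at ha; exact ha
    · refine ⟨Z, hZ, hZe, hb, fun a => ?_⟩
      by_cases h0 : Z a = 0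
      · exact Or.inl h0
      · have h1 : X a ≠ 0 := hZX h0
        rcases sign_cases_of (X a) (Z a) h1 with h | h | h
        · exact absurd h h0
        · exact Or.inr h
        · exact absurd ⟨a, by rw [mem_sep, h, neg_neg]; exact ⟨rfl, h1⟩⟩ hs
  obtain ⟨Z0, hZ0, g1, g2, g3⟩ := start
  obtain ⟨Z, hZ, hZe, ⟨b, hXb, hZb⟩, hZX⟩ := improve _ Z0 hZ0 g1 g2 g3 rfl
  obtain ⟨Y, hY, hYe, hYZ⟩ := ih (supp Z).ncard (by
    rw [← hk]
    refine Set.ncard_lt_ncard ⟨fun a ha => ?_, fun h => ?_⟩ (fin X hX)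
    · rcases hZX a with h | h
      · exact absurd h ha
      · rw [mem_supp, ← h]; exact ha
    · exact h hXb hZb) hZ (by rw [hZe]; exact he) rfl
  refine ⟨Y, hY, by rw [hYe, hZe], fun a => ?_⟩
  rcases hYZ a with h | h
  · exact Or.inl h
  · rw [h]; exact hZX a

theorem isCircuit_dual (M : OrientedMatroid α) (X : SignVec α) :
    M.IsCircuit X ↔ (dual M).IsCocircuit X := by
  unfold OrientedMatroid.IsCircuit OrientedMatroid.IsCocircuit
  exact Iff.rfl

theorem exists_circuit_le (M : OrientedMatroid α) {V : SignVec α} (hV : M.IsVector V) {e : α}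
    (he : V e ≠ 0) : ∃ C, M.IsCircuit C ∧ C e = V e ∧ ∀ a, C a = 0 ∨ C a = V a := by
  obtain ⟨C, hC, h⟩ := exists_cocircuit_le (dual M) (X := V) hV he
  exact ⟨C, (isCircuit_dual M C).2 hC, h⟩

theorem cocircuit_unique (M : OrientedMatroid α) {X Y : SignVec α} (hX : M.IsCocircuit X)
    (hY : M.IsCocircuit Y) (hs : supp X = supp Y) : Y = X ∨ Y = -X := by
  have hs' : ∀ a, X a ≠ 0 ↔ Y a ≠ 0 := fun a => by
    have := Set.ext_iff.1 hs a; exact this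
  by_cases h : ∃ e, e ∈ sep X Y
  · obtain ⟨e, he⟩ := h
    obtain ⟨Z, hZ, hZe, hZs⟩ := M.elim X hX.1 Y hY.1 e he
    have hZX : supp Z ⊆ supp X := fun a ha => by
      by_cases hm : a ∈ sep X Y
      · exact hm.2
      · rw [mem_supp, hZs a hm, compose_apply] at ha
        have := hs' a
        rw [mem_supp]; intro h0
        simp only [h0] at ha this; tauto
    have hZ0 : Z = 0 := by
      by_contra h0
      have := hX.2.2 Z hZ h0 hZX
      have h5 : e ∈ supp Z := by rw [this]; exact he.2
      exact h5 hZe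
    right
    funext a
    by_cases hm : a ∈ sep X Y
    · simp [hm.1]
    · have h1 := hZs a hm
      have h2 := hs' a
      rw [hZ0, compose_apply] at h1
      change 0 = _ at h1
      rw [Pi.neg_apply]
      revert h1 h2
      generalize X a = x; generalize Y a = y; revert x y; decide
  · left; funext a
    push Not at h
    have h1 := h a; have h2 := hs' a
    rw [mem_sep] at h1
    revert h1 h2; generalize X a = x; generalize Y a = y; revert x y; decide

/-- The covectors are determined by the circuits. -/
theorem mem_covectors_iff (M : OrientedMatroid α) (X : SignVec α) :
    X ∈ M.covectors ↔ supp X ⊆ M.ground ∧ ∀ C, M.IsCircuit C → Orth C X := by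
  refine ⟨fun h => ⟨M.supp_subset X h, fun C hC => hC.1.2 X h⟩, fun ⟨h1, h2⟩ => ?_⟩
  refine mem_covectors_of_orth M h1 fun V hV => ?_
  have key : ∀ e, V e * X e ≠ 0 → (∃ a, V a * X a = 1) ∧ (∃ a, V a * X a = -1) := by
    intro e he
    have hVe : V e ≠ 0 := fun h => he (by rw [h, zero_mul])
    obtain ⟨C, hC, hCe, hCV⟩ := exists_circuit_le M hV hVe
    have hor := h2 C hC
    rw [orth_iff] at hor
    have up : ∀ s : SignType, s ≠ 0 → (∃ a, C a * X a = s) → ∃ a, V a * X a = s := by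
      rintro s hs ⟨a, ha⟩
      rcases hCV a with h | h
      · rw [h, zero_mul] at ha; exact absurd ha.symm hs
      · exact ⟨a, by rw [← h]; exact ha⟩
    rw [← hCe] at he
    rcases sign_cases (C e * X e) with h | h | h
    · exact absurd h he
    · exact ⟨up _ (by decide) ⟨e, h⟩, up _ (by decide) (hor.1 ⟨e, h⟩)⟩
    · exact ⟨up _ (by decide) (hor.2 ⟨e, h⟩), up _ (by decide) ⟨e, h⟩⟩
  rw [orth_iff]
  exact ⟨fun ⟨e, he⟩ => (key e (by rw [he]; decide)).2, fun ⟨e, he⟩ => (key e (by rw [he]; decide)).1⟩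

theorem covectors_eq_of_circuits {M N : OrientedMatroid α} (hg : M.ground = N.ground)
    (h : ∀ X, M.IsCircuit X ↔ N.IsCircuit X) : M.covectors = N.covectors := by
  ext X
  rw [mem_covectors_iff, mem_covectors_iff, hg]
  simp only [h]

theorem vector_congr {M N : OrientedMatroid α} (hg : M.ground = N.ground)
    (h : M.covectors = N.covectors) (X : SignVec α) : M.IsVector X ↔ N.IsVector X := by
  unfold OrientedMatroid.IsVector; rw [hg, h]

theorem circuit_congr {M N : OrientedMatroid α} (hg : M.ground = N.ground)
    (h : M.covectors = N.covectors) (X : SignVec α) : M.IsCircuit X ↔ N.IsCircuit X := by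
  unfold OrientedMatroid.IsCircuit
  simp only [vector_congr hg h]

theorem cocircuit_congr {M N : OrientedMatroid α}
    (h : M.covectors = N.covectors) (X : SignVec α) : M.IsCocircuit X ↔ N.IsCocircuit X := by
  unfold OrientedMatroid.IsCocircuit
  rw [h]

theorem circuit_del_iff (M : OrientedMatroid α) (A : Set α) (X : SignVec α) :
    (del M A).IsCircuit X ↔ M.IsCircuit X ∧ ∀ a ∈ A, X a = 0 := by
  unfold OrientedMatroid.IsCircuit
  simp only [vector_del_iff]
  constructor
  · rintro ⟨⟨h1, h2⟩, h3, h4⟩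
    refine ⟨⟨h1, h3, fun Y hY hY0 hs => h4 Y ⟨hY, fun a ha => ?_⟩ hY0 hs⟩, h2⟩
    by_contra h; exact hs h (h2 a ha)
  · rintro ⟨⟨h1, h3, h4⟩, h2⟩
    exact ⟨⟨h1, h2⟩, h3, fun Y hY => h4 Y hY.1⟩

theorem covectors_of_isDeletion {M N : OrientedMatroid α} {A : Set α} (h : IsDeletion M A N) :
    N.covectors = (del M A).covectors :=
  covectors_eq_of_circuits h.1 fun X => by rw [h.2, circuit_del_iff]

theorem isDeletion_of_covectors {M N : OrientedMatroid α} {A : Set α}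
    (hg : N.ground = M.ground \ A) (h : N.covectors = (del M A).covectors) : IsDeletion M A N :=
  ⟨hg, fun X => by rw [← circuit_del_iff]; exact circuit_congr hg h X⟩

/-- Vectors of a contraction are the restrictions of vectors. -/
theorem vector_con_iff (M : OrientedMatroid α) (A : Set α) (V : SignVec α) :
    (con M A).IsVector V ↔ ∃ W, M.IsVector W ∧ restrictAway A W = V := by
  have h1 : (con M A).IsVector V ↔ (dual (del (dual M) A)).IsVector V := by
    refine vector_congr (M := con M A) (N := dual (del (dual M) A)) rfl ?_ V
    ext X
    change _ ↔ (del (dual M) A).IsVector X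
    rw [vector_del_iff, dual_vector, mem_con]
  rw [h1, dual_vector]
  exact Iff.rfl

theorem covectors_of_isContraction {M N : OrientedMatroid α} {A : Set α}
    (h : IsContraction M A N) : N.covectors = (con M A).covectors := by
  refine covectors_eq_of_circuits h.1 fun X => ?_
  rw [h.2]
  -- each nonzero vector of the contraction dominates a nonzero restriction of a circuit
  have low : ∀ W, M.IsVector W → restrictAway A W ≠ 0 → ∃ C, M.IsCircuit C ∧
      restrictAway A C ≠ 0 ∧ ∀ a, restrictAway A C a = 0 ∨ restrictAway A C a = restrictAway A W a := by
    intro W hW hW0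
    obtain ⟨e, he⟩ : ∃ e, restrictAway A W e ≠ 0 := by
      by_contra h'; push Not at h'; exact hW0 (funext h')
    have heA : e ∉ A := fun h => he (res_mem h)
    rw [res_not_mem heA] at he
    obtain ⟨C, hC, hCe, hCW⟩ := exists_circuit_le M hW he
    refine ⟨C, hC, fun h => ?_, fun a => ?_⟩
    · have := congrFun h e
      rw [res_not_mem heA, hCe] at this; exact he this
    · by_cases ha : a ∈ A
      · exact Or.inl (res_mem ha)
      · rw [res_not_mem ha, res_not_mem ha]; exact hCW a
  have sub : ∀ {X Y : SignVec α}, (∀ a, X a = 0 ∨ X a = Y a) → supp X ⊆ supp Y := by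
    intro X Y h a ha
    rcases h a with h | h
    · exact absurd h ha
    · rw [mem_supp, ← h]; exact ha
  constructor
  · rintro ⟨h0, ⟨C, hC, rfl⟩, hmin⟩
    refine ⟨(vector_con_iff M A _).2 ⟨C, hC.1, rfl⟩, h0, fun Y hY hY0 hs => ?_⟩
    obtain ⟨W, hW, rfl⟩ := (vector_con_iff M A _).1 hY
    obtain ⟨C', hC', h0', hle⟩ := low W hW hY0
    have := hmin _ h0' ⟨C', hC', rfl⟩ ((sub hle).trans hs)
    exact Set.Subset.antisymm hs (this ▸ sub hle)
  · rintro ⟨hV, h0, hmin⟩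
    obtain ⟨W, hW, rfl⟩ := (vector_con_iff M A _).1 hV
    obtain ⟨C, hC, h0', hle⟩ := low W hW h0
    refine ⟨h0, ⟨C, hC, ?_⟩, ?_⟩
    · have hs := hmin _ ((vector_con_iff M A _).2 ⟨C, hC.1, rfl⟩) h0' (sub hle)
      funext a
      rcases hle a with h | h
      · have : a ∉ supp (restrictAway A W) := by rw [← hs]; exact fun h' => h' h
        rw [h]; simpa [mem_supp] using this
      · exact h.symm
    · rintro Z hZ0 ⟨C', hC', rfl⟩ hs
      exact hmin _ ((vector_con_iff M A _).2 ⟨C', hC'.1, rfl⟩) hZ0 hs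

end Duality

section Rank

variable {α : Type*}

/-! ### Independence and rank in terms of covectors -/

/-- `I` is independent in the contraction of `M` by `Z`: every element of `I` is separated from
the rest of `I` by a covector vanishing on `Z`. -/
def CIndep (M : OrientedMatroid α) (Z I : Set α) : Prop :=
  ∀ i ∈ I, ∃ Y ∈ M.covectors, (∀ z ∈ Z, Y z = 0) ∧ Y i = 1 ∧ ∀ j ∈ I, j ≠ i → Y j = 0

theorem CIndep.subset_ground {M : OrientedMatroid α} {Z I : Set α} (h : CIndep M Z I) :
    I ⊆ M.ground := fun i hi => by
  obtain ⟨Y, hY, -, h1, -⟩ := h i hi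
  exact M.supp_subset Y hY (show Y i ≠ 0 by rw [h1]; decide)

theorem CIndep.mono {M : OrientedMatroid α} {Z I J : Set α} (h : CIndep M Z I) (hJ : J ⊆ I) :
    CIndep M Z J := fun i hi => by
  obtain ⟨Y, hY, h0, h1, h2⟩ := h i (hJ hi)
  exact ⟨Y, hY, h0, h1, fun j hj => h2 j (hJ hj)⟩

theorem CIndep.finite {M : OrientedMatroid α} {Z I : Set α} (h : CIndep M Z I) : I.Finite :=
  M.ground_finite.subset h.subset_ground

theorem eq_zero_of_supp {X : SignVec α} {I : Set α} (h : supp X ⊆ I) {a : α} (ha : a ∉ I) :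
    X a = 0 := by
  by_contra h'; exact ha (h h')

theorem indep_iff_vector (M : OrientedMatroid α) (I : Set α) :
    M.Indep I ↔ I ⊆ M.ground ∧ ∀ V, M.IsVector V → supp V ⊆ I → V = 0 := by
  refine and_congr_right fun _ => ⟨fun h V hV hs => ?_, fun h X hX hs => hX.2.1 (h X hX.1 hs)⟩
  by_contra h0
  obtain ⟨e, he⟩ : ∃ e, V e ≠ 0 := by
    by_contra h'; push Not at h'; exact h0 (funext h')
  obtain ⟨C, hC, -, hle⟩ := exists_circuit_le M hV he
  refine h C hC fun a ha => hs ?_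
  rcases hle a with h | h
  · exact absurd h ha
  · rw [mem_supp, ← h]; exact ha

/-- Independence, defined by circuits, in terms of covectors. -/
theorem indep_iff (M : OrientedMatroid α) (I : Set α) : M.Indep I ↔ CIndep M ∅ I := by
  classical
  rw [indep_iff_vector]
  constructor
  · rintro ⟨hg, h⟩ i hi
    rcases paint M Iᶜ (Function.update 0 i 1) (hg hi) (by simpa using hi) (by simp) with
      ⟨Y, hY, hYi, hYD⟩ | ⟨V, hV, hVi, hVD, -⟩
    · refine ⟨Y, hY, by simp, by simpa using hYi, fun j hj hji => ?_⟩
      have := hYD j (by simpa using hj)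
      rw [Function.update_of_ne hji] at this
      exact this.elim id id
    · have := h V hV fun a ha => by
        by_contra hI; exact ha (hVD a hI)
      rw [this] at hVi
      simp at hVi
  · intro h
    refine ⟨h.subset_ground, fun V hV hs => ?_⟩
    funext i
    by_contra hi
    obtain ⟨Y, hY, -, h1, h2⟩ := h i (hs hi)
    have hor := hV.2 Y hY
    have hz : ∀ a, a ≠ i → V a * Y a = 0 := fun a ha => by
      by_cases haI : a ∈ I
      · rw [h2 a haI ha, mul_zero]
      · rw [eq_zero_of_supp hs haI, zero_mul]
    rw [orth_iff] at hor
    have hi' : V i ≠ 0 := hi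
    have one : ∀ s : SignType, s ≠ 0 → ((∃ a, V a * Y a = s) ↔ V i = s) := fun s hs => by
      constructor
      · rintro ⟨a, ha⟩
        by_cases hai : a = i
        · rw [hai, h1, mul_one] at ha; exact ha
        · rw [hz a hai] at ha; exact absurd ha.symm hs
      · intro h; exact ⟨i, by rw [h1, mul_one, h]⟩
    rw [one 1 (by decide), one (-1) (by decide)] at hor
    revert hor hi'
    generalize V i = v
    revert v; decide

theorem indep_congr {M N : OrientedMatroid α} (h : M.covectors = N.covectors) (I : Set α) :
    M.Indep I ↔ N.Indep I := by
  rw [indep_iff, indep_iff]; unfold CIndep; rw [h]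

theorem rk_bdd (M : OrientedMatroid α) (A : Set α) :
    BddAbove {k | ∃ I : Set α, I ⊆ A ∧ M.Indep I ∧ I.ncard = k} :=
  ⟨M.ground.ncard, by
    rintro _ ⟨I, -, hI, rfl⟩
    exact Set.ncard_le_ncard hI.1 M.ground_finite⟩

theorem exists_indep_rk (M : OrientedMatroid α) (A : Set α) :
    ∃ I : Set α, I ⊆ A ∧ M.Indep I ∧ I.ncard = M.rk A :=
  Nat.sSup_mem (s := {k | ∃ I : Set α, I ⊆ A ∧ M.Indep I ∧ I.ncard = k})
    ⟨0, ∅, by simp, (indep_iff M ∅).2 (fun _ h => absurd h (by simp)), by simp⟩ (rk_bdd M A)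

theorem ncard_le_rk (M : OrientedMatroid α) {A I : Set α} (hIA : I ⊆ A) (hI : M.Indep I) :
    I.ncard ≤ M.rk A :=
  le_csSup (rk_bdd M A) ⟨I, hIA, hI, rfl⟩

theorem ncard_le_rank (M : OrientedMatroid α) {I : Set α} (hI : M.Indep I) :
    I.ncard ≤ M.rank := ncard_le_rk M hI.1 hI

/-- Contracting one more element costs at most one element of an independent set. -/
theorem CIndep.exchange {M : OrientedMatroid α} {Z I : Set α} (h : CIndep M Z I) (e : α) :
    ∃ I' ⊆ I, CIndep M (insert e Z) I' ∧ I.ncard ≤ I'.ncard + 1 := by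
  by_cases hc : ∃ i ∈ I, ∃ Y ∈ M.covectors, (∀ z ∈ Z, Y z = 0) ∧ Y i = 1 ∧
      (∀ j ∈ I, j ≠ i → Y j = 0) ∧ Y e ≠ 0
  · obtain ⟨i, hi, Y, hY, hYZ, hYi, hYI, hYe⟩ := hc
    refine ⟨I \ {i}, Set.sdiff_subset, fun k hk => ?_, ?_⟩
    · obtain ⟨W, hW, hWZ, hWk, hWI⟩ := h k hk.1
      have hki : k ≠ i := hk.2
      have : ∃ U ∈ M.covectors, U e = 0 ∧ (∀ z ∈ Z, U z = 0) ∧ U k = 1 ∧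
          ∀ j ∈ I, j ≠ k → j ≠ i → U j = 0 := by
        by_cases h0 : W e = 0
        · exact ⟨W, hW, h0, hWZ, hWk, fun j hj hjk _ => hWI j hj hjk⟩
        · have : ∃ Y' ∈ M.covectors, W e = -(Y' e) ∧ ∀ a, Y a = 0 → Y' a = 0 := by
            rcases sign_cases_of (W e) (Y e) h0 with h1 | h1 | h1
            · exact absurd h1 hYe
            · exact ⟨-Y, M.neg_mem Y hY, by simp [h1], fun a ha => by simp [ha]⟩
            · exact ⟨Y, hY, by simp [h1], fun a ha => ha⟩
          obtain ⟨Y', hY', hY'e, hY'0⟩ := this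
          obtain ⟨U, hU, hUe, hUs⟩ := M.elim W hW Y' hY' e ⟨hY'e, h0⟩
          have hz : ∀ a, Y a = 0 → U a = W a := fun a ha => by
            rw [hUs a, compose_apply, hY'0 a ha]
            · simp [eq_comm]
            · rintro ⟨h1, h2⟩; rw [hY'0 a ha, neg_zero] at h1; exact h2 h1
          refine ⟨U, hU, hUe, fun z hz' => ?_, ?_, fun j hj hjk hji => ?_⟩
          · rw [hz z (hYZ z hz'), hWZ z hz']
          · rw [hz k (hYI k hk.1 hki), hWk]
          · rw [hz j (hYI j hj hji), hWI j hj hjk]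
      obtain ⟨U, hU, h1, h2, h3, h4⟩ := this
      refine ⟨U, hU, fun z hz => ?_, h3, fun j hj hjk => h4 j hj.1 hjk hj.2⟩
      rcases hz with rfl | hz
      · exact h1
      · exact h2 z hz
    · have := Set.ncard_sdiff_singleton_add_one hi h.finite
      omega
  · refine ⟨I, subset_rfl, fun i hi => ?_, by omega⟩
    obtain ⟨Y, hY, h0, h1, h2⟩ := h i hi
    refine ⟨Y, hY, fun z hz => ?_, h1, h2⟩
    rcases hz with rfl | hz
    · by_contra hne
      exact hc ⟨i, hi, Y, hY, h0, h1, h2, hne⟩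
    · exact h0 z hz

/-- If only the zero covector vanishes on `Z ∪ J`, no set independent over `Z` is larger
than `J`. -/
theorem CIndep.ncard_le {M : OrientedMatroid α} {Z I : Set α} (h : CIndep M Z I) {J : Set α}
    (hJ : J.Finite) (hz : ∀ X ∈ M.covectors, (∀ a ∈ Z, X a = 0) → (∀ a ∈ J, X a = 0) → X = 0) :
    I.ncard ≤ J.ncard := by
  induction J, hJ using Set.Finite.induction_on generalizing Z I with
  | empty =>
    have : I = ∅ := by
      rw [Set.eq_empty_iff_forall_notMem]
      intro i hi
      obtain ⟨Y, hY, h0, h1, -⟩ := h i hi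
      have := hz Y hY h0 (by simp)
      rw [this] at h1; simp at h1
    simp [this]
  | @insert e J he hJ ih =>
    obtain ⟨I', -, hI', hc⟩ := h.exchange e
    have := ih hI' fun X hX h1 h2 => hz X hX (fun a ha => h1 a (Or.inr ha)) fun a ha => by
      rcases ha with rfl | ha
      · exact h1 _ (Or.inl rfl)
      · exact h2 a ha
    rw [Set.ncard_insert_of_notMem he hJ]
    omega

/-- A covector vanishing on an independent set is, at each further element, zero or enlarges the
independent set. -/
theorem indep_insert {M : OrientedMatroid α} {J : Set α} (hJ : M.Indep J) {X : SignVec α}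
    (hX : X ∈ M.covectors) (h0 : ∀ a ∈ J, X a = 0) {e : α} (he : X e ≠ 0) :
    M.Indep (insert e J) := by
  rw [indep_iff] at *
  have heJ : e ∉ J := fun h => he (h0 e h)
  have norm : ∀ s : SignType, s ≠ 0 → ∃ X' ∈ M.covectors, X' e = s ∧ ∀ a, X a = 0 → X' a = 0 := by
    intro s hs
    rcases sign_cases_of s (X e) hs with h1 | h1 | h1
    · exact absurd h1 he
    · exact ⟨X, hX, h1, fun _ h => h⟩
    · exact ⟨-X, M.neg_mem X hX, by simp [h1], fun a ha => by simp [ha]⟩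
  rintro i (rfl | hi)
  · obtain ⟨X', hX', h1, h2⟩ := norm 1 (by decide)
    refine ⟨X', hX', by simp, h1, fun j hj hji => ?_⟩
    rcases hj with rfl | hj
    · exact absurd rfl hji
    · exact h2 j (h0 j hj)
  · obtain ⟨Y, hY, -, hYi, hYJ⟩ := hJ i hi
    have hie : i ≠ e := fun h => heJ (h ▸ hi)
    by_cases hYe : Y e = 0
    · refine ⟨Y, hY, by simp, hYi, fun j hj hji => ?_⟩
      rcases hj with rfl | hj
      · exact hYe
      · exact hYJ j hj hji
    · obtain ⟨X', hX', h1, h2⟩ := norm (-Y e) (by simpa using hYe)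
      obtain ⟨U, hU, hUe, hUs⟩ := M.elim Y hY X' hX' e ⟨by rw [h1, neg_neg], hYe⟩
      have hz : ∀ a ∈ J, U a = Y a := fun a ha => by
        have hz := h2 a (h0 a ha)
        rw [hUs a, compose_apply, hz]
        · simp [eq_comm]
        · rintro ⟨h1, h3⟩; rw [hz, neg_zero] at h1; exact h3 h1
      refine ⟨U, hU, by simp, by rw [hz i hi, hYi], fun j hj hji => ?_⟩
      rcases hj with rfl | hj
      · exact hUe
      · rw [hz j hj, hYJ j hj hji]

/-- A covector vanishing on a basis is zero. -/
theorem eq_zero_of_basis {M : OrientedMatroid α} {J : Set α} (hJ : M.Indep J)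
    (hc : M.rank ≤ J.ncard) {X : SignVec α} (hX : X ∈ M.covectors) (h0 : ∀ a ∈ J, X a = 0) :
    X = 0 := by
  funext e
  by_contra he
  have h1 := ncard_le_rank M (indep_insert hJ hX h0 he)
  rw [Set.ncard_insert_of_notMem (fun h => he (h0 e h)) (M.ground_finite.subset hJ.1)] at h1
  omega

/-- A one-element extension on the level of covectors keeps the rank as soon as no covector is
supported on the new element alone. -/
theorem isExtension_of {N Nh : OrientedMatroid α} {h : α} (hh : h ∉ N.ground)
    (hg : Nh.ground = insert h N.ground) (hd : N.covectors = (del Nh {h}).covectors)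
    (h0 : ∀ X ∈ Nh.covectors, (∀ e, e ≠ h → X e = 0) → X h = 0) : IsExtension N h Nh := by
  have hgd : N.ground = Nh.ground \ {h} := by
    rw [hg]; ext a
    simp only [Set.mem_sdiff, Set.mem_insert_iff, Set.mem_singleton_iff]
    constructor
    · intro ha; exact ⟨Or.inr ha, fun h' => hh (h' ▸ ha)⟩
    · rintro ⟨h1 | h1, h2⟩
      · exact absurd h1 h2
      · exact h1
  refine ⟨hh, hg, ?_, isDeletion_of_covectors hgd hd⟩
  obtain ⟨J, -, hJ, hJc⟩ := exists_indep_rk N N.ground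
  have hJh : Nh.Indep J := by
    rw [indep_iff] at hJ ⊢
    intro i hi
    obtain ⟨Y, hY, -, h1, h2⟩ := hJ i hi
    rw [hd] at hY
    obtain ⟨W, hW, rfl⟩ := hY
    have hne : ∀ j ∈ J, j ∉ ({h} : Set α) := fun j hj h' => hh (h' ▸ hJ.subset_ground hj)
    rw [res_not_mem (hne i hi)] at h1
    exact ⟨W, hW, by simp, h1, fun j hj hji => by
      have := h2 j hj hji
      rwa [res_not_mem (hne j hj)] at this⟩
  apply le_antisymm
  · obtain ⟨I, -, hI, hIc⟩ := exists_indep_rk Nh Nh.ground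
    change Nh.rk Nh.ground ≤ N.rk N.ground
    rw [← hIc, ← hJc]
    refine ((indep_iff _ _).1 hI).ncard_le (N.ground_finite.subset hJ.1) fun X hX _ hXJ => ?_
    have hr : restrictAway {h} X ∈ N.covectors := by rw [hd]; exact ⟨X, hX, rfl⟩
    have hz := eq_zero_of_basis hJ hJc.ge hr fun a ha => by
      by_cases hah : a ∈ ({h} : Set α)
      · exact res_mem hah
      · rw [res_not_mem hah]; exact hXJ a ha
    have hz' : ∀ e, e ≠ h → X e = 0 := fun e he => by
      have := congrFun hz e
      rwa [res_not_mem (by simpa using he)] at this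
    funext e
    by_cases he : e = h
    · rw [he]; exact h0 X hX hz'
    · exact hz' e he
  · change N.rk N.ground ≤ _
    rw [← hJc]; exact ncard_le_rank Nh hJh

end Rank

section Ext

variable {α : Type*}

/-! ### One-element extensions from a positive side -/

/-- `X` lies weakly on both sides, that is, meets the new pseudohyperplane. -/
def Cut (Pos : SignVec α → Prop) (X : SignVec α) : Prop := Pos X ∧ Pos (-X)

/-- `Pos` is the weakly positive side of a new pseudohyperplane: it is closed under passing to
conformally larger covectors (`up`), it contains one of `X` and `-X` for every nonzero covector
(`total`) but not the zero covector (`zero`), and the covectors met by the pseudohyperplane satisfy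
elimination among those of equal support (`elim`). The pseudohyperplane is generic in that it meets
no cocircuit: the zero set of a covector it meets, together with any further element, lies in the
zero set of a nonzero covector (`proper`). -/
structure IsSide (N : OrientedMatroid α) (Pos : SignVec α → Prop) : Prop where
  up : ∀ X ∈ N.covectors, ∀ Y ∈ N.covectors, Pos X → (∀ a, X a ≠ 0 → Y a = X a) → Pos Y
  total : ∀ X ∈ N.covectors, X ≠ 0 → Pos X ∨ Pos (-X)
  zero : ¬ Pos 0
  elim : ∀ A ∈ N.covectors, ∀ B ∈ N.covectors, Cut Pos A → Cut Pos B →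
    (∀ a, A a = 0 ↔ B a = 0) → ∀ e ∈ sep A B,
    ∃ Z ∈ N.covectors, Z e = 0 ∧ (∀ a ∉ sep A B, Z a = A a) ∧ (Z = 0 ∨ Cut Pos Z)
  proper : ∀ X ∈ N.covectors, Cut Pos X → ∀ e, X e ≠ 0 →
    ∃ Z ∈ N.covectors, Z ≠ 0 ∧ Z e = 0 ∧ ∀ a, X a = 0 → Z a = 0

/-- The sign `t` is admissible for the new element on the covector `X`. -/
def Valid (Pos : SignVec α → Prop) (X : SignVec α) (t : SignType) : Prop :=
  (t = 1 → Pos X) ∧ (t = -1 → Pos (-X)) ∧ (t = 0 → X = 0 ∨ Cut Pos X)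

theorem Valid.neg {Pos : SignVec α → Prop} {X : SignVec α} {t : SignType} (h : Valid Pos X t) :
    Valid Pos (-X) (-t) := by
  obtain ⟨h1, h2, h3⟩ := h
  refine ⟨fun h => h2 (by rw [← h, neg_neg]), fun h => ?_, fun h => ?_⟩
  · rw [neg_neg]; exact h1 (neg_injective h)
  · rcases h3 (by simpa using h) with h | ⟨h, h'⟩
    · left; simp [h]
    · exact Or.inr ⟨h', by rwa [neg_neg]⟩

theorem Cut.valid {Pos : SignVec α → Prop} {X : SignVec α} (h : Cut Pos X) (t : SignType) :
    Valid Pos X t := ⟨fun _ => h.1, fun _ => h.2, fun _ => Or.inr h⟩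

theorem Cut.neg {Pos : SignVec α → Prop} {X : SignVec α} (h : Cut Pos X) : Cut Pos (-X) :=
  ⟨h.2, by rw [neg_neg]; exact h.1⟩

theorem sign_ne_neg {x : SignType} (h : x ≠ 0) : x ≠ -x := by revert x; decide

theorem sep_neg_neg (X Y : SignVec α) : sep (-X) (-Y) = sep X Y := by
  have : ∀ x y : SignType, (-x = - -y ∧ -x ≠ 0) ↔ (x = -y ∧ x ≠ 0) := by decide
  ext a; exact this _ _

theorem neg_compose (X Y : SignVec α) : -(compose X Y) = compose (-X) (-Y) := by
  funext a; by_cases h : X a = 0 <;> simp [compose, h]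

theorem IsSide.up_compose {N : OrientedMatroid α} {Pos : SignVec α → Prop} (hP : IsSide N Pos)
    {X Y : SignVec α} (hX : X ∈ N.covectors) (hY : Y ∈ N.covectors) (h : Pos X) :
    Pos (compose X Y) :=
  hP.up X hX _ (N.compose_mem X hX Y hY) h fun _ ha => compose_of_ne ha

theorem IsSide.up_compose_neg {N : OrientedMatroid α} {Pos : SignVec α → Prop} (hP : IsSide N Pos)
    {X Y : SignVec α} (hX : X ∈ N.covectors) (hY : Y ∈ N.covectors) (h : Pos (-X)) :
    Pos (-(compose X Y)) := by
  rw [neg_compose]; exact hP.up_compose (N.neg_mem X hX) (N.neg_mem Y hY) h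

theorem IsSide.valid_compose {N : OrientedMatroid α} {Pos : SignVec α → Prop} (hP : IsSide N Pos)
    {X Y : SignVec α} (hX : X ∈ N.covectors) (hY : Y ∈ N.covectors) {s t : SignType}
    (h : Valid Pos X s) (h' : Valid Pos Y t) :
    Valid Pos (compose X Y) (if s ≠ 0 then s else t) := by
  by_cases hs : s = 0
  · rcases h.2.2 hs with h0 | hc
    · have : compose X Y = Y := by funext a; simp [compose, h0]
      rw [this]; simpa [hs] using h'
    · exact Cut.valid ⟨hP.up_compose hX hY hc.1, hP.up_compose_neg hX hY hc.2⟩ _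
  · rw [if_pos hs]
    exact ⟨fun h1 => hP.up_compose hX hY (h.1 h1), fun h1 => hP.up_compose_neg hX hY (h.2.1 h1),
      fun h1 => absurd h1 hs⟩

/-- Between a covector on the positive side and one on the negative side, with the same support,
there is a covector met by the new pseudohyperplane. -/
theorem IsSide.between {N : OrientedMatroid α} {Pos : SignVec α → Prop} (hP : IsSide N Pos)
    (k : ℕ) : ∀ X ∈ N.covectors, ∀ Y ∈ N.covectors, (∀ a, X a = 0 ↔ Y a = 0) → Pos X → Pos (-Y) →
      (sep X Y).ncard = k → Y = -X ∨ ∃ A ∈ N.covectors, Cut Pos A ∧ (∀ a, A a = 0 ↔ X a = 0) ∧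
        ∀ a ∉ sep X Y, A a = X a := by
  induction k using Nat.strong_induction_on with
  | _ k ih =>
  intro X hX Y hY hs hpX hpY hk
  have hfin : (sep X Y).Finite := N.ground_finite.subset fun a ha => N.supp_subset X hX ha.2
  have heq : ∀ a, a ∉ sep X Y → X a = Y a := fun a ha => by
    rw [mem_sep] at ha
    have := hs a
    revert ha this; generalize X a = x; generalize Y a = y; revert x y; decide
  by_cases hne : ∃ e, e ∈ sep X Y
  swap
  · push Not at hne
    have : Y = X := funext fun a => (heq a (hne a)).symm
    rw [this] at hpY
    exact Or.inr ⟨X, hX, ⟨hpX, hpY⟩, fun _ => Iff.rfl, fun _ _ => rfl⟩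
  obtain ⟨e, he⟩ := hne
  obtain ⟨Z, hZ, hZe, hZs⟩ := N.elim X hX Y hY e he
  have hZs : ∀ a ∉ sep X Y, Z a = X a := fun a ha => by
    rw [hZs a ha, compose_apply, ← heq a ha]; simp
  by_cases hZ0 : Z = 0
  · left; funext a
    by_cases ha : a ∈ sep X Y
    · simp [ha.1]
    · have h1 := hZs a ha
      rw [hZ0] at h1
      rw [Pi.neg_apply, ← heq a ha, ← h1]; rfl
  -- replacing one end of the segment by a composition with `Z` shortens it at `e`
  have lt : ∀ T : Set α, T ⊆ sep X Y → e ∉ T → T.ncard < k := fun T hT heT => by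
    rw [← hk]
    exact Set.ncard_lt_ncard ⟨hT, fun h => heT (h he)⟩ hfin
  have hYe : Y e ≠ 0 := fun h => he.2 ((hs e).2 h)
  right
  rcases hP.total Z hZ hZ0 with hp | hp
  · have hc : ∀ a, compose Z Y a = 0 ↔ Y a = 0 := fun a => by
      by_cases ha : a ∈ sep X Y
      · have h1 : Y a ≠ 0 := fun h => ha.2 ((hs a).2 h)
        rw [compose_apply]
        revert h1; generalize Z a = z; generalize Y a = y; revert z y; decide
      · rw [compose_apply, hZs a ha, heq a ha]; simp
    have hoff : ∀ a ∉ sep X Y, compose Z Y a = X a := fun a ha => by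
      rw [compose_apply, hZs a ha, heq a ha]; simp
    have hsub : sep (compose Z Y) Y ⊆ sep X Y := fun a ha => by
      by_contra hn
      rw [mem_sep, hoff a hn, heq a hn] at ha
      revert ha; generalize Y a = y; revert y; decide
    have hee : compose Z Y e = Y e := compose_of_eq hZe
    have hne : e ∉ sep (compose Z Y) Y := by
      rw [mem_sep, hee]; revert hYe; generalize Y e = y; revert y; decide
    rcases ih _ (lt _ hsub hne) (compose Z Y) (N.compose_mem Z hZ Y hY) Y hY hc
      (hP.up_compose hZ hY hp) hpY rfl with h | ⟨A, hA, hcA, hA0, hAs⟩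
    · have := congrFun h e
      rw [Pi.neg_apply, hee] at this
      exact absurd this (sign_ne_neg hYe)
    · exact ⟨A, hA, hcA, fun a => (hA0 a).trans ((hc a).trans (hs a).symm), fun a ha => by
        rw [hAs a (fun h => ha (hsub h)), hoff a ha]⟩
  · have hc : ∀ a, X a = 0 ↔ compose Z X a = 0 := fun a => by
      by_cases ha : a ∈ sep X Y
      · have h1 : X a ≠ 0 := ha.2
        rw [compose_apply]
        revert h1; generalize Z a = z; generalize X a = y; revert z y; decide
      · rw [compose_apply, hZs a ha]; simp
    have hoff : ∀ a ∉ sep X Y, compose Z X a = X a := fun a ha => by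
      rw [compose_apply, hZs a ha]; simp
    have hsub : sep X (compose Z X) ⊆ sep X Y := fun a ha => by
      by_contra hn
      rw [mem_sep, hoff a hn] at ha
      revert ha; generalize X a = y; revert y; decide
    have hee : compose Z X e = X e := compose_of_eq hZe
    have hXe := he.2
    have hne : e ∉ sep X (compose Z X) := by
      rw [mem_sep, hee]; revert hXe; generalize X e = y; revert y; decide
    rcases ih _ (lt _ hsub hne) X hX (compose Z X) (N.compose_mem Z hZ X hX) hc hpX
      (hP.up_compose_neg hZ hX hp) rfl with h | ⟨A, hA, hcA, hA0, hAs⟩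
    · have := congrFun h e
      rw [Pi.neg_apply, hee] at this
      exact absurd this (sign_ne_neg hXe)
    · exact ⟨A, hA, hcA, hA0, fun a ha => hAs a fun h => ha (hsub h)⟩

/-- Elimination between two covectors of equal support that are both on the positive side. -/
theorem IsSide.elim_pos {N : OrientedMatroid α} {Pos : SignVec α → Prop} (hP : IsSide N Pos)
    {X Y : SignVec α} (hX : X ∈ N.covectors) (hY : Y ∈ N.covectors) (hs : ∀ a, X a = 0 ↔ Y a = 0)
    (hpX : Pos X) (hpY : Pos Y) {e : α} (he : e ∈ sep X Y) :
    ∃ Z ∈ N.covectors, Z e = 0 ∧ (∀ a ∉ sep X Y, Z a = X a) ∧ Pos Z := by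
  have heq : ∀ a, a ∉ sep X Y → X a = Y a := fun a ha => by
    rw [mem_sep] at ha
    have := hs a
    revert ha this; generalize X a = x; generalize Y a = y; revert x y; decide
  have hYe : Y e ≠ 0 := fun h => he.2 ((hs e).2 h)
  by_cases hneg : Y = -X
  · obtain ⟨Z, hZ, hZ0, hZe, hZX⟩ := hP.proper X hX ⟨hpX, hneg ▸ hpY⟩ e he.2
    have hoff : ∀ a ∉ sep X Y, X a = 0 ∧ Z a = 0 := fun a ha => by
      have : X a = 0 := by
        rw [mem_sep, hneg, Pi.neg_apply, neg_neg] at ha; simpa using ha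
      exact ⟨this, hZX a this⟩
    rcases hP.total Z hZ hZ0 with h | h
    · exact ⟨Z, hZ, hZe, fun a ha => by rw [(hoff a ha).1, (hoff a ha).2], h⟩
    · exact ⟨-Z, N.neg_mem Z hZ, by simp [hZe], fun a ha => by
        rw [(hoff a ha).1, Pi.neg_apply, (hoff a ha).2, neg_zero], h⟩
  have nz : ∀ W : SignVec α, (∀ a ∉ sep X Y, W a = X a) → W ≠ 0 := fun W hW h0 => hneg <| by
    funext a
    by_cases ha : a ∈ sep X Y
    · simp [ha.1]
    · have h1 := hW a ha
      rw [h0] at h1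
      rw [Pi.neg_apply, ← heq a ha, ← h1]; rfl
  obtain ⟨Z, hZ, hZe, hZs⟩ := N.elim X hX Y hY e he
  have hZs : ∀ a ∉ sep X Y, Z a = X a := fun a ha => by
    rw [hZs a ha, compose_apply, ← heq a ha]; simp
  rcases hP.total Z hZ (nz Z hZs) with hp | hp
  · exact ⟨Z, hZ, hZe, hZs, hp⟩
  -- `Z` is on the negative side: cross the pseudohyperplane on the way to `X` and to `Y`
  have cross : ∀ U ∈ N.covectors, (∀ a ∉ sep X Y, U a = X a) → (∀ a ∈ sep X Y, U a ≠ 0) → Pos U →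
      ∃ A ∈ N.covectors, Cut Pos A ∧ (∀ a, A a = 0 ↔ U a = 0) ∧ (∀ a ∉ sep X Y, A a = X a) ∧
        A e = U e := by
    intro U hU hUo hUi hpU
    have hee : compose Z U e = U e := compose_of_eq hZe
    have hUe := hUi e he
    have hoff : ∀ a ∉ sep X Y, compose Z U a = U a := fun a ha => by
      rw [compose_apply, hZs a ha, hUo a ha]; simp
    have hsub : sep U (compose Z U) ⊆ sep X Y := fun a ha => by
      by_contra hn
      rw [mem_sep, hoff a hn] at ha
      revert ha; generalize U a = y; revert y; decide
    have hne : e ∉ sep U (compose Z U) := by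
      rw [mem_sep, hee]; revert hUe; generalize U e = y; revert y; decide
    rcases hP.between _ U hU (compose Z U) (N.compose_mem Z hZ U hU) (fun a => by
      by_cases ha : a ∈ sep X Y
      · have h1 := hUi a ha
        rw [compose_apply]
        revert h1; generalize Z a = z; generalize U a = y; revert z y; decide
      · rw [hoff a ha]) hpU (hP.up_compose_neg hZ hU hp) rfl with h | ⟨A, hA, hcA, hA0, hAs⟩
    · have := congrFun h e
      rw [Pi.neg_apply, hee] at this
      exact absurd this (sign_ne_neg hUe)
    · exact ⟨A, hA, hcA, hA0, fun a ha => by rw [hAs a fun h => ha (hsub h), hUo a ha],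
        hAs e hne⟩
  obtain ⟨A, hA, hcA, hA0, hAs, hAe⟩ := cross X hX (fun _ _ => rfl) (fun a ha => ha.2) hpX
  obtain ⟨B, hB, hcB, hB0, hBs, hBe⟩ := cross Y hY (fun a ha => (heq a ha).symm)
    (fun a ha h => ha.2 ((hs a).2 h)) hpY
  obtain ⟨W, hW, hWe, hWs, hWc⟩ := hP.elim A hA B hB hcA hcB
    (fun a => by rw [hA0, hB0, hs]) e (by rw [mem_sep, hAe, hBe]; exact he)
  have hWX : ∀ a ∉ sep X Y, W a = X a := fun a ha => by
    rw [hWs a, hAs a ha]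
    rw [mem_sep, hAs a ha, hBs a ha]
    generalize X a = x; revert x; decide
  exact ⟨W, hW, hWe, hWX, (hWc.resolve_left (nz W hWX)).1⟩

/-- Elimination of an element `e` of `N` in the extension, for covectors of equal support. -/
theorem IsSide.elim_valid {N : OrientedMatroid α} {Pos : SignVec α → Prop} (hP : IsSide N Pos)
    {X Y : SignVec α} (hX : X ∈ N.covectors) (hY : Y ∈ N.covectors) (hs : ∀ a, X a = 0 ↔ Y a = 0)
    {s t : SignType} (hst : s = 0 ↔ t = 0) (hvX : Valid Pos X s) (hvY : Valid Pos Y t) {e : α}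
    (he : e ∈ sep X Y) : ∃ Z ∈ N.covectors, ∃ u, Valid Pos Z u ∧ Z e = 0 ∧
      (∀ a ∉ sep X Y, Z a = X a) ∧ (¬ (s = -t ∧ s ≠ 0) → u = s) := by
  by_cases hsep : s = -t ∧ s ≠ 0
  · obtain ⟨Z, hZ, hZe, hZs⟩ := N.elim X hX Y hY e he
    have hZs : ∀ a ∉ sep X Y, Z a = X a := fun a ha => by
      rw [mem_sep] at ha
      have h0 := hs a
      rw [hZs a ha, compose_apply]
      revert ha h0; generalize X a = x; generalize Y a = y; revert x y; decide
    have : ∃ u, Valid Pos Z u := by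
      by_cases h0 : Z = 0
      · exact ⟨0, fun h => absurd h (by decide), fun h => absurd h (by decide), fun _ => Or.inl h0⟩
      · rcases hP.total Z hZ h0 with h | h
        · exact ⟨1, fun _ => h, fun h => absurd h (by decide), fun h => absurd h (by decide)⟩
        · exact ⟨-1, fun h => absurd h (by decide), fun _ => h, fun h => absurd h (by decide)⟩
    obtain ⟨u, hu⟩ := this
    exact ⟨Z, hZ, u, hu, hZe, hZs, fun h => absurd hsep h⟩
  have hts : t = s := by
    clear hvX hvY
    revert hsep hst; revert s t; decide
  subst hts
  rcases sign_cases t with h | h | h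
  · have nz : ∀ {W : SignVec α}, W e ≠ 0 → W ≠ 0 := fun h h0 => h (by rw [h0]; rfl)
    have hcX := (hvX.2.2 h).resolve_left (nz he.2)
    have hcY := (hvY.2.2 h).resolve_left (nz fun h => he.2 ((hs e).2 h))
    obtain ⟨Z, hZ, hZe, hZs, hZc⟩ := hP.elim X hX Y hY hcX hcY hs e he
    refine ⟨Z, hZ, 0, ?_, hZe, hZs, fun _ => h.symm⟩
    exact ⟨fun h => absurd h (by decide), fun h => absurd h (by decide), fun _ => hZc⟩
  · obtain ⟨Z, hZ, hZe, hZs, hZp⟩ := hP.elim_pos hX hY hs (hvX.1 h) (hvY.1 h) he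
    refine ⟨Z, hZ, 1, ?_, hZe, hZs, fun _ => h.symm⟩
    exact ⟨fun _ => hZp, fun h => absurd h (by decide), fun h => absurd h (by decide)⟩
  · have hsn : sep (-X) (-Y) = sep X Y := sep_neg_neg X Y
    obtain ⟨Z, hZ, hZe, hZs, hZp⟩ := hP.elim_pos (N.neg_mem X hX) (N.neg_mem Y hY)
      (fun a => by simpa using hs a) (hvX.2.1 h) (hvY.2.1 h) (e := e) (hsn ▸ he)
    refine ⟨-Z, N.neg_mem Z hZ, -1, ?_, by simp [hZe], fun a ha => ?_, fun _ => h.symm⟩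
    · exact ⟨fun h => absurd h (by decide), fun _ => by rwa [neg_neg],
        fun h => absurd h (by decide)⟩
    · rw [Pi.neg_apply, hZs a (hsn ▸ ha), Pi.neg_apply, neg_neg]

/-- Elimination of the new element in the extension, for covectors of equal support. -/
theorem IsSide.elim_h {N : OrientedMatroid α} {Pos : SignVec α → Prop} (hP : IsSide N Pos)
    {X Y : SignVec α} (hX : X ∈ N.covectors) (hY : Y ∈ N.covectors) (hs : ∀ a, X a = 0 ↔ Y a = 0)
    {s t : SignType} (hst : s = -t ∧ s ≠ 0) (hvX : Valid Pos X s) (hvY : Valid Pos Y t) :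
    ∃ Z ∈ N.covectors, Valid Pos Z 0 ∧ (∀ a ∉ sep X Y, Z a = X a) := by
  have key : ∀ X ∈ N.covectors, ∀ Y ∈ N.covectors, (∀ a, X a = 0 ↔ Y a = 0) → Pos X → Pos (-Y) →
      ∃ Z ∈ N.covectors, Valid Pos Z 0 ∧ (∀ a ∉ sep X Y, Z a = X a) := by
    intro X hX Y hY hs h1 h2
    rcases hP.between _ X hX Y hY hs h1 h2 rfl with h | ⟨A, hA, hc, -, hAs⟩
    · refine ⟨0, N.zero_mem, ⟨fun h => absurd h (by decide), fun h => absurd h (by decide),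
        fun _ => Or.inl rfl⟩, fun a ha => ?_⟩
      rw [mem_sep, h, Pi.neg_apply, neg_neg] at ha
      simp at ha
      exact ha.symm
    · exact ⟨A, hA, hc.valid 0, hAs⟩
  rcases sign_cases s with h | h | h
  · exact absurd h hst.2
  · exact key X hX Y hY hs (hvX.1 h) (hvY.2.1 (by rw [← h, hst.1, neg_neg]))
  · have ht : t = 1 := by
      have := hst.1; rw [h] at this; exact (neg_injective this).symm
    obtain ⟨Z, hZ, hv, hZs⟩ := key (-X) (N.neg_mem X hX) (-Y) (N.neg_mem Y hY)
      (fun a => by simpa using hs a) (hvX.2.1 h) (by rw [neg_neg]; exact hvY.1 ht)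
    have hsn : sep (-X) (-Y) = sep X Y := sep_neg_neg X Y
    refine ⟨-Z, N.neg_mem Z hZ, by simpa using hv.neg, fun a ha => ?_⟩
    rw [Pi.neg_apply, hZs a (hsn ▸ ha), Pi.neg_apply, neg_neg]

theorem res_compose (A : Set α) (X Y : SignVec α) :
    restrictAway A (compose X Y) = compose (restrictAway A X) (restrictAway A Y) := by
  funext e; by_cases h : e ∈ A <;> simp [restrictAway, compose, h]

theorem res_neg (A : Set α) (X : SignVec α) :
    restrictAway A (-X) = -(restrictAway A X) := by
  funext e; by_cases h : e ∈ A <;> simp [restrictAway, h]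

theorem res_update [DecidableEq α] (N : OrientedMatroid α) {h : α} (hh : h ∉ N.ground)
    {X : SignVec α} (hX : X ∈ N.covectors) (t : SignType) :
    restrictAway {h} (Function.update X h t) = X := by
  funext e
  by_cases he : e = h
  · rw [res_mem (by simpa using he), he, eq_zero_of_not_ground N hX hh]
  · rw [res_not_mem (by simpa using he), Function.update_of_ne he]

open scoped Classical in
/-- The one-element extension defined by a positive side. -/
noncomputable def sideExt (N : OrientedMatroid α) (h : α) (hh : h ∉ N.ground)
    (Pos : SignVec α → Prop) (hP : IsSide N Pos) : OrientedMatroid α where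
  ground := insert h N.ground
  ground_finite := N.ground_finite.insert h
  covectors := {X | restrictAway {h} X ∈ N.covectors ∧ Valid Pos (restrictAway {h} X) (X h)}
  supp_subset := fun X hX e he => by
    by_cases heh : e = h
    · exact Or.inl heh
    · refine Or.inr (N.supp_subset _ hX.1 ?_)
      rw [mem_supp, res_not_mem (by simpa using heh)]; exact he
  zero_mem := by
    have : restrictAway {h} (0 : SignVec α) = 0 := by funext e; simp [restrictAway]
    rw [Set.mem_ofPred_eq, this]
    exact ⟨N.zero_mem, fun h => absurd h (by simp), fun h => absurd h (by simp),
      fun _ => Or.inl rfl⟩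
  neg_mem := fun X hX => by
    rw [Set.mem_ofPred_eq, res_neg]
    exact ⟨N.neg_mem _ hX.1, hX.2.neg⟩
  compose_mem := fun X hX Y hY => by
    rw [Set.mem_ofPred_eq, res_compose]
    exact ⟨N.compose_mem _ hX.1 _ hY.1, hP.valid_compose hX.1 hY.1 hX.2 hY.2⟩
  elim := by
    intro X hX Y hY e he
    -- pass to the two compositions, which have equal supports
    set X' := compose (restrictAway {h} X) (restrictAway {h} Y) with hX'
    set Y' := compose (restrictAway {h} Y) (restrictAway {h} X) with hY'
    have mX : X' ∈ N.covectors := N.compose_mem _ hX.1 _ hY.1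
    have mY : Y' ∈ N.covectors := N.compose_mem _ hY.1 _ hX.1
    have vX := hP.valid_compose hX.1 hY.1 hX.2 hY.2
    have vY := hP.valid_compose hY.1 hX.1 hY.2 hX.2
    have aX : ∀ a, a ≠ h → X' a = compose X Y a := fun a ha => by
      rw [hX', ← res_compose, res_not_mem (by simpa using ha)]
    have aY : ∀ a, a ≠ h → Y' a = compose Y X a := fun a ha => by
      rw [hY', ← res_compose, res_not_mem (by simpa using ha)]
    have sgn : ∀ x y : SignType, ((if x ≠ 0 then x else y) = 0 ↔ (if y ≠ 0 then y else x) = 0) ∧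
        (((if x ≠ 0 then x else y) = -(if y ≠ 0 then y else x) ∧ (if x ≠ 0 then x else y) ≠ 0) ↔
          (x = -y ∧ x ≠ 0)) := by decide
    have same : ∀ a, X' a = 0 ↔ Y' a = 0 := fun a => by
      rw [hX', hY', compose_apply, compose_apply]; exact (sgn _ _).1
    have seps : ∀ a, a ≠ h → (a ∈ sep X' Y' ↔ a ∈ sep X Y) := fun a ha => by
      rw [mem_sep, mem_sep, aX a ha, aY a ha, compose_apply, compose_apply]; exact (sgn _ _).2
    have fin : ∀ Z ∈ N.covectors, ∀ u, Valid Pos Z u → (e ≠ h → Z e = 0) → (e = h → u = 0) →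
        (∀ a ∉ sep X' Y', Z a = X' a) → (h ∉ sep X Y → u = compose X Y h) →
        ∃ Z ∈ {X | restrictAway {h} X ∈ N.covectors ∧ Valid Pos (restrictAway {h} X) (X h)},
          Z e = 0 ∧ ∀ e' ∉ sep X Y, Z e' = compose X Y e' := by
      intro Z hZ u hu h1 h2 h3 h4
      refine ⟨Function.update Z h u, ?_, ?_, fun a ha => ?_⟩
      · rw [Set.mem_ofPred_eq, res_update N hh hZ, Function.update_self]
        exact ⟨hZ, hu⟩
      · by_cases heh : e = h
        · rw [heh, Function.update_self]; exact h2 heh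
        · rw [Function.update_of_ne heh]; exact h1 heh
      · by_cases hah : a = h
        · subst hah; rw [Function.update_self]; exact h4 ha
        · rw [Function.update_of_ne hah, h3 a (fun h => ha ((seps a hah).1 h)), aX a hah]
    by_cases heh : e = h
    · subst heh
      obtain ⟨Z, hZ, hv, hZs⟩ := hP.elim_h mX mY same ((sgn _ _).2.2 he) vX vY
      exact fin Z hZ 0 hv (fun h => absurd rfl h) (fun _ => rfl) hZs (fun h => absurd he h)
    · obtain ⟨Z, hZ, u, hv, hZe, hZs, hu⟩ := hP.elim_valid mX mY same (sgn _ _).1 vX vY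
        ((seps e heh).2 he)
      exact fin Z hZ u hv (fun _ => hZe) (fun h => absurd h heh) hZs
        (fun h => hu fun h' => h ((sgn _ _).2.1 h'))

/-- A positive side defines a one-element extension, in which the covectors on that side extend by
`+`. -/
theorem exists_extension_of_side (N : OrientedMatroid α) {h : α} (hh : h ∉ N.ground)
    {Pos : SignVec α → Prop} (hP : IsSide N Pos) : ∃ Nh, IsExtension N h Nh ∧
      ∀ X ∈ N.covectors, Pos X → ∃ X' ∈ Nh.covectors, X' h = 1 ∧ ∀ e, e ≠ h → X' e = X e := by
  classical
  refine ⟨sideExt N h hh Pos hP, isExtension_of hh rfl ?_ ?_, ?_⟩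
  · ext X
    constructor
    · intro hX
      have : ∃ t, Valid Pos X t := by
        by_cases h0 : X = 0
        · exact ⟨0, fun h => absurd h (by decide), fun h => absurd h (by decide), fun _ => Or.inl h0⟩
        · rcases hP.total X hX h0 with h | h
          · exact ⟨1, fun _ => h, fun h => absurd h (by decide), fun h => absurd h (by decide)⟩
          · exact ⟨-1, fun h => absurd h (by decide), fun _ => h, fun h => absurd h (by decide)⟩
      obtain ⟨t, ht⟩ := this
      refine ⟨Function.update X h t, ⟨?_, ?_⟩, res_update N hh hX t⟩
      · rw [res_update N hh hX]; exact hX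
      · rw [res_update N hh hX, Function.update_self]; exact ht
    · rintro ⟨W, hW, rfl⟩; exact hW.1
  · intro X hX hz
    have h0 : restrictAway {h} X = 0 := by
      funext e
      by_cases he : e = h
      · exact res_mem (by simpa using he)
      · rw [res_not_mem (by simpa using he)]; exact hz e he
    obtain ⟨-, h1, h2, -⟩ := hX
    rw [h0] at h1 h2
    rcases sign_cases (X h) with h | h | h
    · exact h
    · exact absurd (h1 h) hP.zero
    · exact absurd (h2 h) (by rw [neg_zero]; exact hP.zero)
  · intro X hX hp
    refine ⟨Function.update X h 1, ⟨?_, ?_⟩, by simp, fun e he => Function.update_of_ne he _ _⟩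
    · rw [res_update N hh hX]; exact hX
    · rw [res_update N hh hX, Function.update_self]
      exact ⟨fun _ => hp, fun h => absurd h (by decide), fun h => absurd h (by decide)⟩

/-- The extension by an element parallel (`s = 1`) or antiparallel (`s = -1`) to `e`, or by a loop
(`s = 0`). -/
noncomputable def parExt (N : OrientedMatroid α) (h e : α) (he : e ≠ h) (s : SignType) :
    OrientedMatroid α where
  ground := insert h N.ground
  ground_finite := N.ground_finite.insert h
  covectors := {X | restrictAway {h} X ∈ N.covectors ∧ X h = s * X e}
  supp_subset := fun X hX a ha => by
    by_cases hah : a = h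
    · exact Or.inl hah
    · refine Or.inr (N.supp_subset _ hX.1 ?_)
      rw [mem_supp, res_not_mem (by simpa using hah)]; exact ha
  zero_mem := by
    have : restrictAway {h} (0 : SignVec α) = 0 := by funext e; simp [restrictAway]
    rw [Set.mem_ofPred_eq, this]
    exact ⟨N.zero_mem, by simp⟩
  neg_mem := fun X hX => by
    rw [Set.mem_ofPred_eq, res_neg]
    exact ⟨N.neg_mem _ hX.1, by simp [hX.2]⟩
  compose_mem := fun X hX Y hY => by
    rw [Set.mem_ofPred_eq, res_compose]
    refine ⟨N.compose_mem _ hX.1 _ hY.1, ?_⟩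
    have sg : ∀ s x y : SignType,
        (if s * x ≠ 0 then s * x else s * y) = s * if x ≠ 0 then x else y := by decide
    rw [compose_apply, compose_apply, hX.2, hY.2]
    exact sg _ _ _
  elim := by
    classical
    intro X hX Y hY b hb
    have seps : ∀ a, a ≠ h → (a ∈ sep (restrictAway {h} X) (restrictAway {h} Y) ↔ a ∈ sep X Y) :=
      fun a ha => by
        have : a ∉ ({h} : Set α) := by simpa using ha
        rw [mem_sep, mem_sep, res_not_mem this, res_not_mem this]
    have hsh : h ∈ sep X Y → e ∈ sep X Y ∧ s ≠ 0 := fun hs => by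
      rw [mem_sep, hX.2, hY.2] at hs
      have sg : ∀ s x y : SignType, s * x = -(s * y) ∧ s * x ≠ 0 →
          (x = -y ∧ x ≠ 0) ∧ s ≠ 0 := by decide
      exact sg _ _ _ hs
    have hsh' : h ∉ sep X Y → e ∉ sep X Y ∨ s = 0 := fun hs => by
      rw [mem_sep, hX.2, hY.2] at hs
      have sg : ∀ s x y : SignType, ¬ (s * x = -(s * y) ∧ s * x ≠ 0) →
          ¬ (x = -y ∧ x ≠ 0) ∨ s = 0 := by decide
      exact sg _ _ _ hs
    have fin : ∀ Z ∈ N.covectors, (b ≠ h → Z b = 0) → (b = h → Z e = 0) →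
        (∀ a ∉ sep (restrictAway {h} X) (restrictAway {h} Y),
          Z a = compose (restrictAway {h} X) (restrictAway {h} Y) a) →
        ∃ Z ∈ {X | restrictAway {h} X ∈ N.covectors ∧ X h = s * X e},
          Z b = 0 ∧ ∀ e' ∉ sep X Y, Z e' = compose X Y e' := by
      intro Z hZ h1 h2 h3
      have hres : restrictAway {h} (Function.update Z h (s * Z e)) =
          restrictAway {h} Z := by
        funext a
        by_cases ha : a = h
        · rw [res_mem (by simpa using ha), res_mem (by simpa using ha)]
        · rw [res_not_mem (by simpa using ha), res_not_mem (by simpa using ha),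
            Function.update_of_ne ha]
      have hZh : restrictAway {h} Z = Z := by
        funext a
        by_cases ha : a = h
        · rw [res_mem (by simpa using ha), h3 a]
          · rw [compose_apply, res_mem (by simpa using ha), res_mem (by simpa using ha)]; simp
          · rw [mem_sep, res_mem (by simpa using ha)]; simp
        · rw [res_not_mem (by simpa using ha)]
      have off : ∀ a, a ≠ h → a ∉ sep X Y → Z a = compose X Y a := fun a ha hs => by
        rw [h3 a (fun h => hs ((seps a ha).1 h)), ← res_compose, res_not_mem (by simpa using ha)]
      refine ⟨Function.update Z h (s * Z e), ⟨?_, ?_⟩, ?_, fun a ha => ?_⟩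
      · rw [hres, hZh]; exact hZ
      · rw [Function.update_self, Function.update_of_ne he]
      · by_cases hbh : b = h
        · rw [hbh, Function.update_self, h2 hbh, mul_zero]
        · rw [Function.update_of_ne hbh]; exact h1 hbh
      · by_cases hah : a = h
        · subst hah
          rw [Function.update_self]
          rcases hsh' ha with h | h
          · have sg : ∀ s x y : SignType,
                (s * if x ≠ 0 then x else y) = if s * x ≠ 0 then s * x else s * y := by decide
            rw [off e he h, compose_apply, compose_apply, hX.2, hY.2]
            exact sg _ _ _
          · rw [compose_apply, hX.2, hY.2, h]; simp
        · rw [Function.update_of_ne hah]; exact off a hah ha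
    by_cases hbh : b = h
    · have := hsh (hbh ▸ hb)
      obtain ⟨Z, hZ, hZe, hZs⟩ := N.elim _ hX.1 _ hY.1 e ((seps e he).2 this.1)
      exact fin Z hZ (fun h => absurd hbh h) (fun _ => hZe) hZs
    · obtain ⟨Z, hZ, hZe, hZs⟩ := N.elim _ hX.1 _ hY.1 b ((seps b hbh).2 hb)
      exact fin Z hZ (fun _ => hZe) (fun h => absurd h hbh) hZs

/-- In the extension by an element parallel to `e` (`s = 1`), antiparallel to `e` (`s = -1`), or by a
loop (`s = 0`), every covector `X` extends by `s * X e`. -/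
theorem exists_extension_parallel (N : OrientedMatroid α) {h e : α} (hh : h ∉ N.ground)
    (he : e ≠ h) (s : SignType) : ∃ Nh, IsExtension N h Nh ∧
      ∀ X ∈ N.covectors, ∃ X' ∈ Nh.covectors, X' h = s * X e ∧ ∀ e, e ≠ h → X' e = X e := by
  classical
  have lift : ∀ X ∈ N.covectors, Function.update X h (s * X e) ∈ (parExt N h e he s).covectors :=
    fun X hX => ⟨by rw [res_update N hh hX]; exact hX, by
      rw [Function.update_self, Function.update_of_ne he]⟩
  refine ⟨parExt N h e he s, isExtension_of hh rfl ?_ ?_, fun X hX =>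
    ⟨_, lift X hX, by simp, fun a ha => Function.update_of_ne ha _ _⟩⟩
  · ext X
    constructor
    · intro hX
      exact ⟨_, lift X hX, res_update N hh hX _⟩
    · rintro ⟨W, hW, rfl⟩; exact hW.1
  · intro X hX hz
    rw [hX.2, hz e he, mul_zero]

end Ext

section Gallery

variable {α : Type*}

/-! ### Galleries of topes -/

/-- A tope: a covector of maximal support. -/
def IsTope (N : OrientedMatroid α) (T : SignVec α) : Prop :=
  T ∈ N.covectors ∧ ∀ Y ∈ N.covectors, supp Y ⊆ supp T

theorem exists_tope (N : OrientedMatroid α) : ∃ T, IsTope N T := by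
  have hb : BddAbove {k | ∃ X ∈ N.covectors, (supp X).ncard = k} :=
    ⟨N.ground.ncard, by
      rintro _ ⟨X, hX, rfl⟩
      exact Set.ncard_le_ncard (N.supp_subset X hX) N.ground_finite⟩
  obtain ⟨T, hT, hTc⟩ := Nat.sSup_mem (s := {k | ∃ X ∈ N.covectors, (supp X).ncard = k})
    ⟨_, 0, N.zero_mem, rfl⟩ hb
  refine ⟨T, hT, fun Y hY e he => ?_⟩
  by_contra hTe
  have hC := N.compose_mem T hT Y hY
  have hlt : (supp T).ncard < (supp (compose T Y)).ncard := by
    refine Set.ncard_lt_ncard ⟨fun a ha => ?_, fun h => hTe (h ?_)⟩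
      (N.ground_finite.subset (N.supp_subset _ hC))
    · rw [mem_supp, compose_of_ne ha]; exact ha
    · have : T e = 0 := by simpa [mem_supp] using hTe
      rw [mem_supp, compose_of_eq this]; exact he
  have := le_csSup hb ⟨_, hC, rfl⟩
  omega

theorem isTope_of_supp {N : OrientedMatroid α} {T X : SignVec α} (hT : IsTope N T)
    (hX : X ∈ N.covectors) (h : ∀ a, T a ≠ 0 → X a ≠ 0) : IsTope N X :=
  ⟨hX, fun Y hY _ ha => h _ (hT.2 Y hY ha)⟩

theorem IsTope.ne_zero {N : OrientedMatroid α} {T X : SignVec α} (hT : IsTope N T)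
    (hX : X ∈ N.covectors) {a : α} (h : X a ≠ 0) : T a ≠ 0 := hT.2 X hX h

theorem IsTope.compose {N : OrientedMatroid α} {T X : SignVec α} (hT : IsTope N T)
    (hX : X ∈ N.covectors) : IsTope N (compose X T) :=
  isTope_of_supp hT (N.compose_mem X hX T hT.1) fun a ha => by
    rw [compose_apply]; split
    · assumption
    · exact ha

theorem IsTope.neg {N : OrientedMatroid α} {T : SignVec α} (hT : IsTope N T) : IsTope N (-T) :=
  isTope_of_supp hT (N.neg_mem T hT.1) fun a ha => by simpa using ha

/-- The first wall of a tope towards another one: a minimal separation set is a parallel class,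
and it is the zero set of a face of the tope. -/
theorem exists_wall {N : OrientedMatroid α} {T T' : SignVec α} (hT : IsTope N T)
    (hT' : IsTope N T') (hne : (sep T T').Nonempty) :
    ∃ D ⊆ sep T T', D.Nonempty ∧ ∃ Z ∈ N.covectors, (∀ a ∈ D, Z a = 0) ∧ (∀ a ∉ D, Z a = T a) ∧
      ∀ x ∈ D, ∀ y ∈ D, ∀ X ∈ N.covectors, X x * T x = X y * T y := by
  classical
  have hex : ∃ k, ∃ U, IsTope N U ∧ sep T U ⊆ sep T T' ∧ (sep T U).Nonempty ∧
      (sep T U).ncard = k := ⟨_, T', hT', subset_rfl, hne, rfl⟩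
  obtain ⟨U, hU, hUs, hUn, hUk⟩ := Nat.find_spec hex
  have fin : ∀ W, (sep T W).Finite := fun W =>
    N.ground_finite.subset fun a ha => N.supp_subset T hT.1 ha.2
  have hmin : ∀ W, IsTope N W → sep T W ⊆ sep T U → (sep T W).Nonempty → sep T W = sep T U := by
    intro W hW hs hn
    refine Set.eq_of_subset_of_ncard_le hs ?_ (fin U)
    rw [hUk]
    exact Nat.find_min' hex ⟨W, hW, hs.trans hUs, hn, rfl⟩
  obtain ⟨e, he⟩ := hUn
  obtain ⟨Z, hZ, hZe, hZs⟩ := N.elim T hT.1 U hU.1 e he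
  have hoff : ∀ a ∉ sep T U, Z a = T a := fun a ha => by
    rw [hZs a ha, compose_apply]
    by_cases h : T a = 0
    · rw [if_neg (not_not.2 h), h]
      by_contra h'; exact hT.ne_zero hU.1 h' h
    · rw [if_pos h]
  have hin : ∀ a ∈ sep T U, Z a = 0 := by
    have h1 : ∀ a, Z a = 0 ∨ Z a = T a := by
      by_contra hc
      push Not at hc
      obtain ⟨a, ha0, haT⟩ := hc
      have hTa : T a ≠ 0 := hT.ne_zero hZ ha0
      have hZa : T a = -Z a := by
        rcases sign_cases_of (T a) (Z a) hTa with h | h | h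
        · exact absurd h ha0
        · exact absurd h haT
        · rw [h, neg_neg]
      have hsub : sep T (compose Z T) ⊆ sep T U := fun b hb => by
        by_contra hn
        rw [mem_sep, compose_apply, hoff b hn, ite_self] at hb
        exact sign_ne_neg hb.2 hb.1
      have := hmin _ (hT.compose hZ) hsub ⟨a, by
        rw [mem_sep, compose_of_ne ha0]; exact ⟨hZa, hTa⟩⟩
      have he' : e ∈ sep T (compose Z T) := by rw [this]; exact he
      rw [mem_sep, compose_of_eq hZe] at he'
      exact sign_ne_neg he'.2 he'.1
    have hsub : sep T (compose Z U) ⊆ sep T U := fun b hb => by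
      rw [mem_sep, compose_apply] at hb
      rw [mem_sep]
      rcases h1 b with h | h
      · simpa [h] using hb
      · rw [h] at hb
        rw [if_pos hb.2] at hb
        exact absurd hb.1 (sign_ne_neg hb.2)
    have := hmin _ (hU.compose hZ) hsub ⟨e, by
      rw [mem_sep, compose_of_eq hZe]; exact he⟩
    intro a ha
    rcases h1 a with h | h
    · exact h
    · rw [← this, mem_sep, compose_apply, h, if_pos ha.2] at ha
      exact absurd ha.1 (sign_ne_neg ha.2)
  refine ⟨sep T U, hUs, ⟨e, he⟩, Z, hZ, hin, hoff, ?_⟩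
  -- on the wall, every covector is, relative to `T`, constantly negative or nowhere negative
  have allneg : ∀ X ∈ N.covectors, ∀ x ∈ sep T U, ∀ y ∈ sep T U, X x = -T x → X y = -T y := by
    intro X hX x hx y hy hxx
    have hW : IsTope N (compose Z (compose X T)) := (hT.compose hX).compose hZ
    have hWs : ∀ a ∈ sep T U, compose Z (compose X T) a = compose X T a := fun a ha =>
      compose_of_eq (hin a ha)
    have hsub : sep T (compose Z (compose X T)) ⊆ sep T U := fun b hb => by
      by_contra hn
      rw [mem_sep, compose_of_ne (by rw [hoff b hn]; exact hb.2), hoff b hn] at hb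
      exact sign_ne_neg hb.2 hb.1
    have := hmin _ hW hsub ⟨x, by
      rw [mem_sep, hWs x hx, compose_of_ne (by rw [hxx]; simpa using hx.2), hxx, neg_neg]
      exact ⟨rfl, hx.2⟩⟩
    have hy' : y ∈ sep T (compose Z (compose X T)) := by rw [this]; exact hy
    rw [mem_sep, hWs y hy, compose_apply] at hy'
    have hTy := hy.2
    revert hy' hTy; generalize X y = a; generalize T y = b; revert a b; decide
  intro x hx y hy X hX
  have a1 := allneg X hX x hx y hy
  have a2 := allneg X hX y hy x hx
  have a3 := allneg (-X) (N.neg_mem X hX) x hx y hy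
  have a4 := allneg (-X) (N.neg_mem X hX) y hy x hx
  have hTx := hx.2
  have hTy := hy.2
  simp only [Pi.neg_apply] at a3 a4
  revert a1 a2 a3 a4 hTx hTy
  generalize X y = a; generalize T y = b; generalize X x = c; generalize T x = d
  revert a b c d; decide

/-- A gallery from `T` to `T'`, built by crossing one wall at a time; `idx` numbers the elements in
the order in which they are crossed. -/
theorem gallery_aux {N : OrientedMatroid α} {T' : SignVec α} (hT' : IsTope N T') (k : ℕ) :
    ∀ T, IsTope N T → (sep T T').ncard = k → ∃ (idx : α → ℕ) (K : ℕ),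
      (∀ x ∈ sep T T', idx x < K ∧ ∃ E ∈ N.covectors, (∀ y ∈ sep T T',
        (idx y < idx x → E y = -T y) ∧ (idx y = idx x → E y = 0) ∧ (idx x < idx y → E y = T y)) ∧
        ∀ y ∉ sep T T', E y = T y) ∧
      ∀ x ∈ sep T T', ∀ y ∈ sep T T', idx x = idx y → ∀ X ∈ N.covectors,
        X x * T x = X y * T y := by
  classical
  induction k using Nat.strong_induction_on with
  | _ k ih =>
  intro T hT hk
  by_cases hne : (sep T T').Nonempty
  swap
  · rw [Set.not_nonempty_iff_eq_empty] at hne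
    exact ⟨fun _ => 0, 0, by simp [hne], by simp [hne]⟩
  obtain ⟨D, hD, hDn, Z, hZ, hZD, hZo, hpar⟩ := exists_wall hT hT' hne
  have fin : (sep T T').Finite :=
    N.ground_finite.subset fun a ha => N.supp_subset T hT.1 ha.2
  have hUD : ∀ a ∈ D, compose Z (-T) a = -T a := fun a ha => compose_of_eq (hZD a ha)
  have hUo : ∀ a ∉ D, compose Z (-T) a = T a := fun a ha => by
    rw [compose_apply, hZo a ha]
    by_cases h : T a = 0 <;> simp [h]
  have hU : IsTope N (compose Z (-T)) := hT.neg.compose hZ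
  have hsep : ∀ a, a ∈ sep (compose Z (-T)) T' ↔ a ∈ sep T T' ∧ a ∉ D := fun a => by
    by_cases ha : a ∈ D
    · have h1 := hD ha
      rw [mem_sep, hUD a ha]
      simp only [ha, not_true, and_false, iff_false]
      rintro ⟨h2, h3⟩
      rw [h1.1, neg_neg] at h2
      have := h1.2
      rw [h1.1] at this h3
      exact sign_ne_neg (by simpa using h3) h2
    · rw [mem_sep, hUo a ha, mem_sep]
      simp [ha]
  obtain ⟨idx, K, h1, h2⟩ := ih _ (by
    rw [← hk]
    refine Set.ncard_lt_ncard ⟨fun a ha => ((hsep a).1 ha).1, fun h => ?_⟩ fin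
    obtain ⟨d, hd⟩ := hDn
    exact ((hsep d).1 (h (hD hd))).2 hd) _ hU rfl
  refine ⟨fun x => if x ∈ D then 0 else idx x + 1, K + 1, fun x hx => ?_, fun x hx y hy hxy => ?_⟩
  · by_cases hxD : x ∈ D
    · refine ⟨by simp [hxD], Z, hZ, fun y hy => ?_, fun y hy => hZo y fun h => hy (hD h)⟩
      by_cases hyD : y ∈ D
      · simp [hxD, hyD, hZD y hyD]
      · simp [hxD, hyD, hZo y hyD]
    · obtain ⟨hlt, E, hE, hEs, hEo⟩ := h1 x ((hsep x).2 ⟨hx, hxD⟩)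
      refine ⟨by simp [hxD, hlt], E, hE, fun y hy => ?_, fun y hy => ?_⟩
      · by_cases hyD : y ∈ D
        · have := hEo y fun h => ((hsep y).1 h).2 hyD
          simp [hxD, hyD, this, hUD y hyD]
        · have := hEs y ((hsep y).2 ⟨hy, hyD⟩)
          rw [hUo y hyD] at this
          simpa [hxD, hyD] using this
      · have := hEo y fun h => hy ((hsep y).1 h).1
        rw [this, hUo y fun h => hy (hD h)]
  · by_cases hxD : x ∈ D
    · by_cases hyD : y ∈ D
      · exact hpar x hxD y hyD
      · simp [hxD, hyD] at hxy
    · by_cases hyD : y ∈ D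
      · simp [hxD, hyD] at hxy
      · intro X hX
        have := h2 x ((hsep x).2 ⟨hx, hxD⟩) y ((hsep y).2 ⟨hy, hyD⟩)
          (by simpa [hxD, hyD] using hxy) X hX
        rwa [hUo x hxD, hUo y hyD] at this

/-- `idx` orders the elements as they are crossed by a gallery from the tope `T` to `-T`: the
walls crossed are covectors, and elements crossed simultaneously are parallel. -/
def IsGallery (N : OrientedMatroid α) (T : SignVec α) (idx : α → ℕ) : Prop :=
  (∀ x, T x ≠ 0 → ∃ E ∈ N.covectors, ∀ y, T y ≠ 0 →
    (idx y < idx x → E y = -T y) ∧ (idx y = idx x → E y = 0) ∧ (idx x < idx y → E y = T y)) ∧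
  ∀ x y, T x ≠ 0 → T y ≠ 0 → idx x = idx y → ∀ X ∈ N.covectors, X x * T x = X y * T y

/-- There is a gallery from `T` to `-T` through any other tope `U`. -/
theorem exists_gallery {N : OrientedMatroid α} {T U : SignVec α} (hT : IsTope N T)
    (hU : IsTope N U) : ∃ (idx : α → ℕ) (K : ℕ), IsGallery N T idx ∧
      ∀ y, T y ≠ 0 → (idx y < K → U y = -T y) ∧ (K ≤ idx y → U y = T y) := by
  classical
  obtain ⟨idx₁, K, h1, h2⟩ := gallery_aux hU _ T hT rfl
  obtain ⟨idx₂, K₂, h3, h4⟩ := gallery_aux hT.neg _ U hU rfl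
  have two : ∀ a, T a ≠ 0 → a ∉ sep T U → U a = T a := fun a ha hs => by
    have hUa := hU.ne_zero hT.1 ha
    rw [mem_sep] at hs
    revert ha hs hUa; generalize T a = t; generalize U a = u; revert t u; decide
  have in2 : ∀ a, T a ≠ 0 → a ∉ sep T U → a ∈ sep U (-T) := fun a ha hs => by
    rw [mem_sep, two a ha hs, Pi.neg_apply, neg_neg]; exact ⟨rfl, ha⟩
  have one : ∀ a, a ∈ sep T U → U a = -T a ∧ a ∉ sep U (-T) := fun a ha => by
    have := ha.1
    refine ⟨by rw [this, neg_neg], ?_⟩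
    rw [mem_sep, Pi.neg_apply, neg_neg, this]
    rintro ⟨h, h'⟩
    exact sign_ne_neg h' h
  refine ⟨fun x => if x ∈ sep T U then idx₁ x else K + idx₂ x, K, ⟨fun x hx => ?_, ?_⟩,
    fun y hy => ?_⟩
  · by_cases hxs : x ∈ sep T U
    · obtain ⟨hlt, E, hE, hEs, hEo⟩ := h1 x hxs
      refine ⟨E, hE, fun y hy => ?_⟩
      by_cases hys : y ∈ sep T U
      · simpa [hxs, hys] using hEs y hys
      · have := hEo y hys
        simp only [hxs, hys, if_true, if_false]
        exact ⟨fun h => by omega, fun h => by omega, fun _ => this⟩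
    · obtain ⟨-, E, hE, hEs, hEo⟩ := h3 x (in2 x hx hxs)
      refine ⟨E, hE, fun y hy => ?_⟩
      by_cases hys : y ∈ sep T U
      · have := hEo y (one y hys).2
        have hlt := (h1 y hys).1
        simp only [hxs, hys, if_true, if_false]
        exact ⟨fun _ => by rw [this, (one y hys).1], fun h => by omega, fun h => by omega⟩
      · have := hEs y (in2 y hy hys)
        rw [two y hy hys] at this
        simpa [hxs, hys] using this
  · intro x y hx hy hxy X hX
    by_cases hxs : x ∈ sep T U
    · have := (h1 x hxs).1
      by_cases hys : y ∈ sep T U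
      · exact h2 x hxs y hys (by simpa [hxs, hys] using hxy) X hX
      · simp only [hxs, hys, if_true, if_false] at hxy; omega
    · by_cases hys : y ∈ sep T U
      · have := (h1 y hys).1
        simp only [hxs, hys, if_true, if_false] at hxy; omega
      · have := h4 x (in2 x hx hxs) y (in2 y hy hys) (by simpa [hxs, hys] using hxy) X hX
        rwa [two x hx hxs, two y hy hys] at this
  · by_cases hys : y ∈ sep T U
    · have := (h1 y hys).1
      simp only [hys, if_true]
      exact ⟨fun _ => (one y hys).1, fun h => by omega⟩
    · simp only [hys, if_false]
      exact ⟨fun h => by omega, fun _ => two y hy hys⟩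

end Gallery

section Frame

variable {α : Type*}

/-! ### Two galleries as coordinates on a rank three oriented matroid -/

/-- The sign vector `X` after reorienting so that `T` becomes nonnegative. -/
def rel (T X : SignVec α) : SignVec α := fun x => X x * T x

theorem rel_neg (T X : SignVec α) (x : α) : rel T (-X) x = - rel T X x := by
  simp [rel]

theorem rel_eq_zero {T X : SignVec α} {x : α} (hT : T x ≠ 0) : rel T X x = 0 ↔ X x = 0 := by
  simp only [rel]; revert hT; generalize T x = t; generalize X x = s; revert s t; decide

theorem rel_zero_of {T X : SignVec α} {x : α} (h : X x = 0) : rel T X x = 0 := by simp [rel, h]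

theorem rel_self {T : SignVec α} {x : α} (hT : T x ≠ 0) : rel T T x = 1 := by
  simp only [rel]; revert hT; generalize T x = t; revert t; decide

theorem rel_of_eq_neg {T X : SignVec α} {x : α} (hT : T x ≠ 0) (h : X x = -T x) :
    rel T X x = -1 := by
  simp only [rel, h]; revert hT; generalize T x = t; revert t; decide

theorem rel_of_eq {T X : SignVec α} {x : α} (hT : T x ≠ 0) (h : X x = T x) :
    rel T X x = 1 := by
  simp only [rel, h]; revert hT; generalize T x = t; revert t; decide

theorem eq_of_rel {T X Y : SignVec α} {x : α} (hT : T x ≠ 0) (h : rel T X x = rel T Y x) :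
    X x = Y x := by
  simp only [rel] at h; revert hT h; generalize T x = t; generalize X x = s; generalize Y x = r
  revert r s t; decide

/-- Orthogonality of two sign vectors with four entries. -/
def Orth4 (p q r s x y z w : SignType) : Prop :=
  (p * x = 1 ∨ q * y = 1 ∨ r * z = 1 ∨ s * w = 1) ↔
    (p * x = -1 ∨ q * y = -1 ∨ r * z = -1 ∨ s * w = -1)

instance (p q r s x y z w : SignType) : Decidable (Orth4 p q r s x y z w) := by
  unfold Orth4; infer_instance

/-- Coordinates on a rank three oriented matroid. The function `idx` is a gallery from the tope `T`
to `-T`, in which the class of `a` is crossed first; `idx2` is a gallery in the contraction of `a`,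
starting at the face of `T` on `a`. Any four elements are dependent, and `idx2` takes at least two
values away from the class of `a`. -/
structure Frame (N : OrientedMatroid α) (T : SignVec α) (a : α) (idx idx2 : α → ℕ) : Prop where
  tope : IsTope N T
  ha : T a ≠ 0
  first : ∀ x, T x ≠ 0 → idx a ≤ idx x
  par : ∀ x y, T x ≠ 0 → T y ≠ 0 → idx x = idx y → ∀ X ∈ N.covectors, rel T X x = rel T X y
  wall : ∀ x, T x ≠ 0 → ∃ E ∈ N.covectors, ∀ y, T y ≠ 0 → (idx y < idx x → rel T E y = -1) ∧
    (idx y = idx x → rel T E y = 0) ∧ (idx x < idx y → rel T E y = 1)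
  wall2 : ∀ x, T x ≠ 0 → idx a < idx x → ∃ V ∈ N.covectors, V a = 0 ∧ ∀ y, T y ≠ 0 →
    idx a < idx y → (idx2 y < idx2 x → rel T V y = -1) ∧
    (idx2 y = idx2 x → rel T V y = 0) ∧ (idx2 x < idx2 y → rel T V y = 1)
  par2 : ∀ x y, T x ≠ 0 → T y ≠ 0 → idx a < idx x → idx a < idx y → idx2 x = idx2 y →
    ∀ X ∈ N.covectors, X a = 0 → rel T X x = rel T X y
  dep : ∀ x y z w, T x ≠ 0 → T y ≠ 0 → T z ≠ 0 → T w ≠ 0 → x ≠ y → x ≠ z → x ≠ w → y ≠ z →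
    y ≠ w → z ≠ w → ∃ p q r s : SignType, (p ≠ 0 ∨ q ≠ 0 ∨ r ≠ 0 ∨ s ≠ 0) ∧
      ∀ X ∈ N.covectors, Orth4 p q r s (rel T X x) (rel T X y) (rel T X z) (rel T X w)
  nd : ∃ b c, T b ≠ 0 ∧ T c ≠ 0 ∧ idx a < idx b ∧ idx a < idx c ∧ idx2 b < idx2 c

/-- In rank three a gallery extends to a frame: `a` is an element crossed first, and `idx2` is a
gallery in the contraction of `a`, which starts at the face of `T` on `a`. -/
theorem exists_frame {N : OrientedMatroid α} {T : SignVec α} {idx : α → ℕ} (hT : IsTope N T)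
    (hidx : IsGallery N T idx)
    (hdep : ∀ S ⊆ N.ground, S.ncard = 4 → ∃ V, N.IsVector V ∧ V ≠ 0 ∧ supp V ⊆ S)
    (hrk : ∃ I, CIndep N ∅ I ∧ I.ncard = 3) : ∃ a idx2, Frame N T a idx idx2 := by
  classical
  obtain ⟨I, hI, hI3⟩ := hrk
  have hne : ∃ k x, T x ≠ 0 ∧ idx x = k := by
    obtain ⟨i, hi⟩ : I.Nonempty := by
      rw [← Set.ncard_pos (Set.finite_of_ncard_pos (by omega))]; omega
    obtain ⟨Y, hY, -, hYi, -⟩ := hI i hi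
    exact ⟨idx i, i, hT.ne_zero hY (by rw [hYi]; decide), rfl⟩
  obtain ⟨a, ha, hak⟩ := Nat.find_spec hne
  have hfirst : ∀ x, T x ≠ 0 → idx a ≤ idx x := fun x hx => by
    rw [hak]; exact Nat.find_min' hne ⟨x, hx, rfl⟩
  obtain ⟨E, hE, hEp⟩ := hidx.1 a ha
  have hEa : E a = 0 := (hEp a ha).2.1 rfl
  have hEB : ∀ y, T y ≠ 0 → idx a < idx y → E y = T y := fun y hy h => (hEp y hy).2.2 h
  have hB : ∀ X ∈ N.covectors, X a = 0 → ∀ y, X y ≠ 0 → T y ≠ 0 ∧ idx a < idx y := by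
    intro X hX hXa y hy
    have hTy := hT.ne_zero hX hy
    refine ⟨hTy, lt_of_le_of_ne (hfirst y hTy) fun h => ?_⟩
    have := hidx.2 a y ha hTy h X hX
    rw [hXa, zero_mul] at this
    exact hy ((rel_eq_zero hTy).1 this.symm)
  have hEt : IsTope (con N {a}) E := by
    refine ⟨⟨hE, by simpa using hEa⟩, fun X hX y hy => ?_⟩
    have := hB X hX.1 (hX.2 a rfl) y hy
    rw [mem_supp, hEB y this.1 this.2]; exact this.1
  obtain ⟨idx2, -, hg2, -⟩ := exists_gallery hEt hEt
  refine ⟨a, idx2, hT, ha, hfirst, fun x y hx hy h X hX => hidx.2 x y hx hy h X hX,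
    fun x hx => ?_, fun x hx hax => ?_, fun x y hx hy hax hay h X hX hXa => ?_,
    fun x y z w hx hy hz hw h1 h2 h3 h4 h5 h6 => ?_, ?_⟩
  · obtain ⟨F, hF, hFp⟩ := hidx.1 x hx
    exact ⟨F, hF, fun y hy => ⟨fun h => rel_of_eq_neg hy ((hFp y hy).1 h),
      fun h => rel_zero_of ((hFp y hy).2.1 h), fun h => rel_of_eq hy ((hFp y hy).2.2 h)⟩⟩
  · obtain ⟨V, hV, hVp⟩ := hg2.1 x (by rw [hEB x hx hax]; exact hx)
    refine ⟨V, hV.1, hV.2 a rfl, fun y hy hay => ?_⟩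
    have := hVp y (by rw [hEB y hy hay]; exact hy)
    rw [hEB y hy hay] at this
    exact ⟨fun h => rel_of_eq_neg hy (this.1 h), fun h => rel_zero_of (this.2.1 h),
      fun h => rel_of_eq hy (this.2.2 h)⟩
  · have := hg2.2 x y (by rw [hEB x hx hax]; exact hx) (by rw [hEB y hy hay]; exact hy) h X
      ⟨hX, by simpa using hXa⟩
    rwa [hEB x hx hax, hEB y hy hay] at this
  · obtain ⟨V, hV, hV0, hVs⟩ := hdep {x, y, z, w} (by
      have g : ∀ u, T u ≠ 0 → u ∈ N.ground := fun u hu => N.supp_subset T hT.1 hu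
      intro u hu
      rcases hu with rfl | rfl | rfl | rfl
      exacts [g _ hx, g _ hy, g _ hz, g _ hw]) (by
      rw [Set.ncard_insert_of_notMem, Set.ncard_insert_of_notMem, Set.ncard_pair h6]
      · simp [h4, h5]
      · simp [h1, h2, h3])
    refine ⟨V x * T x, V y * T y, V z * T z, V w * T w, ?_, fun X hX => ?_⟩
    · by_contra hc
      push Not at hc
      apply hV0
      funext u
      by_contra hu
      rcases hVs hu with rfl | rfl | rfl | rfl
      exacts [hu ((rel_eq_zero hx).1 hc.1), hu ((rel_eq_zero hy).1 hc.2.1),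
        hu ((rel_eq_zero hz).1 hc.2.2.1), hu ((rel_eq_zero hw).1 hc.2.2.2)]
    · have ho := (orth_iff _ _).1 (hV.2 X hX)
      have e : ∀ u, T u ≠ 0 → V u * T u * rel T X u = V u * X u := fun u hu => by
        simp only [rel]; revert hu; generalize T u = t; generalize V u = v
        generalize X u = s; revert s t v; decide
      have key : ∀ σ : SignType, σ ≠ 0 → ((∃ u, V u * X u = σ) ↔
          (V x * X x = σ ∨ V y * X y = σ ∨ V z * X z = σ ∨ V w * X w = σ)) := by
        intro σ hσ
        constructor
        · rintro ⟨u, hu⟩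
          have : V u ≠ 0 := fun h => by rw [h, zero_mul] at hu; exact hσ hu.symm
          rcases hVs this with rfl | rfl | rfl | rfl
          exacts [Or.inl hu, Or.inr (Or.inl hu), Or.inr (Or.inr (Or.inl hu)),
            Or.inr (Or.inr (Or.inr hu))]
        · rintro (h | h | h | h)
          exacts [⟨_, h⟩, ⟨_, h⟩, ⟨_, h⟩, ⟨_, h⟩]
      rw [key 1 (by decide), key (-1) (by decide)] at ho
      simp only [Orth4, e x hx, e y hy, e z hz, e w hw]
      exact ho
  -- Two elements remain independent modulo `a`, so they are not crossed simultaneously in `idx2`.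
  · obtain ⟨J, -, hJ, hJc⟩ := hI.exchange a
    obtain ⟨b, hb, c, hc, hbc⟩ := (Set.one_lt_ncard_iff (Set.finite_of_ncard_pos
      (by omega))).1 (show 1 < J.ncard by omega) |> fun ⟨b, c, hb, hc, h⟩ =>
        (⟨b, hb, c, hc, h⟩ : ∃ b, b ∈ J ∧ ∃ c, c ∈ J ∧ b ≠ c)
    obtain ⟨Y, hY, hYz, hYb, hYo⟩ := hJ b hb
    obtain ⟨Y', hY', hYz', hYc, -⟩ := hJ c hc
    have hYa := hYz a (by simp)
    have hb' := hB Y hY hYa b (by rw [hYb]; decide)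
    have hc' := hB Y' hY' (hYz' a (by simp)) c (by rw [hYc]; decide)
    rcases lt_trichotomy (idx2 b) (idx2 c) with h | h | h
    · exact ⟨b, c, hb'.1, hc'.1, hb'.2, hc'.2, h⟩
    · have := hg2.2 b c (by rw [hEB b hb'.1 hb'.2]; exact hb'.1)
        (by rw [hEB c hc'.1 hc'.2]; exact hc'.1) h Y ⟨hY, by simpa using hYa⟩
      rw [hEB b hb'.1 hb'.2, hEB c hc'.1 hc'.2, hYb, hYo c hc hbc.symm, zero_mul, one_mul] at this
      exact absurd this hb'.1
    · exact ⟨c, b, hc'.1, hb'.1, hc'.2, hb'.2, h⟩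

end Frame

section FrameSide

variable {α : Type*} {N : OrientedMatroid α} {T : SignVec α} {a : α} {idx idx2 : α → ℕ}

/-! ### The side of a pseudoline through two topes in rank three -/

/-- The positions of `a`, `b`, `c`, `d` in the two galleries determine the signs of a dependence
between them, by orthogonality to `T`, to the walls at `a` and `b`, and to the wall at `b` in the
contraction of `a`. No covector has the given sign pattern, since it violates orthogonality. -/
theorem Frame.case_one (h : Frame N T a idx idx2) {b c d : α} (hb : T b ≠ 0) (hc : T c ≠ 0)
    (hd : T d ≠ 0) (hab : idx a < idx b) (hbc : idx b < idx c) (hbd : idx b < idx d)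
    (hdb : idx2 d < idx2 b) (hbc2 : idx2 b < idx2 c) {X : SignVec α} (hX : X ∈ N.covectors)
    (ha1 : rel T X a = 1) (hb1 : rel T X b ≠ 1) (hc1 : rel T X c ≠ -1)
    (hd1 : rel T X d ≠ -1) : False := by
  obtain ⟨p, q, r, s, hne, ho⟩ := h.dep a b c d h.ha hb hc hd (by rintro rfl; omega)
    (by rintro rfl; omega) (by rintro rfl; omega) (by rintro rfl; omega)
    (by rintro rfl; omega) (by rintro rfl; omega)
  obtain ⟨E, hE, hEp⟩ := h.wall b hb
  obtain ⟨F, hF, hFp⟩ := h.wall a h.ha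
  obtain ⟨V, hV, hVa, hVp⟩ := h.wall2 b hb hab
  have o1 := ho E hE
  have o2 := ho F hF
  have o3 := ho V hV
  have o4 := ho X hX
  have o5 := ho T h.tope.1
  rw [(hEp a h.ha).1 hab, (hEp b hb).2.1 rfl, (hEp c hc).2.2 hbc, (hEp d hd).2.2 hbd] at o1
  rw [(hFp a h.ha).2.1 rfl, (hFp b hb).2.2 hab, (hFp c hc).2.2 (by omega),
    (hFp d hd).2.2 (by omega)] at o2
  rw [rel_zero_of hVa, (hVp b hb hab).2.1 rfl, (hVp c hc (by omega)).2.2 hbc2,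
    (hVp d hd (by omega)).1 hdb] at o3
  rw [rel_self h.ha, rel_self hb, rel_self hc, rel_self hd] at o5
  rw [ha1] at o4
  have : ∀ p q r s : SignType, (p ≠ 0 ∨ q ≠ 0 ∨ r ≠ 0 ∨ s ≠ 0) → Orth4 p q r s (-1) 0 1 1 →
    Orth4 p q r s 0 1 1 1 → Orth4 p q r s 0 0 1 (-1) → Orth4 p q r s 1 1 1 1 →
    ∀ x y z, x ≠ 1 → y ≠ -1 → z ≠ -1 → Orth4 p q r s 1 x y z → False := by decide
  exact this p q r s hne o1 o2 o3 o5 _ _ _ hb1 hc1 hd1 o4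

/-- The analogue of `Frame.case_one` for another arrangement of the four elements. -/
theorem Frame.case_two (h : Frame N T a idx idx2) {b c d : α} (hb : T b ≠ 0) (hc : T c ≠ 0)
    (hd : T d ≠ 0) (hab : idx a < idx b) (hac : idx a < idx c) (hbd : idx b < idx d)
    (hcd : idx c < idx d) (hbd2 : idx2 b < idx2 d) (hdc2 : idx2 d < idx2 c)
    {X : SignVec α} (hX : X ∈ N.covectors)
    (ha1 : rel T X a = 1) (hb1 : rel T X b ≠ 1) (hc1 : rel T X c ≠ 1)
    (hd1 : rel T X d ≠ -1) : False := by
  obtain ⟨p, q, r, s, hne, ho⟩ := h.dep a b c d h.ha hb hc hd (by rintro rfl; omega)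
    (by rintro rfl; omega) (by rintro rfl; omega) (by rintro rfl; omega)
    (by rintro rfl; omega) (by rintro rfl; omega)
  obtain ⟨E, hE, hEp⟩ := h.wall d hd
  obtain ⟨F, hF, hFp⟩ := h.wall a h.ha
  obtain ⟨V, hV, hVa, hVp⟩ := h.wall2 d hd (by omega)
  have o1 := ho E hE
  have o2 := ho F hF
  have o3 := ho V hV
  have o4 := ho X hX
  have o5 := ho T h.tope.1
  rw [(hEp a h.ha).1 (by omega), (hEp b hb).1 hbd, (hEp c hc).1 hcd, (hEp d hd).2.1 rfl] at o1
  rw [(hFp a h.ha).2.1 rfl, (hFp b hb).2.2 hab, (hFp c hc).2.2 (by omega),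
    (hFp d hd).2.2 (by omega)] at o2
  rw [rel_zero_of hVa, (hVp b hb hab).1 hbd2, (hVp c hc (by omega)).2.2 hdc2,
    (hVp d hd (by omega)).2.1 rfl] at o3
  rw [rel_self h.ha, rel_self hb, rel_self hc, rel_self hd] at o5
  rw [ha1] at o4
  have : ∀ p q r s : SignType, (p ≠ 0 ∨ q ≠ 0 ∨ r ≠ 0 ∨ s ≠ 0) → Orth4 p q r s (-1) (-1) (-1) 0 →
    Orth4 p q r s 0 1 1 1 → Orth4 p q r s 0 (-1) 1 0 → Orth4 p q r s 1 1 1 1 →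
    ∀ x y z, x ≠ 1 → y ≠ 1 → z ≠ -1 → Orth4 p q r s 1 x y z → False := by decide
  exact this p q r s hne o1 o2 o3 o5 _ _ _ hb1 hc1 hd1 o4

/-- The degenerate form of `Frame.case_one`, for `b` and `c` parallel in the contraction of `a`. -/
theorem Frame.tie (h : Frame N T a idx idx2) {b c : α} (hb : T b ≠ 0) (hc : T c ≠ 0)
    (hab : idx a < idx b) (hbc : idx b < idx c) (hbc2 : idx2 b = idx2 c) {X : SignVec α}
    (hX : X ∈ N.covectors) (ha1 : rel T X a = 1) (hb1 : rel T X b ≠ 1)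
    (hc1 : rel T X c ≠ -1) : False := by
  obtain ⟨E, hE, hEp⟩ := h.wall b hb
  have ea := (hEp a h.ha).1 hab
  have eb := (hEp b hb).2.1 rfl
  have ec := (hEp c hc).2.2 hbc
  obtain ⟨Z, hZ, hZa, hZo⟩ := N.elim X hX E hE a (by
    rw [mem_sep]; simp only [rel] at ha1 ea
    revert ha1 ea; generalize X a = x; generalize E a = y; generalize T a = t
    revert x y t; decide)
  have hp := h.par2 b c hb hc hab (by omega) hbc2 Z hZ hZa
  have zb := hZo b (by
    rw [mem_sep]; simp only [rel] at eb hb1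
    revert eb hb; generalize X b = x; generalize E b = y; generalize T b = t
    revert x y t; decide)
  have zc := hZo c (by
    rw [mem_sep]; simp only [rel] at ec hc1
    revert ec hc1; generalize X c = x; generalize E c = y; generalize T c = t
    revert x y t; decide)
  simp only [rel, zb, zc, compose] at hp hb1 hc1 eb ec
  revert hp hb1 hc1 eb ec hb hc
  generalize X b = x; generalize E b = y; generalize T b = t
  generalize X c = x'; generalize E c = y'; generalize T c = t'
  clear * -
  revert x y t x' y' t'; decide

/-- Two elements not parallel in the contraction of `a` form a basis of it. -/
theorem Frame.zero_of_two (h : Frame N T a idx idx2) {x y : α} (hx : T x ≠ 0) (hy : T y ≠ 0)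
    (hax : idx a < idx x) (hay : idx a < idx y) (hxy : idx2 x < idx2 y) {X : SignVec α}
    (hX : X ∈ N.covectors) (hXa : X a = 0) (hXx : rel T X x = 0) (hXy : rel T X y = 0) :
    X = 0 := by
  funext w
  show X w = 0
  by_contra hw0
  have hw := h.tope.ne_zero hX hw0
  apply hw0
  rw [← rel_eq_zero hw]
  rcases (h.first w hw).eq_or_lt with e | haw
  · rw [← h.par a w h.ha hw e X hX, rel_zero_of hXa]
  by_cases e1 : idx2 w = idx2 x
  · rw [h.par2 w x hw hx haw hax e1 X hX hXa, hXx]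
  by_cases e2 : idx2 w = idx2 y
  · rw [h.par2 w y hw hy haw hay e2 X hX hXa, hXy]
  obtain ⟨p, q, r, s, hne, ho⟩ := h.dep a x y w h.ha hx hy hw (by rintro rfl; omega)
    (by rintro rfl; omega) (by rintro rfl; omega) (by rintro rfl; omega)
    (by rintro rfl; exact e1 rfl) (by rintro rfl; exact e2 rfl)
  obtain ⟨F, hF, hFp⟩ := h.wall a h.ha
  obtain ⟨V, hV, hVa, hVp⟩ := h.wall2 x hx hax
  have o2 := ho F hF
  have o3 := ho V hV
  have o4 := ho X hX
  have o5 := ho T h.tope.1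
  rw [(hFp a h.ha).2.1 rfl, (hFp x hx).2.2 hax, (hFp y hy).2.2 hay,
    (hFp w hw).2.2 haw] at o2
  rw [rel_zero_of hVa, (hVp x hx hax).2.1 rfl, (hVp y hy hay).2.2 hxy] at o3
  rw [rel_self h.ha, rel_self hx, rel_self hy, rel_self hw] at o5
  rw [rel_zero_of hXa, hXx, hXy] at o4
  generalize rel T V w = v at o3
  generalize rel T X w = u at o4
  have : ∀ p q r s : SignType, (p ≠ 0 ∨ q ≠ 0 ∨ r ≠ 0 ∨ s ≠ 0) →
    Orth4 p q r s 0 1 1 1 → Orth4 p q r s 1 1 1 1 → ∀ u v, Orth4 p q r s 0 0 1 v →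
    Orth4 p q r s 0 0 0 u → u = 0 := by decide
  exact this p q r s hne o2 o5 u v o3 o4

/-- A nonzero covector vanishing on `a` changes sign at most once along `idx2`. -/
theorem Frame.alt (h : Frame N T a idx idx2) {x y z : α} (hx : T x ≠ 0) (hy : T y ≠ 0)
    (hz : T z ≠ 0) (hax : idx a < idx x) (hay : idx a < idx y) (haz : idx a < idx z)
    (hxy : idx2 x < idx2 y) (hyz : idx2 y < idx2 z) {X : SignVec α}
    (hX : X ∈ N.covectors) (hXa : X a = 0) (hXx : rel T X x ≠ -1) (hXy : rel T X y ≠ 1)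
    (hXz : rel T X z ≠ -1) : X = 0 := by
  obtain ⟨p, q, r, s, hne, ho⟩ := h.dep a x y z h.ha hx hy hz (by rintro rfl; omega)
    (by rintro rfl; omega) (by rintro rfl; omega) (by rintro rfl; omega)
    (by rintro rfl; omega) (by rintro rfl; omega)
  obtain ⟨F, hF, hFp⟩ := h.wall a h.ha
  obtain ⟨V, hV, hVa, hVp⟩ := h.wall2 y hy hay
  have o2 := ho F hF
  have o3 := ho V hV
  have o4 := ho X hX
  have o5 := ho T h.tope.1
  rw [(hFp a h.ha).2.1 rfl, (hFp x hx).2.2 hax, (hFp y hy).2.2 hay,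
    (hFp z hz).2.2 haz] at o2
  rw [rel_zero_of hVa, (hVp x hx hax).1 hxy, (hVp y hy hay).2.1 rfl, (hVp z hz haz).2.2 hyz] at o3
  rw [rel_self h.ha, rel_self hx, rel_self hy, rel_self hz] at o5
  rw [rel_zero_of hXa] at o4
  have k1 : ∀ p q r s : SignType, (p ≠ 0 ∨ q ≠ 0 ∨ r ≠ 0 ∨ s ≠ 0) →
    Orth4 p q r s 0 1 1 1 → Orth4 p q r s 0 (-1) 0 1 → Orth4 p q r s 1 1 1 1 → q = s := by decide
  have k2 : ∀ p q r s : SignType, (p ≠ 0 ∨ q ≠ 0 ∨ r ≠ 0 ∨ s ≠ 0) →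
    Orth4 p q r s 0 1 1 1 → Orth4 p q r s 0 (-1) 0 1 → Orth4 p q r s 1 1 1 1 → r = -s := by decide
  have k3 : ∀ p q r s : SignType, (p ≠ 0 ∨ q ≠ 0 ∨ r ≠ 0 ∨ s ≠ 0) →
    Orth4 p q r s 0 1 1 1 → Orth4 p q r s 0 (-1) 0 1 → Orth4 p q r s 1 1 1 1 → s ≠ 0 := by decide
  have k4 : ∀ p s x y z : SignType, s ≠ 0 → x ≠ -1 → y ≠ 1 → z ≠ -1 →
    Orth4 p s (-s) s 0 x y z → x = 0 := by decide
  have k5 : ∀ p s x y z : SignType, s ≠ 0 → x ≠ -1 → y ≠ 1 → z ≠ -1 →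
    Orth4 p s (-s) s 0 x y z → y = 0 := by decide
  have hs := k3 p q r s hne o2 o3 o5
  rw [k1 p q r s hne o2 o3 o5, k2 p q r s hne o2 o3 o5] at o4
  exact h.zero_of_two hx hy hax hay hxy hX hXa (k4 _ _ _ _ _ hs hXx hXy hXz o4)
    (k5 _ _ _ _ _ hs hXx hXy hXz o4)

theorem Frame.alt_neg (h : Frame N T a idx idx2) {x y z : α} (hx : T x ≠ 0) (hy : T y ≠ 0)
    (hz : T z ≠ 0) (hax : idx a < idx x) (hay : idx a < idx y) (haz : idx a < idx z)
    (hxy : idx2 x < idx2 y) (hyz : idx2 y < idx2 z) {X : SignVec α}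
    (hX : X ∈ N.covectors) (hXa : X a = 0) (hXx : rel T X x ≠ 1) (hXy : rel T X y ≠ -1)
    (hXz : rel T X z ≠ 1) : X = 0 := by
  have := h.alt hx hy hz hax hay haz hxy hyz (N.neg_mem X hX) (by simpa using hXa)
    (by rw [rel_neg]; exact fun e => hXx (neg_injective e))
    (by rw [rel_neg]; exact fun e => hXy (by rw [← neg_neg (rel T X y), e]))
    (by rw [rel_neg]; exact fun e => hXz (neg_injective e))
  exact funext fun w => by have := congrFun this w; simpa using this

/-- A covector vanishing on `a` with a weak descent and a weak ascent along `idx2` is zero. -/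
theorem Frame.updown (h : Frame N T a idx idx2) {x y x' y' : α} (hx : T x ≠ 0) (hy : T y ≠ 0)
    (hx' : T x' ≠ 0) (hy' : T y' ≠ 0) (hax : idx a < idx x) (hay : idx a < idx y)
    (hax' : idx a < idx x') (hay' : idx a < idx y') (hxy : idx2 x < idx2 y)
    (hxy' : idx2 x' < idx2 y') {X : SignVec α} (hX : X ∈ N.covectors) (hXa : X a = 0)
    (hXx : rel T X x ≠ -1) (hXy : rel T X y ≠ 1) (hXx' : rel T X x' ≠ 1)
    (hXy' : rel T X y' ≠ -1) : X = 0 := by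
  rcases lt_trichotomy (idx2 x) (idx2 x') with e | e | e
  · exact h.alt hx hx' hy' hax hax' hay' e hxy' hX hXa hXx hXx' hXy'
  · have e1 := h.par2 x x' hx hx' hax hax' e X hX hXa
    rcases lt_trichotomy (idx2 y) (idx2 y') with f | f | f
    · exact h.alt hx hy hy' hax hay hay' hxy f hX hXa hXx hXy hXy'
    · have e2 := h.par2 y y' hy hy' hay hay' f X hX hXa
      have s : ∀ u v : SignType, u ≠ -1 → v ≠ 1 → u = v → u = 0 ∧ v = 0 := by decide
      exact h.zero_of_two hx hy hax hay hxy hX hXa (s _ _ hXx hXx' e1).1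
        (s _ _ hXy' hXy e2.symm).2
    · exact h.alt_neg hx' hy' hy hax' hay' hay hxy' f hX hXa hXx' hXy' hXy
  · exact h.alt_neg hx' hx hy hax' hax hay e hxy hX hXa hXx' hXx hXy

end FrameSide

section SideThree

variable {α : Type*} {N : OrientedMatroid α} {T : SignVec α} {a : α} {idx idx2 : α → ℕ}

/-- The side of a pseudoline in the coordinates of a frame. The pseudoline crosses the elements in
the cyclic order given by `idx`, so a covector on it has no weak alternation along `a`, `b`, `c`.
Each alternation pattern lies on one side, which is decided by comparing `b` and `c` in the
gallery `idx2` around the face of `T` on `a`. -/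
def Side (T : SignVec α) (a : α) (idx idx2 : α → ℕ) (X : SignVec α) : Prop :=
  ∀ b c, T b ≠ 0 → T c ≠ 0 → idx a < idx b → idx b < idx c →
    (idx2 b < idx2 c → rel T X a = 1 ∨ rel T X b = -1 ∨ rel T X c = 1) ∧
    (idx2 c < idx2 b → rel T X a = -1 ∨ rel T X b = 1 ∨ rel T X c = -1)

/-- The two kinds of patterns that exclude a covector from one side each cannot occur together. -/
theorem Frame.cross (h : Frame N T a idx idx2) {X : SignVec α} (hX : X ∈ N.covectors)
    (ha1 : rel T X a = 1) {b c b' c' : α} (hb : T b ≠ 0) (hc : T c ≠ 0) (hb' : T b' ≠ 0)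
    (hc' : T c' ≠ 0) (hab : idx a < idx b) (hbc : idx b < idx c) (hab' : idx a < idx b')
    (hbc' : idx b' < idx c') (hbc2 : idx2 b < idx2 c) (hbc2' : idx2 c' < idx2 b')
    (xb : rel T X b ≠ 1) (xc : rel T X c ≠ -1) (xb' : rel T X b' ≠ 1)
    (xc' : rel T X c' ≠ -1) : False := by
  by_cases e : idx b < idx c'
  · rcases lt_trichotomy (idx2 b) (idx2 c') with f | f | f
    · exact h.case_two hb hb' hc' hab hab' e hbc' f hbc2' hX ha1 xb xb' xc'
    · exact h.tie hb hc' hab e f hX ha1 xb xc'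
    · exact h.case_one hb hc hc' hab hbc e f hbc2 hX ha1 xb xc xc'
  · have e' : idx b' < idx c := by omega
    rcases lt_trichotomy (idx2 b') (idx2 c) with f | f | f
    · exact h.case_one hb' hc hc' hab' e' hbc' hbc2' f hX ha1 xb' xc xc'
    · exact h.tie hb' hc hab' e' f hX ha1 xb' xc
    · exact h.case_two hb hb' hc hab hab' hbc e' hbc2 f hX ha1 xb xb' xc

theorem not_side {X : SignVec α} (hX : ¬ Side T a idx idx2 X) :
    ∃ b c, T b ≠ 0 ∧ T c ≠ 0 ∧ idx a < idx b ∧ idx b < idx c ∧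
      ((idx2 b < idx2 c ∧ rel T X a ≠ 1 ∧ rel T X b ≠ -1 ∧ rel T X c ≠ 1) ∨
       (idx2 c < idx2 b ∧ rel T X a ≠ -1 ∧ rel T X b ≠ 1 ∧ rel T X c ≠ -1)) := by
  by_contra hc
  apply hX
  intro b c hb hc' hab hbc
  by_contra h
  apply hc
  refine ⟨b, c, hb, hc', hab, hbc, ?_⟩
  by_contra h2
  apply h
  push Not at h2
  refine ⟨fun e => ?_, fun e => ?_⟩
  · by_contra h3; push Not at h3; exact h3.2.2 (h2.1 e h3.1 h3.2.1)
  · by_contra h3; push Not at h3; exact h3.2.2 (h2.2 e h3.1 h3.2.1)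

theorem sign_neg_ne {x y : SignType} : -x ≠ y ↔ x ≠ -y := by revert x y; decide

theorem not_side_neg {X : SignVec α} (hX : ¬ Side T a idx idx2 (-X)) :
    ∃ b c, T b ≠ 0 ∧ T c ≠ 0 ∧ idx a < idx b ∧ idx b < idx c ∧
      ((idx2 b < idx2 c ∧ rel T X a ≠ -1 ∧ rel T X b ≠ 1 ∧ rel T X c ≠ -1) ∨
       (idx2 c < idx2 b ∧ rel T X a ≠ 1 ∧ rel T X b ≠ -1 ∧ rel T X c ≠ 1)) := by
  obtain ⟨b, c, h1, h2, h3, h4, h5⟩ := not_side hX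
  simp only [rel_neg, sign_neg_ne, neg_neg] at h5
  exact ⟨b, c, h1, h2, h3, h4, h5⟩

theorem Frame.total_pos (h : Frame N T a idx idx2) {X : SignVec α} (hX : X ∈ N.covectors)
    (ha : rel T X a = 1) : Side T a idx idx2 X ∨ Side T a idx idx2 (-X) := by
  by_contra hc
  push Not at hc
  obtain ⟨b, c, hb, hc', hab, hbc, ⟨-, h1, -⟩ | ⟨k1, -, k2, k3⟩⟩ := not_side hc.1
  · exact h1 ha
  obtain ⟨b', c', hb', hc'', hab', hbc', ⟨k1', -, k2', k3'⟩ | ⟨-, h1, -⟩⟩ := not_side_neg hc.2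
  · exact h.cross hX ha hb' hc'' hb hc' hab' hbc' hab hbc k1' k1 k2' k3' k2 k3
  · exact h1 ha

/-- Every nonzero covector lies weakly on one of the two sides of the pseudoline. -/
theorem Frame.total (h : Frame N T a idx idx2) {X : SignVec α} (hX : X ∈ N.covectors)
    (hX0 : X ≠ 0) : Side T a idx idx2 X ∨ Side T a idx idx2 (-X) := by
  rcases sign_cases (rel T X a) with ha | ha | ha
  · by_contra hc
    push Not at hc
    have hXa := (rel_eq_zero h.ha).1 ha
    -- both failing patterns are a descent or an ascent along `idx2`
    have d : ∃ x y, T x ≠ 0 ∧ T y ≠ 0 ∧ idx a < idx x ∧ idx a < idx y ∧ idx2 x < idx2 y ∧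
        rel T X x ≠ -1 ∧ rel T X y ≠ 1 := by
      obtain ⟨b, c, hb, hc', hab, hbc, ⟨k1, -, k2, k3⟩ | ⟨k1, -, k2, k3⟩⟩ := not_side hc.1
      · exact ⟨b, c, hb, hc', hab, by omega, k1, k2, k3⟩
      · exact ⟨c, b, hc', hb, by omega, hab, k1, k3, k2⟩
    have u : ∃ x y, T x ≠ 0 ∧ T y ≠ 0 ∧ idx a < idx x ∧ idx a < idx y ∧ idx2 x < idx2 y ∧
        rel T X x ≠ 1 ∧ rel T X y ≠ -1 := by
      obtain ⟨b, c, hb, hc', hab, hbc, ⟨k1, -, k2, k3⟩ | ⟨k1, -, k2, k3⟩⟩ := not_side_neg hc.2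
      · exact ⟨b, c, hb, hc', hab, by omega, k1, k2, k3⟩
      · exact ⟨c, b, hc', hb, by omega, hab, k1, k3, k2⟩
    obtain ⟨x, y, hx, hy, hax, hay, hxy, x1, y1⟩ := d
    obtain ⟨x', y', hx', hy', hax', hay', hxy', x1', y1'⟩ := u
    exact hX0 (h.updown hx hy hx' hy' hax hay hax' hay' hxy hxy' hX hXa x1 y1 x1' y1')
  · exact h.total_pos hX ha
  · have := h.total_pos (N.neg_mem X hX) (by rw [rel_neg, ha]; rfl)
    rw [neg_neg] at this
    exact this.symm

theorem Frame.idx2_eq (h : Frame N T a idx idx2) {x y : α} (hx : T x ≠ 0) (hy : T y ≠ 0)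
    (hax : idx a < idx x) (hxy : idx x = idx y) : idx2 x = idx2 y := by
  obtain ⟨V, hV, -, hVp⟩ := h.wall2 x hx hax
  have h0 := (hVp x hx hax).2.1 rfl
  rw [h.par x y hx hy hxy V hV] at h0
  rcases lt_trichotomy (idx2 x) (idx2 y) with e | e | e
  · rw [(hVp y hy (by omega)).2.2 e] at h0; exact absurd h0 (by decide)
  · exact e
  · rw [(hVp y hy (by omega)).1 e] at h0; exact absurd h0 (by decide)

theorem Frame.exists_ne (h : Frame N T a idx idx2) (x : α) :
    ∃ w, T w ≠ 0 ∧ idx a < idx w ∧ idx2 w ≠ idx2 x := by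
  obtain ⟨b, c, hb, hc, hab, hac, hbc⟩ := h.nd
  by_cases e : idx2 b = idx2 x
  · exact ⟨c, hc, hac, by omega⟩
  · exact ⟨b, hb, hab, e⟩

theorem Frame.side_zero (h : Frame N T a idx idx2) : ¬ Side T a idx idx2 0 := by
  intro hs
  obtain ⟨b, c, hb, hc, hab, hac, hbc⟩ := h.nd
  have z : ∀ x, rel T 0 x = 0 := fun x => by simp [rel]
  rcases lt_trichotomy (idx b) (idx c) with e | e | e
  · have := (hs b c hb hc hab e).1 hbc
    simp only [z] at this
    exact absurd this (by decide)
  · have := h.idx2_eq hb hc hab e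
    omega
  · have := (hs c b hc hb hac e).2 hbc
    simp only [z] at this
    exact absurd this (by decide)

theorem Side.neg_iff {X : SignVec α} : Side T a idx idx2 (-X) ↔
    ∀ b c, T b ≠ 0 → T c ≠ 0 → idx a < idx b → idx b < idx c →
    (idx2 b < idx2 c → rel T X a = -1 ∨ rel T X b = 1 ∨ rel T X c = -1) ∧
    (idx2 c < idx2 b → rel T X a = 1 ∨ rel T X b = -1 ∨ rel T X c = 1) := by
  have s1 : ∀ x : SignType, -x = 1 ↔ x = -1 := by decide
  have s2 : ∀ x : SignType, -x = -1 ↔ x = 1 := by decide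
  simp only [Side, rel_neg, s1, s2]

/-- On the pseudoline there is no weak alternation along `a`, `b`, `c`. -/
theorem Frame.cut3 (h : Frame N T a idx idx2) {X : SignVec α} (hX : X ∈ N.covectors)
    (hC : Cut (Side T a idx idx2) X) {b c : α} (hb : T b ≠ 0) (hc : T c ≠ 0)
    (hab : idx a < idx b) (hbc : idx b < idx c) :
    (rel T X a = 1 ∨ rel T X b = -1 ∨ rel T X c = 1) ∧
    (rel T X a = -1 ∨ rel T X b = 1 ∨ rel T X c = -1) := by
  have hC2 := Side.neg_iff.1 hC.2
  rcases lt_trichotomy (idx2 b) (idx2 c) with e | e | e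
  · exact ⟨(hC.1 b c hb hc hab hbc).1 e, (hC2 b c hb hc hab hbc).1 e⟩
  swap
  · exact ⟨(hC2 b c hb hc hab hbc).2 e, (hC.1 b c hb hc hab hbc).2 e⟩
  have t1 : ¬ (rel T X a = 1 ∧ rel T X b ≠ 1 ∧ rel T X c ≠ -1) := fun ⟨h1, h2, h3⟩ =>
    h.tie hb hc hab hbc e hX h1 h2 h3
  have t2 : ¬ (rel T X a = -1 ∧ rel T X b ≠ -1 ∧ rel T X c ≠ 1) := fun ⟨h1, h2, h3⟩ =>
    h.tie hb hc hab hbc e (N.neg_mem X hX) (by rw [rel_neg, h1]; rfl)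
      (by rwa [rel_neg, sign_neg_ne]) (by rwa [rel_neg, sign_neg_ne, neg_neg])
  by_cases ha0 : rel T X a = 0
  · have hXa := (rel_eq_zero h.ha).1 ha0
    have hp := h.par2 b c hb hc hab (by omega) e X hX hXa
    have hb0 : rel T X b ≠ 0 := by
      intro hb0
      obtain ⟨w, hw, haw, hwb⟩ := h.exists_ne b
      rcases lt_trichotomy (idx2 w) (idx2 b) with f | f | f
      · rcases lt_trichotomy (idx w) (idx b) with g | g | g
        · have k1 := (hC.1 w b hw hb haw g).1 f
          have k2 := (hC2 w b hw hb haw g).1 f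
          rw [ha0, hb0] at k1 k2
          revert k1 k2; generalize rel T X w = x; revert x; decide
        · exact hwb (h.idx2_eq hw hb haw g)
        · have k1 := (hC.1 b w hb hw hab g).2 f
          have k2 := (hC2 b w hb hw hab g).2 f
          rw [ha0, hb0] at k1 k2
          revert k1 k2; generalize rel T X w = x; revert x; decide
      · exact hwb f
      · rcases lt_trichotomy (idx w) (idx b) with g | g | g
        · have k1 := (hC.1 w b hw hb haw g).2 f
          have k2 := (hC2 w b hw hb haw g).2 f
          rw [ha0, hb0] at k1 k2
          revert k1 k2; generalize rel T X w = x; revert x; decide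
        · exact hwb (h.idx2_eq hw hb haw g)
        · have k1 := (hC.1 b w hb hw hab g).1 f
          have k2 := (hC2 b w hb hw hab g).1 f
          rw [ha0, hb0] at k1 k2
          revert k1 k2; generalize rel T X w = x; revert x; decide
    rw [← hp]
    revert hb0 ha0; generalize rel T X b = x; generalize rel T X a = y; clear * -
    revert x y; decide
  · revert t1 t2 ha0
    generalize rel T X a = x; generalize rel T X b = y; generalize rel T X c = z
    clear * -
    revert x y z; decide

/-- The zeros of a covector on the pseudoline form at most one parallel class. -/
theorem Frame.zero_class (h : Frame N T a idx idx2) {X : SignVec α} (hX : X ∈ N.covectors)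
    (hC : Cut (Side T a idx idx2) X) {x y : α} (hx : T x ≠ 0) (hy : T y ≠ 0)
    (hXx : X x = 0) (hXy : X y = 0) : idx x = idx y := by
  have key : ∀ x y : α, T x ≠ 0 → T y ≠ 0 → X x = 0 → X y = 0 → ¬ idx x < idx y := by
    intro x y hx hy hXx hXy hxy
    have rx := rel_zero_of (T := T) hXx
    have ry := rel_zero_of (T := T) hXy
    rcases (h.first x hx).eq_or_lt with e | e
    · have ra := h.par a x h.ha hx e X hX
      rw [rx] at ra
      obtain ⟨w, hw, haw, hwy⟩ := h.exists_ne y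
      rcases lt_trichotomy (idx w) (idx y) with g | g | g
      · have := h.cut3 hX hC hw hy haw g
        rw [ra, ry] at this
        revert this; generalize rel T X w = x; revert x; decide
      · exact hwy (h.idx2_eq hw hy haw g)
      · have := h.cut3 hX hC hy hw (by omega) g
        rw [ra, ry] at this
        revert this; generalize rel T X w = x; revert x; decide
    · have := h.cut3 hX hC hx hy e hxy
      rw [rx, ry] at this
      revert this; generalize rel T X a = x; revert x; decide
  have k1 := key x y hx hy hXx hXy
  have k2 := key y x hy hx hXy hXx
  omega

/-- Sign vectors which increase along the gallery lie on the pseudoline. -/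
theorem cut_of_mono {X : SignVec α} (ha : T a ≠ 0) (hm : ∀ x y, T x ≠ 0 → T y ≠ 0 →
    idx x < idx y → rel T X x = -1 ∨ rel T X y = 1) : Cut (Side T a idx idx2) X := by
  refine ⟨fun b c hb hc hab hbc => ?_, Side.neg_iff.2 fun b c hb hc hab hbc => ?_⟩ <;>
  · have h1 := hm a b ha hb hab
    have h2 := hm b c hb hc hbc
    constructor <;> intro _ <;> tauto

end SideThree

section SideThreeB

variable {α : Type*} {N : OrientedMatroid α} {T : SignVec α} {a : α} {idx idx2 : α → ℕ}

/-- A covector on the pseudoline without further zeros changes sign at most once along the gallery. -/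
theorem Frame.noalt (h : Frame N T a idx idx2) {X : SignVec α} (hX : X ∈ N.covectors)
    (hC : Cut (Side T a idx idx2) X) (hnz : ∀ x, T x ≠ 0 → X x ≠ 0) {x y z : α} (hx : T x ≠ 0)
    (hy : T y ≠ 0) (hz : T z ≠ 0) (hxy : idx x < idx y) (hyz : idx y < idx z) :
    ¬ (rel T X x = -rel T X y ∧ rel T X z = -rel T X y) := by
  have ha0 := mt (rel_eq_zero h.ha).1 (hnz a h.ha)
  have hy0 := mt (rel_eq_zero hy).1 (hnz y hy)
  have hax := h.first x hx
  have c1 := h.cut3 hX hC hy hz (by omega) hyz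
  rcases hax.eq_or_lt with e | e
  · have ra := h.par a x h.ha hx e X hX
    rw [ra] at c1
    revert c1 hy0; generalize rel T X x = u; generalize rel T X y = v; generalize rel T X z = w
    clear * -
    revert u v w; decide
  · have c2 := h.cut3 hX hC hx hy e hxy
    revert c1 c2 hy0 ha0
    generalize rel T X x = u; generalize rel T X y = v; generalize rel T X z = w
    generalize rel T X a = t
    clear * -
    revert t u v w; decide

/-- A covector on the pseudoline vanishing on `k` is determined up to sign away from the class
of `k`. -/
theorem Frame.rigid (h : Frame N T a idx idx2) {X : SignVec α} (hX : X ∈ N.covectors)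
    (hC : Cut (Side T a idx idx2) X) {k : α} (hk : T k ≠ 0) (hXk : X k = 0) :
    ∃ σ : SignType, ∀ x, T x ≠ 0 → idx x ≠ idx k →
      rel T X x = if idx x < idx k then σ else -σ := by
  have rk0 := rel_zero_of (T := T) hXk
  rcases (h.first k hk).eq_or_lt with e | e
  · have ra := h.par a k h.ha hk e X hX
    rw [rk0] at ra
    obtain ⟨w, hw, haw, -⟩ := h.exists_ne k
    have key : ∀ x y, T x ≠ 0 → T y ≠ 0 → idx a < idx x → idx x < idx y →
        rel T X x = rel T X y := by
      intro x y hx hy hax hxy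
      have c := h.cut3 hX hC hx hy hax hxy
      have x0 : rel T X x ≠ 0 := fun h0 => by
        have := h.zero_class hX hC hx hk ((rel_eq_zero hx).1 h0) hXk
        omega
      have y0 : rel T X y ≠ 0 := fun h0 => by
        have := h.zero_class hX hC hy hk ((rel_eq_zero hy).1 h0) hXk
        omega
      rw [ra] at c
      revert c x0 y0; generalize rel T X x = u; generalize rel T X y = v
      clear * -
      revert u v; decide
    refine ⟨-rel T X w, fun x hx hxk => ?_⟩
    have hax := h.first x hx
    rw [if_neg (by omega), neg_neg]
    rcases lt_trichotomy (idx x) (idx w) with f | f | f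
    · exact key x w hx hw (by omega) f
    · exact h.par x w hx hw f X hX
    · exact (key w x hw hx haw f).symm
  · have ra0 : rel T X a ≠ 0 := fun h0 => by
      have := h.zero_class hX hC h.ha hk ((rel_eq_zero h.ha).1 h0) hXk
      omega
    refine ⟨rel T X a, fun x hx hxk => ?_⟩
    rcases (h.first x hx).eq_or_lt with f | f
    · rw [if_pos (by omega), h.par a x h.ha hx f X hX]
    split_ifs with g
    · have c := h.cut3 hX hC hx hk f g
      rw [rk0] at c
      revert c ra0; generalize rel T X x = u; generalize rel T X a = v
      clear * -
      revert u v; decide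
    · have c := h.cut3 hX hC hk hx e (by omega)
      rw [rk0] at c
      revert c ra0; generalize rel T X x = u; generalize rel T X a = v
      clear * -
      revert u v; decide

/-- The walls crossed by the gallery lie on the pseudoline. -/
theorem cut_wall (ha : T a ≠ 0) {E : SignVec α} {k : α}
    (hE : ∀ y, T y ≠ 0 → (idx y < idx k → rel T E y = -1) ∧
      (idx y = idx k → rel T E y = 0) ∧ (idx k < idx y → rel T E y = 1)) :
    Cut (Side T a idx idx2) E := by
  refine cut_of_mono ha fun x y hx hy hxy => ?_
  by_cases h : idx x < idx k
  · exact Or.inl ((hE x hx).1 h)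
  · exact Or.inr ((hE y hy).2.2 (by omega))

/-- Two covectors on the pseudoline with equal support that are separated by `e`, but not opposite,
have no zeros and change sign at most once along the gallery. Hence the wall at `e`, up to sign,
eliminates `e` between them. -/
theorem Frame.elim (h : Frame N T a idx idx2) {A B : SignVec α} (hA : A ∈ N.covectors)
    (hB : B ∈ N.covectors) (hCA : Cut (Side T a idx idx2) A) (hCB : Cut (Side T a idx idx2) B)
    (hAB : ∀ x, A x = 0 ↔ B x = 0) {e : α} (he : e ∈ sep A B) :
    ∃ Z ∈ N.covectors, Z e = 0 ∧ (∀ x ∉ sep A B, Z x = A x) ∧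
      (Z = 0 ∨ Cut (Side T a idx idx2) Z) := by
  have heT := h.tope.ne_zero hA he.2
  by_cases hop : ∀ x, T x ≠ 0 → A x = -B x
  · refine ⟨0, N.zero_mem, rfl, fun x hx => ?_, Or.inl rfl⟩
    by_contra h0
    exact hx ⟨hop x (h.tope.ne_zero hA (Ne.symm h0)), Ne.symm h0⟩
  push Not at hop
  obtain ⟨x0, hx0, hne⟩ := hop
  have hre : rel T A e = - rel T B e ∧ rel T A e ≠ 0 := by
    refine ⟨by simp only [rel, he.1, neg_mul], mt (rel_eq_zero heT).1 he.2⟩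
  have agree : ∀ x, T x ≠ 0 → A x ≠ -B x → rel T A x = rel T B x ∧ rel T A x ≠ 0 := by
    intro x hx hn
    have h1 := hAB x
    have h2 : A x = B x ∧ A x ≠ 0 := by
      revert h1 hn; generalize A x = u; generalize B x = v; clear * -; revert u v; decide
    exact ⟨by simp only [rel, h2.1], mt (rel_eq_zero hx).1 h2.2⟩
  -- If both vanish at `k`, they are determined up to sign away from the class of `k`; being neither
  -- equal nor opposite there is impossible.
  have hnzA : ∀ x, T x ≠ 0 → A x ≠ 0 := by
    intro k hk hAk
    have hBk := (hAB k).1 hAk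
    obtain ⟨σ, hσ⟩ := h.rigid hA hCA hk hAk
    obtain ⟨τ, hτ⟩ := h.rigid hB hCB hk hBk
    have nk : ∀ x, T x ≠ 0 → rel T A x ≠ 0 → idx x ≠ idx k := fun x hx h0 hxk => h0 (by
      rw [h.par x k hx hk hxk A hA]; exact rel_zero_of hAk)
    have a1 := agree x0 hx0 hne
    have e1 := hσ e heT (nk e heT hre.2)
    have e2 := hτ e heT (nk e heT hre.2)
    have e3 := hσ x0 hx0 (nk x0 hx0 a1.2)
    have e4 := hτ x0 hx0 (nk x0 hx0 a1.2)
    rw [e1, e2] at hre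
    rw [e3, e4] at a1
    revert hre a1
    clear * -
    split_ifs <;> revert σ τ <;> decide
  have hnzB : ∀ x, T x ≠ 0 → B x ≠ 0 := fun x hx h0 => hnzA x hx ((hAB x).2 h0)
  obtain ⟨E, hE, hEp⟩ := h.wall e heT
  have fin : ∀ F ∈ N.covectors, (∀ x, T x ≠ 0 → A x ≠ -B x → rel T F x = rel T A x) →
      ∀ x ∉ sep A B, F x = A x := by
    intro F hF hFA x hx
    by_cases hTx : T x = 0
    · have k1 : F x = 0 := by by_contra h0; exact h.tope.ne_zero hF h0 hTx
      have k2 : A x = 0 := by by_contra h0; exact h.tope.ne_zero hA h0 hTx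
      rw [k1, k2]
    · exact eq_of_rel hTx (hFA x hTx fun hn => hx ⟨hn, hnzA x hTx⟩)
  by_cases g1 : ∀ x, T x ≠ 0 → A x ≠ -B x → rel T E x = rel T A x
  · exact ⟨E, hE, (rel_eq_zero heT).1 ((hEp e heT).2.1 rfl), fin E hE g1,
      Or.inr (cut_wall h.ha hEp)⟩
  by_cases g2 : ∀ x, T x ≠ 0 → A x ≠ -B x → rel T (-E) x = rel T A x
  · refine ⟨-E, N.neg_mem E hE, ?_, fin (-E) (N.neg_mem E hE) g2,
      Or.inr (cut_wall h.ha hEp).neg⟩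
    simpa using (rel_eq_zero heT).1 ((hEp e heT).2.1 rfl)
  -- If neither sign of the wall agrees with `A` off the separation set, there are `x` and `y` such
  -- that `A` or `B` changes sign twice along the gallery on `x`, `y`, `e`.
  exfalso
  push Not at g1 g2
  obtain ⟨x, hx, hxs, hxE⟩ := g1
  obtain ⟨y, hy, hys, hyE⟩ := g2
  have ax := agree x hx hxs
  have ay := agree y hy hys
  have ne : ∀ x, T x ≠ 0 → rel T A x = rel T B x → idx x ≠ idx e := by
    intro x hx hr hxe
    have k1 := h.par x e hx heT hxe A hA
    have k2 := h.par x e hx heT hxe B hB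
    rw [k1, k2] at hr
    exact sign_ne_neg hre.2 (hre.1.trans (by rw [hr]))
  have nx := ne x hx ax.1
  have ny := ne y hy ay.1
  have nA : ∀ {x y z}, T x ≠ 0 → T y ≠ 0 → T z ≠ 0 → idx x < idx y → idx y < idx z → _ :=
    fun {x y z} hx hy hz h1 h2 => h.noalt hA hCA hnzA (x := x) (y := y) (z := z) hx hy hz h1 h2
  have nB : ∀ {x y z}, T x ≠ 0 → T y ≠ 0 → T z ≠ 0 → idx x < idx y → idx y < idx z → _ :=
    fun {x y z} hx hy hz h1 h2 => h.noalt hB hCB hnzB (x := x) (y := y) (z := z) hx hy hz h1 h2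
  rw [rel_neg] at hyE
  have hBe : rel T B e = -rel T A e := by rw [hre.1, neg_neg]
  have hAe := hre.2
  have s1 : ∀ u : SignType, -1 ≠ u → u ≠ 0 → u = 1 := by decide
  have s2 : ∀ u : SignType, 1 ≠ u → u ≠ 0 → u = -1 := by decide
  have hxy : idx x = idx y → rel T A x = rel T A y := fun hh => h.par x y hx hy hh A hA
  rcases lt_or_gt_of_ne nx with px | px <;> rcases lt_or_gt_of_ne ny with py | py
  · rw [(hEp x hx).1 px] at hxE
    have ux := s1 _ hxE ax.2
    rw [(hEp y hy).1 py] at hyE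
    have uy := s2 _ hyE ay.2
    rcases lt_trichotomy (idx x) (idx y) with p | p | p
    · have q1 := nA hx hy heT p py
      have q2 := nB hx hy heT p py
      rw [← ax.1, ← ay.1, hBe] at q2
      rw [ux, uy] at q1 q2
      revert hAe q1 q2; generalize rel T A e = w; clear * -; revert w; decide
    · have := hxy p
      rw [ux, uy] at this; exact absurd this (by decide)
    · have q1 := nA hy hx heT p px
      have q2 := nB hy hx heT p px
      rw [← ax.1, ← ay.1, hBe] at q2
      rw [ux, uy] at q1 q2
      revert hAe q1 q2; generalize rel T A e = w; clear * -; revert w; decide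
  · rw [(hEp x hx).1 px] at hxE
    have ux := s1 _ hxE ax.2
    rw [(hEp y hy).2.2 py] at hyE
    have uy := s1 _ hyE ay.2
    have q1 := nA hx heT hy px py
    have q2 := nB hx heT hy px py
    rw [← ax.1, ← ay.1, hBe] at q2
    rw [ux, uy] at q1 q2
    revert hAe q1 q2; generalize rel T A e = w; clear * -; revert w; decide
  · rw [(hEp x hx).2.2 px] at hxE
    have ux := s2 _ hxE ax.2
    rw [(hEp y hy).1 py] at hyE
    have uy := s2 _ hyE ay.2
    have q1 := nA hy heT hx py px
    have q2 := nB hy heT hx py px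
    rw [← ax.1, ← ay.1, hBe] at q2
    rw [ux, uy] at q1 q2
    revert hAe q1 q2; generalize rel T A e = w; clear * -; revert w; decide
  · rw [(hEp x hx).2.2 px] at hxE
    have ux := s2 _ hxE ax.2
    rw [(hEp y hy).2.2 py] at hyE
    have uy := s1 _ hyE ay.2
    rcases lt_trichotomy (idx x) (idx y) with p | p | p
    · have q1 := nA heT hx hy px p
      have q2 := nB heT hx hy px p
      rw [← ax.1, ← ay.1, hBe] at q2
      rw [ux, uy] at q1 q2
      revert hAe q1 q2; generalize rel T A e = w; clear * -; revert w; decide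
    · have := hxy p
      rw [ux, uy] at this; exact absurd this (by decide)
    · have q1 := nA heT hy hx py p
      have q2 := nB heT hy hx py p
      rw [← ax.1, ← ay.1, hBe] at q2
      rw [ux, uy] at q1 q2
      revert hAe q1 q2; generalize rel T A e = w; clear * -; revert w; decide

/-- The zero set of a covector on the pseudoline, together with any further element `e`, lies in the
zero set of a nonzero covector. In particular the pseudoline contains no cocircuits. -/
theorem Frame.proper (h : Frame N T a idx idx2) {X : SignVec α} (hX : X ∈ N.covectors)
    (hC : Cut (Side T a idx idx2) X) {e : α} (he : X e ≠ 0) :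
    ∃ Z ∈ N.covectors, Z ≠ 0 ∧ Z e = 0 ∧ ∀ x, X x = 0 → Z x = 0 := by
  have heT := h.tope.ne_zero hX he
  have ne0 : ∀ {Z : SignVec α} {x : α}, rel T Z x ≠ 0 → Z ≠ 0 := by
    rintro Z x hr rfl; exact hr (rel_zero_of rfl)
  have off : ∀ {Z : SignVec α} {x : α}, Z ∈ N.covectors → T x = 0 → Z x = 0 := fun hZ hx => by
    by_contra h0; exact h.tope.ne_zero hZ h0 hx
  -- Without further zeros the wall at `e` serves. Otherwise the zeros are the class of some `k`, and
  -- a covector vanishing on `k` and `e` is found by eliminating `e` between two walls on `k`.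
  by_cases hk : ∃ k, T k ≠ 0 ∧ X k = 0
  swap
  · push Not at hk
    obtain ⟨E, hE, hEp⟩ := h.wall e heT
    refine ⟨E, hE, ?_, (rel_eq_zero heT).1 ((hEp e heT).2.1 rfl), fun x hx => off hE ?_⟩
    · have hw : ∃ w, T w ≠ 0 ∧ idx w ≠ idx e := by
        obtain ⟨w, hw, haw, -⟩ := h.exists_ne a
        by_cases f : idx a = idx e
        · exact ⟨w, hw, by omega⟩
        · exact ⟨a, h.ha, f⟩
      obtain ⟨w, hw, hwe⟩ := hw
      apply ne0 (x := w)
      rcases lt_or_gt_of_ne hwe with f | f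
      · rw [(hEp w hw).1 f]; decide
      · rw [(hEp w hw).2.2 f]; decide
    · by_contra hT
      exact hk x hT hx
  obtain ⟨k, hk, hXk⟩ := hk
  have cls : ∀ Z ∈ N.covectors, Z k = 0 → ∀ x, X x = 0 → Z x = 0 := by
    intro Z hZ hZk x hx
    by_cases hT : T x = 0
    · exact off hZ hT
    · rw [← rel_eq_zero hT, h.par x k hT hk (h.zero_class hX hC hT hk hx hXk) Z hZ]
      exact rel_zero_of hZk
  have hek : idx e ≠ idx k := fun hh => he (by
    rw [← rel_eq_zero heT, h.par e k heT hk hh X hX]; exact rel_zero_of hXk)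
  rcases (h.first k hk).eq_or_lt with f | f
  · have hae : idx a < idx e := lt_of_le_of_ne (h.first e heT) (by omega)
    obtain ⟨V, hV, hVa, hVp⟩ := h.wall2 e heT hae
    refine ⟨V, hV, ?_, (rel_eq_zero heT).1 ((hVp e heT hae).2.1 rfl), cls V hV ?_⟩
    · obtain ⟨w, hw, haw, hwe⟩ := h.exists_ne e
      apply ne0 (x := w)
      rcases lt_or_gt_of_ne hwe with g | g
      · rw [(hVp w hw haw).1 g]; decide
      · rw [(hVp w hw haw).2.2 g]; decide
    · rw [← rel_eq_zero hk, ← h.par a k h.ha hk f V hV]; exact rel_zero_of hVa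
  · obtain ⟨V, hV, hVa, hVp⟩ := h.wall2 k hk f
    have hVk := (rel_eq_zero hk).1 ((hVp k hk f).2.1 rfl)
    by_cases hVe : V e = 0
    · refine ⟨V, hV, ?_, hVe, cls V hV hVk⟩
      obtain ⟨w, hw, haw, hwk⟩ := h.exists_ne k
      apply ne0 (x := w)
      rcases lt_or_gt_of_ne hwk with g | g
      · rw [(hVp w hw haw).1 g]; decide
      · rw [(hVp w hw haw).2.2 g]; decide
    · obtain ⟨E, hE, hEp⟩ := h.wall k hk
      have hEk := (rel_eq_zero hk).1 ((hEp k hk).2.1 rfl)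
      have hEe : E e ≠ 0 := by
        rw [Ne, ← rel_eq_zero heT]
        rcases lt_or_gt_of_ne hek with g | g
        · rw [(hEp e heT).1 g]; decide
        · rw [(hEp e heT).2.2 g]; decide
      have main : ∀ W ∈ N.covectors, W a = 0 → W k = 0 → e ∈ sep E W →
          ∃ Z ∈ N.covectors, Z ≠ 0 ∧ Z e = 0 ∧ ∀ x, X x = 0 → Z x = 0 := by
        intro W hW hWa hWk hs
        obtain ⟨Z, hZ, hZe, hZo⟩ := N.elim E hE W hW e hs
        refine ⟨Z, hZ, ?_, hZe, cls Z hZ ?_⟩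
        · have hEa : E a ≠ 0 := by
            rw [Ne, ← rel_eq_zero h.ha, (hEp a h.ha).1 f]; decide
          have := hZo a (by rw [mem_sep, hWa, neg_zero]; exact fun hh => hh.2 hh.1)
          rw [compose_of_ne hEa] at this
          rintro rfl
          exact hEa this.symm
        · rw [hZo k (by rw [mem_sep]; exact fun hh => hh.2 hEk), compose_of_eq hEk, hWk]
      rcases sign_cases_of (E e) (V e) hEe with g | g | g
      · exact absurd g hVe
      · exact main (-V) (N.neg_mem V hV) (by simpa using hVa) (by simpa using hVk)
          ⟨by rw [Pi.neg_apply, neg_neg, g], hEe⟩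
      · exact main V hV hVa hVk ⟨by rw [g, neg_neg], hEe⟩

/-- In rank three there is a pseudoline through any two topes. -/
theorem exists_side_three {T U : SignVec α} (hT : IsTope N T) (hU : IsTope N U)
    (hdep : ∀ S ⊆ N.ground, S.ncard = 4 → ∃ V, N.IsVector V ∧ V ≠ 0 ∧ supp V ⊆ S)
    (hrk : ∃ I, CIndep N ∅ I ∧ I.ncard = 3) :
    ∃ Pos, IsSide N Pos ∧ Cut Pos T ∧ Cut Pos U := by
  obtain ⟨idx, K, hidx, hK⟩ := exists_gallery hT hU
  obtain ⟨a, idx2, h⟩ := exists_frame hT hidx hdep hrk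
  refine ⟨Side T a idx idx2, ⟨fun X hX Y hY hs hXY b c hb hc hab hbc => ?_,
    fun X hX hX0 => h.total hX hX0, h.side_zero,
    fun A hA B hB hCA hCB hAB e he => h.elim hA hB hCA hCB hAB he,
    fun X hX hC e he => h.proper hX hC he⟩,
    cut_of_mono h.ha fun x y _ hy _ => Or.inr (rel_self hy),
    cut_of_mono h.ha fun x y hx hy hxy => ?_⟩
  · have s : ∀ x (σ : SignType), σ ≠ 0 → rel T X x = σ → rel T Y x = σ := by
      intro x σ hσ hx
      have : X x ≠ 0 := fun h0 => hσ (by rw [← hx]; exact rel_zero_of h0)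
      rw [← hx]; simp only [rel, hXY x this]
    have s1 := fun x => s x 1 (by decide)
    have s2 := fun x => s x (-1) (by decide)
    have := hs b c hb hc hab hbc
    exact ⟨fun e => (this.1 e).imp (s1 _) (Or.imp (s2 _) (s1 _)),
      fun e => (this.2 e).imp (s2 _) (Or.imp (s1 _) (s2 _))⟩
  · by_cases g : idx x < K
    · exact Or.inl (rel_of_eq_neg hx ((hK x hx).1 g))
    · exact Or.inr (rel_of_eq hy ((hK y hy).2 (by omega)))

end SideThreeB

section LowRank

variable {α : Type*} {N : OrientedMatroid α}

/-! ### Extensions of oriented matroids of rank at most three, positive on given topes -/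

theorem IsSide.neg {Pos : SignVec α → Prop} (h : IsSide N Pos) : IsSide N fun X => Pos (-X) := by
  have hC : ∀ X, Cut (fun X => Pos (-X)) X ↔ Cut Pos X := fun X => by
    simp only [Cut, neg_neg]; exact and_comm
  refine ⟨fun X hX Y hY hP hXY => h.up _ (N.neg_mem X hX) _ (N.neg_mem Y hY) hP fun a ha => ?_,
    fun X hX h0 => ?_, fun h0 => h.zero ?_, fun A hA B hB hCA hCB hAB e he => ?_,
    fun X hX hCX e he => h.proper X hX ((hC X).1 hCX) e he⟩
  · have ha' : X a ≠ 0 := fun h0 => ha (by simp [h0])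
    simp [hXY a ha']
  · simp only [neg_neg]; exact (h.total X hX h0).symm
  · have : (-(0 : SignVec α)) = 0 := funext fun _ => rfl
    rwa [this] at h0
  · obtain ⟨Z, hZ, h1, h2, h3⟩ := h.elim A hA B hB ((hC A).1 hCA) ((hC B).1 hCB) hAB e he
    exact ⟨Z, hZ, h1, h2, h3.imp id (hC Z).2⟩

/-- Three elements dependent in rank two, with the dependence expressed relative to `T`. -/
theorem dep_three (hdep : ∀ S ⊆ N.ground, S.ncard = 3 → ∃ V, N.IsVector V ∧ V ≠ 0 ∧ supp V ⊆ S)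
    {T : SignVec α} (hT : IsTope N T) {x y z : α} (hx : T x ≠ 0) (hy : T y ≠ 0) (hz : T z ≠ 0)
    (h1 : x ≠ y) (h2 : x ≠ z) (h3 : y ≠ z) :
    ∃ p q r : SignType, (p ≠ 0 ∨ q ≠ 0 ∨ r ≠ 0) ∧
      ∀ X ∈ N.covectors, Orth4 p q r 0 (rel T X x) (rel T X y) (rel T X z) 0 := by
  obtain ⟨V, hV, hV0, hVs⟩ := hdep {x, y, z} (by
    have g : ∀ u, T u ≠ 0 → u ∈ N.ground := fun u hu => N.supp_subset T hT.1 hu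
    intro u hu
    rcases hu with rfl | rfl | rfl
    exacts [g _ hx, g _ hy, g _ hz]) (by
    rw [Set.ncard_insert_of_notMem, Set.ncard_pair h3]
    simp [h1, h2])
  refine ⟨V x * T x, V y * T y, V z * T z, ?_, fun X hX => ?_⟩
  · by_contra hc
    push Not at hc
    apply hV0
    funext u
    by_contra hu
    rcases hVs hu with rfl | rfl | rfl
    exacts [hu ((rel_eq_zero hx).1 hc.1), hu ((rel_eq_zero hy).1 hc.2.1),
      hu ((rel_eq_zero hz).1 hc.2.2)]
  · have ho := (orth_iff _ _).1 (hV.2 X hX)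
    have e : ∀ u, T u ≠ 0 → V u * T u * rel T X u = V u * X u := fun u hu => by
      simp only [rel]; revert hu; generalize T u = t; generalize V u = v
      generalize X u = s; revert s t v; decide
    have key : ∀ σ : SignType, σ ≠ 0 → ((∃ u, V u * X u = σ) ↔
        (V x * X x = σ ∨ V y * X y = σ ∨ V z * X z = σ ∨ (0 : SignType) * 0 = σ)) := by
      intro σ hσ
      constructor
      · rintro ⟨u, hu⟩
        have : V u ≠ 0 := fun h => by rw [h, zero_mul] at hu; exact hσ hu.symm
        rcases hVs this with rfl | rfl | rfl
        exacts [Or.inl hu, Or.inr (Or.inl hu), Or.inr (Or.inr (Or.inl hu))]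
      · rintro (h | h | h | h)
        exacts [⟨_, h⟩, ⟨_, h⟩, ⟨_, h⟩, absurd h.symm hσ]
    rw [key 1 (by decide), key (-1) (by decide)] at ho
    simp only [Orth4, e x hx, e y hy, e z hz]
    exact ho

/-- In rank two some new element cuts a given tope `T`: it is the first wall crossed by a gallery
from `T` to `-T`, perturbed slightly. -/
theorem exists_side_two {T : SignVec α} (hT : IsTope N T)
    (hdep : ∀ S ⊆ N.ground, S.ncard = 3 → ∃ V, N.IsVector V ∧ V ≠ 0 ∧ supp V ⊆ S)
    (hrk : ∃ I, CIndep N ∅ I ∧ I.ncard = 2) :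
    ∃ Pos, IsSide N Pos ∧ Cut Pos T := by
  classical
  obtain ⟨idx, -, hidx, -⟩ := exists_gallery hT hT
  obtain ⟨I, hI, hI2⟩ := hrk
  have hne : ∃ k x, T x ≠ 0 ∧ idx x = k := by
    obtain ⟨i, hi⟩ : I.Nonempty := by
      rw [← Set.ncard_pos (Set.finite_of_ncard_pos (by omega))]; omega
    obtain ⟨Y, hY, -, hYi, -⟩ := hI i hi
    exact ⟨idx i, i, hT.ne_zero hY (by rw [hYi]; decide), rfl⟩
  obtain ⟨a, ha, hak⟩ := Nat.find_spec hne
  have hfirst : ∀ x, T x ≠ 0 → idx a ≤ idx x := fun x hx => by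
    rw [hak]; exact Nat.find_min' hne ⟨x, hx, rfl⟩
  have par : ∀ x y, T x ≠ 0 → T y ≠ 0 → idx x = idx y → ∀ X ∈ N.covectors,
      rel T X x = rel T X y := fun x y hx hy h X hX => hidx.2 x y hx hy h X hX
  have wall : ∀ x, T x ≠ 0 → ∃ E ∈ N.covectors, ∀ y, T y ≠ 0 → (idx y < idx x → rel T E y = -1) ∧
      (idx y = idx x → rel T E y = 0) ∧ (idx x < idx y → rel T E y = 1) := fun x hx => by
    obtain ⟨F, hF, hFp⟩ := hidx.1 x hx
    exact ⟨F, hF, fun y hy => ⟨fun h => rel_of_eq_neg hy ((hFp y hy).1 h),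
      fun h => rel_zero_of ((hFp y hy).2.1 h), fun h => rel_of_eq hy ((hFp y hy).2.2 h)⟩⟩
  obtain ⟨c₀, hc₀, hac₀⟩ : ∃ c, T c ≠ 0 ∧ idx a < idx c := by
    obtain ⟨J, -, hJ, hJc⟩ := hI.exchange a
    obtain ⟨c, hc⟩ : J.Nonempty := by
      rw [← Set.ncard_pos (Set.finite_of_ncard_pos (by omega))]; omega
    obtain ⟨Y, hY, hYz, hYc, -⟩ := hJ c hc
    have hTc := hT.ne_zero hY (show Y c ≠ 0 by rw [hYc]; decide)
    refine ⟨c, hTc, lt_of_le_of_ne (hfirst c hTc) fun h => ?_⟩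
    have := par a c ha hTc h Y hY
    rw [rel_zero_of (hYz a (by simp))] at this
    have := (rel_eq_zero hTc).1 this.symm
    rw [hYc] at this
    exact absurd this (by decide)
  have zero_two : ∀ X ∈ N.covectors, rel T X a = 0 → ∀ c, T c ≠ 0 → idx a < idx c →
      rel T X c = 0 → X = 0 := by
    intro X hX hXa c hc hac hXc
    funext w
    show X w = 0
    by_contra hw0
    have hw := hT.ne_zero hX hw0
    apply hw0
    rw [← rel_eq_zero hw]
    by_cases e1 : idx a = idx w
    · rw [← par a w ha hw e1 X hX, hXa]
    by_cases e2 : idx c = idx w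
    · rw [← par c w hc hw e2 X hX, hXc]
    have haw := lt_of_le_of_ne (hfirst w hw) e1
    obtain ⟨p, q, r, hn, ho⟩ := dep_three hdep hT ha hc hw (by rintro rfl; omega)
      (by rintro rfl; omega) (by rintro rfl; omega)
    obtain ⟨F, hF, hFp⟩ := wall a ha
    have o1 := ho F hF
    have o2 := ho X hX
    have o3 := ho T hT.1
    rw [(hFp a ha).2.1 rfl, (hFp c hc).2.2 hac, (hFp w hw).2.2 haw] at o1
    rw [hXa, hXc] at o2
    rw [rel_self ha, rel_self hc, rel_self hw] at o3
    have key : ∀ p q r : SignType, (p ≠ 0 ∨ q ≠ 0 ∨ r ≠ 0) → Orth4 p q r 0 0 1 1 0 →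
      Orth4 p q r 0 1 1 1 0 → ∀ x, Orth4 p q r 0 0 0 x 0 → x = 0 := by decide
    exact key p q r hn o1 o3 _ o2
  have updown : ∀ X ∈ N.covectors, rel T X a = 0 → ∀ c d, T c ≠ 0 → T d ≠ 0 → idx a < idx c →
      idx c < idx d → (rel T X c ≠ 1 ∧ rel T X d ≠ -1 ∨ rel T X c ≠ -1 ∧ rel T X d ≠ 1) →
      X = 0 := by
    intro X hX hXa c d hc hd hac hcd hs
    obtain ⟨p, q, r, hn, ho⟩ := dep_three hdep hT ha hc hd (by rintro rfl; omega)
      (by rintro rfl; omega) (by rintro rfl; omega)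
    obtain ⟨F, hF, hFp⟩ := wall a ha
    obtain ⟨E, hE, hEp⟩ := wall c hc
    have o1 := ho F hF
    have o2 := ho X hX
    have o3 := ho E hE
    rw [(hFp a ha).2.1 rfl, (hFp c hc).2.2 hac, (hFp d hd).2.2 (by omega)] at o1
    rw [hXa] at o2
    rw [(hEp a ha).1 hac, (hEp c hc).2.1 rfl, (hEp d hd).2.2 hcd] at o3
    have key : ∀ p q r : SignType, (p ≠ 0 ∨ q ≠ 0 ∨ r ≠ 0) → Orth4 p q r 0 0 1 1 0 →
      Orth4 p q r 0 (-1) 0 1 0 → ∀ x y, (x ≠ 1 ∧ y ≠ -1 ∨ x ≠ -1 ∧ y ≠ 1) →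
      Orth4 p q r 0 0 x y 0 → x = 0 := by decide
    exact zero_two X hX hXa c hc hac (key p q r hn o1 o3 _ _ hs o2)
  have z0 : ∀ x, rel T 0 x = 0 := fun x => by simp [rel]
  have s1 : ∀ x : SignType, -x = 1 ↔ x = -1 := by decide
  have s2 : ∀ x : SignType, -x = -1 ↔ x = 1 := by decide
  let Pos : SignVec α → Prop := fun X =>
    ∀ c, T c ≠ 0 → idx a < idx c → rel T X a = -1 ∨ rel T X c = 1
  have pos_neg : ∀ X, Pos (-X) ↔
      ∀ c, T c ≠ 0 → idx a < idx c → rel T X a = 1 ∨ rel T X c = -1 := fun X => by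
    simp only [Pos, rel_neg, s1, s2]
  have cut : ∀ X ∈ N.covectors, Cut Pos X →
      rel T X a ≠ 0 ∧ ∀ x, T x ≠ 0 → rel T X x = rel T X a := by
    intro X hX hC
    have k1 := hC.1
    have k2 := (pos_neg X).1 hC.2
    refine ⟨?_, fun x hx => ?_⟩
    · have := k1 c₀ hc₀ hac₀
      have := k2 c₀ hc₀ hac₀
      revert this; revert this; generalize rel T X a = u; generalize rel T X c₀ = v
      clear * -
      revert u v; decide
    · rcases (hfirst x hx).eq_or_lt with e | e
      · exact (par a x ha hx e X hX).symm
      · have := k1 x hx e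
        have := k2 x hx e
        revert this; revert this; generalize rel T X a = u; generalize rel T X x = v
        clear * -
        revert u v; decide
  refine ⟨Pos, ⟨fun X hX Y hY hs hXY c hc hac => ?_, fun X hX hX0 => ?_, fun h0 => ?_,
    fun A hA B hB hCA hCB hAB e he => ?_, fun X hX hC e he => ?_⟩,
    fun c hc _ => Or.inr (rel_self hc), (pos_neg T).2 fun c hc _ => Or.inl (rel_self ha)⟩
  · have s : ∀ x (σ : SignType), σ ≠ 0 → rel T X x = σ → rel T Y x = σ := by
      intro x σ hσ hx
      have : X x ≠ 0 := fun h0 => hσ (by rw [← hx]; exact rel_zero_of h0)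
      rw [← hx]; simp only [rel, hXY x this]
    exact (hs c hc hac).imp (s a (-1) (by decide)) (s c 1 (by decide))
  · by_contra hn
    rw [pos_neg] at hn
    simp only [Pos] at hn
    push Not at hn
    obtain ⟨⟨c, hc, hac, c1, c2⟩, d, hd, had, d1, d2⟩ := hn
    have hXa : rel T X a = 0 := by
      revert c1 d1; generalize rel T X a = u; clear * -; revert u; decide
    apply hX0
    rcases lt_trichotomy (idx c) (idx d) with e | e | e
    · exact updown X hX hXa c d hc hd hac e (Or.inl ⟨c2, d2⟩)
    · have hp := par c d hc hd e X hX
      refine zero_two X hX hXa c hc hac ?_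
      rw [← hp] at d2
      revert c2 d2; generalize rel T X c = u; clear * -; revert u; decide
    · exact updown X hX hXa d c hd hc had e (Or.inr ⟨d2, c2⟩)
  · have := h0 c₀ hc₀ hac₀
    rw [z0, z0] at this
    exact absurd this (by decide)
  · have kA := cut A hA hCA
    have kB := cut B hB hCB
    have heT := hT.ne_zero hA he.2
    have hop : rel T A a = - rel T B a := by
      rw [← kA.2 e heT, ← kB.2 e heT]; simp only [rel, he.1, neg_mul]
    refine ⟨0, N.zero_mem, rfl, fun x hx => ?_, Or.inl rfl⟩
    by_contra h0
    have hTx := hT.ne_zero hA (Ne.symm h0)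
    refine hx ⟨?_, Ne.symm h0⟩
    rw [← Pi.neg_apply]
    apply eq_of_rel hTx
    rw [kA.2 x hTx, rel_neg, kB.2 x hTx, hop]
  · have k := cut X hX hC
    have heT := hT.ne_zero hX he
    obtain ⟨E, hE, hEp⟩ := wall e heT
    refine ⟨E, hE, ?_, (rel_eq_zero heT).1 ((hEp e heT).2.1 rfl), fun x hx => ?_⟩
    · rintro rfl
      obtain ⟨w, hw, hwe⟩ : ∃ w, T w ≠ 0 ∧ idx w ≠ idx e := by
        by_cases f : idx a = idx e
        · exact ⟨c₀, hc₀, by omega⟩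
        · exact ⟨a, ha, f⟩
      rcases lt_or_gt_of_ne hwe with g | g
      · have := (hEp w hw).1 g
        rw [z0] at this
        exact absurd this (by decide)
      · have := (hEp w hw).2.2 g
        rw [z0] at this
        exact absurd this (by decide)
    · by_contra h0
      have hTx := hT.ne_zero hE h0
      exact k.1 (by rw [← k.2 x hTx]; exact rel_zero_of hx)

/-- In rank `m ≤ 3`, any `m` topes lie on the positive side of a suitable new element. -/
theorem exists_extension_low (N : OrientedMatroid α) {h : α} (hh : h ∉ N.ground) (m : ℕ)
    (hm : m ≤ 3) (T : Fin m → SignVec α) (hT : ∀ i, IsTope N (T i))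
    (hdep : m ≠ 0 → ∀ S ⊆ N.ground, S.ncard = m + 1 → ∃ V, N.IsVector V ∧ V ≠ 0 ∧ supp V ⊆ S)
    (hrk : m ≠ 0 → ∃ I, CIndep N ∅ I ∧ I.ncard = m) (hα : ∃ e, e ≠ h) :
    ∃ Nh, IsExtension N h Nh ∧
      ∀ i, ∃ X ∈ Nh.covectors, X h = 1 ∧ ∀ e, e ≠ h → X e = T i e := by
  have sq : ∀ x : SignType, x ≠ 0 → x * x = 1 := by decide
  have side : ∀ Pos, IsSide N Pos → (∀ i, Pos (T i)) → ∃ Nh, IsExtension N h Nh ∧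
      ∀ i, ∃ X ∈ Nh.covectors, X h = 1 ∧ ∀ e, e ≠ h → X e = T i e := by
    intro Pos hP hTP
    obtain ⟨Nh, hN, hX⟩ := exists_extension_of_side N hh hP
    exact ⟨Nh, hN, fun i => hX _ (hT i).1 (hTP i)⟩
  have parallel : ∀ e ∈ N.ground, ∀ s : SignType, s ≠ 0 → (∀ i, T i e = s) →
      ∃ Nh, IsExtension N h Nh ∧
      ∀ i, ∃ X ∈ Nh.covectors, X h = 1 ∧ ∀ e, e ≠ h → X e = T i e := by
    intro e he s hs hTs
    obtain ⟨Nh, hN, hX⟩ := exists_extension_parallel N hh (fun h' => hh (h' ▸ he)) s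
    refine ⟨Nh, hN, fun i => ?_⟩
    obtain ⟨X, hX1, hX2, hX3⟩ := hX _ (hT i).1
    exact ⟨X, hX1, by rw [hX2, hTs i, sq s hs], hX3⟩
  obtain rfl | rfl | rfl | rfl : m = 0 ∨ m = 1 ∨ m = 2 ∨ m = 3 := by omega
  · obtain ⟨e, he⟩ := hα
    obtain ⟨Nh, hN, -⟩ := exists_extension_parallel N hh he 0
    exact ⟨Nh, hN, fun i => i.elim0⟩
  · obtain ⟨I, hI, hI1⟩ := hrk (by decide)
    obtain ⟨i, hi⟩ : I.Nonempty := by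
      rw [← Set.ncard_pos (Set.finite_of_ncard_pos (by omega))]; omega
    obtain ⟨Y, hY, -, hYi, -⟩ := hI i hi
    have hTi := (hT 0).ne_zero hY (show Y i ≠ 0 by rw [hYi]; decide)
    exact parallel i (N.supp_subset _ hY (by rw [mem_supp, hYi]; decide)) _ hTi fun j => by
      rw [Subsingleton.elim j 0]
  · by_cases he : ∃ e, T 0 e ≠ 0 ∧ T 1 e = T 0 e
    · obtain ⟨e, he0, he1⟩ := he
      refine parallel e (N.supp_subset _ (hT 0).1 he0) _ he0 fun j => ?_
      fin_cases j
      · rfl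
      · exact he1
    -- Topes that agree nowhere are opposite, so both lie on any pseudohyperplane cutting one of them.
    · push Not at he
      obtain ⟨Pos, hP, hC⟩ := exists_side_two (hT 0) (hdep (by decide)) (hrk (by decide))
      have hop : T 1 = -T 0 := by
        funext x
        rw [Pi.neg_apply]
        by_cases h0 : T 0 x = 0
        · by_contra h1
          rw [h0, neg_zero] at h1
          exact (hT 0).ne_zero (hT 1).1 h1 h0
        · have h1 := he x h0
          have h2 := (hT 1).ne_zero (hT 0).1 h0
          revert h0 h1 h2; generalize T 0 x = u; generalize T 1 x = v
          clear * -
          revert u v; decide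
      refine side Pos hP fun j => ?_
      fin_cases j
      · exact hC.1
      · show Pos (T 1)
        rw [hop]; exact hC.2
  · obtain ⟨Pos, hP, h0, h1⟩ := exists_side_three (hT 0) (hT 1) (hdep (by decide))
      (hrk (by decide))
    have hne : T 2 ≠ 0 := by
      intro hz
      obtain ⟨I, hI, hI1⟩ := hrk (by decide)
      obtain ⟨i, hi⟩ : I.Nonempty := by
        rw [← Set.ncard_pos (Set.finite_of_ncard_pos (by omega))]; omega
      obtain ⟨Y, hY, -, hYi, -⟩ := hI i hi
      exact (hT 2).ne_zero hY (show Y i ≠ 0 by rw [hYi]; decide) (by rw [hz]; rfl)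
    -- The third tope decides which of the two sides is taken as the positive one.
    rcases hP.total _ (hT 2).1 hne with h2 | h2
    · refine side Pos hP fun j => ?_
      fin_cases j
      exacts [h0.1, h1.1, h2]
    · refine side _ hP.neg fun j => ?_
      fin_cases j
      exacts [h0.2, h1.2, h2]

end LowRank

section Program

variable {M Mf : OrientedMatroid ℕ} {n r : ℕ}

/-! ### Oriented matroid programs: nodes, and edges leaving a node -/

/-- `Y` is a covector of `M` representing the node `v`: it is `+` at `g`, nonnegative away from `f`,
with zero set `v` in `[n]`, and no nonzero covector of `M ∖ f` vanishes on `v ∪ {g}`. -/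
structure IsNodeLift (M : OrientedMatroid ℕ) (n : ℕ) (v : Set ℕ) (Y : SignVec ℕ) : Prop where
  mem : Y ∈ M.covectors
  rhs : Y (n + 1) = 1
  nonneg : ∀ e, e ≠ n → Y e = 0 ∨ Y e = 1
  mem_iff : ∀ e, e ∈ v ↔ e < n ∧ Y e = 0
  min : ∀ Z ∈ M.covectors, Z (n + 1) = 0 → (∀ e ∈ v, Z e = 0) → ∀ e, e ≠ n → Z e = 0

theorem IsProgram.lt_of_mem (hP : IsProgram M Mf n r) {e : ℕ} (he : e ∈ M.ground) (h1 : e ≠ n)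
    (h2 : e ≠ n + 1) : e < n := by
  rw [hP.1] at he
  rcases he with h | rfl | rfl
  exacts [h, absurd rfl h1, absurd rfl h2]

theorem IsProgram.covectors (hP : IsProgram M Mf n r) :
    Mf.covectors = restrictAway {n} '' M.covectors := covectors_of_isDeletion hP.2.2.1

/-- A cocircuit of `M ∖ f` certifying a node lifts to `M`. -/
theorem IsProgram.lift (hP : IsProgram M Mf n r) {W : SignVec ℕ} (hW : Mf.IsCocircuit W)
    (hn : Nonneg W) : ∃ Y, IsNodeLift M n (nset n \ supp W) Y ∧ ∀ e, e ≠ n → Y e = W e := by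
  have hWm := hW.1
  rw [hP.covectors] at hWm
  obtain ⟨Y, hY, hYW⟩ := hWm
  have hYe : ∀ e, e ≠ n → Y e = W e := fun e he => by rw [← hYW, res_not_mem (by simpa using he)]
  have hg : W (n + 1) = 1 := (hn (n + 1)).resolve_right (hP.2.2.2.1 W hW hn)
  have hmem : ∀ e, e ∈ nset n \ supp W ↔ e < n ∧ Y e = 0 := by
    intro e
    constructor
    · rintro ⟨h1, h2⟩
      refine ⟨h1, ?_⟩
      rw [hYe e (ne_of_lt h1)]
      exact not_not.1 h2
    · rintro ⟨h1, h2⟩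
      refine ⟨h1, fun h => h ?_⟩
      rw [← hYe e (by omega), h2]
  refine ⟨Y, ⟨hY, by rw [hYe _ (by omega), hg], fun e he => by
    rw [hYe e he]; exact (hn e).symm, hmem, fun Z hZ hZg hZv e he => ?_⟩, hYe⟩
  have hZf : restrictAway {n} Z ∈ Mf.covectors := by rw [hP.covectors]; exact ⟨Z, hZ, rfl⟩
  have hsub : supp (restrictAway {n} Z) ⊆ supp W := by
    intro a ha
    have han : a ≠ n := by rintro rfl; exact ha (res_mem rfl)
    have haZ : Z a ≠ 0 := by rwa [mem_supp, res_not_mem (by simpa using han)] at ha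
    have hag : a ≠ n + 1 := by rintro rfl; exact haZ hZg
    by_contra hW0
    exact haZ (hZv a ⟨hP.lt_of_mem (M.supp_subset Z hZ haZ) han hag, hW0⟩)
  by_contra hZe
  have hne : restrictAway {n} Z ≠ 0 := fun h => hZe (by
    rw [← res_not_mem (A := {n}) (X := Z) (by simpa using he), h]; rfl)
  have := hW.2.2 _ hZf hne hsub
  have hg' : n + 1 ∈ supp W := by rw [mem_supp, hg]; decide
  rw [← this, mem_supp, res_not_mem (by simp)] at hg'
  exact hg' hZg

theorem IsProgram.exists_lift (hP : IsProgram M Mf n r) {v : Set ℕ} (hv : IsNode Mf n v) :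
    ∃ Y, IsNodeLift M n v Y := by
  obtain ⟨W, hW, hn, rfl⟩ := hv
  obtain ⟨Y, hY, -⟩ := hP.lift hW hn
  exact ⟨Y, hY⟩

/-- A covector of `M` that is nonnegative away from `f` has a node in each of its faces. -/
theorem IsProgram.exists_node_le (hP : IsProgram M Mf n r) {P : SignVec ℕ} (hPm : P ∈ M.covectors)
    (hPn : ∀ e, e ≠ n → P e = 0 ∨ P e = 1) {a : ℕ} (ha : a ≠ n) (hPa : P a ≠ 0) :
    ∃ w W, IsNode Mf n w ∧ IsNodeLift M n w W ∧ W a = 1 ∧ ∀ e, e ≠ n → W e = 0 ∨ W e = P e := by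
  have hPf : restrictAway {n} P ∈ Mf.covectors := by rw [hP.covectors]; exact ⟨P, hPm, rfl⟩
  have hre : ∀ e, e ≠ n → restrictAway {n} P e = P e := fun e he => res_not_mem (by simpa using he)
  obtain ⟨W, hW, hWa, hWle⟩ := exists_cocircuit_le Mf hPf (e := a) (by rwa [hre a ha])
  have hWn : Nonneg W := by
    intro e
    rcases hWle e with h | h
    · exact Or.inr h
    · by_cases he : e = n
      · subst he; right; rw [h]; exact res_mem rfl
      · rw [h, hre e he]; exact (hPn e he).symm
  obtain ⟨Y, hY, hYW⟩ := hP.lift hW hWn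
  refine ⟨_, Y, ⟨W, hW, hWn, rfl⟩, hY, ?_, fun e he => ?_⟩
  · rw [hYW a ha, hWa, hre a ha]; exact (hPn a ha).resolve_left hPa
  · rw [hYW e he]; exact (hWle e).imp id fun h => by rw [h, hre e he]

/-- The direction from the node `w` to the node `v`, obtained by eliminating `g`. -/
theorem IsNodeLift.direction {v w : Set ℕ} {Y W : SignVec ℕ} (hY : IsNodeLift M n v Y)
    (hW : IsNodeLift M n w W) : ∃ X ∈ M.covectors, X (n + 1) = 0 ∧
      (∀ e, Y e = 0 → X e = -W e) ∧ ∀ e, W e = 0 → X e = Y e := by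
  have hg : n + 1 ∈ sep Y (-W) := by
    rw [OMHK.mem_sep, Pi.neg_apply, hY.rhs, hW.rhs]; decide
  obtain ⟨X, hX, hXg, hXs⟩ := M.elim Y hY.mem (-W) (M.neg_mem W hW.mem) (n + 1) hg
  refine ⟨X, hX, hXg, fun e he => ?_, fun e he => ?_⟩
  · rw [hXs e (fun h => h.2 he), compose_of_eq he, Pi.neg_apply]
  · rw [hXs e (fun h => h.2 (by rw [h.1, Pi.neg_apply, he]; rfl))]
    by_cases h0 : Y e = 0
    · rw [compose_of_eq h0, Pi.neg_apply, he, h0]; rfl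
    · rw [compose_of_ne h0]

theorem IsNodeLift.exists_not_mem {v w : Set ℕ} {Y W : SignVec ℕ} (hY : IsNodeLift M n v Y)
    (hW : IsNodeLift M n w W) (hne : v ≠ w) : ∃ e ∈ v, e ∉ w := by
  by_contra hc
  push Not at hc
  obtain ⟨X, hX, hXg, h1, h2⟩ := hY.direction hW
  have hX0 := hY.min X hX hXg fun e he => by
    rw [h1 e ((hY.mem_iff e).1 he).2, ((hW.mem_iff e).1 (hc e he)).2]; rfl
  refine hne (Set.Subset.antisymm hc fun e he => ?_)
  have := (hW.mem_iff e).1 he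
  rw [hY.mem_iff]
  exact ⟨this.1, by rw [← h2 e this.2, hX0 e (by omega)]⟩

/-- If a direction at the node `w` stays weakly feasible, then some edge leaves `w` along which the
objective has the same sign. -/
theorem IsProgram.exists_edge (hP : IsProgram M Mf n r)
    (hcol : ∀ Z ∈ M.covectors, (∀ e, e ≠ n → Z e = 0) → Z = 0)
    {w : Set ℕ} {Y X : SignVec ℕ} (hY : IsNodeLift M n w Y) (hX : X ∈ M.covectors)
    (hXg : X (n + 1) = 0) (hXw : ∀ e ∈ w, X e = 0 ∨ X e = 1) (hXf : X n ≠ 0) :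
    ∃ w' D, IsNode Mf n w' ∧ w ≠ w' ∧ M.rk (w ∩ w') = r - 2 ∧ M.IsCocircuit D ∧ D (n + 1) = 0 ∧
      (∀ e ∈ w \ w', D e = 1) ∧ (∀ e ∈ w' \ w, D e = -1) ∧ (∀ e ∈ w ∩ w', D e = 0) ∧
      D n = X n := by
  have hwn : ∀ e ∈ w, e < n := fun e he => ((hY.mem_iff e).1 he).1
  have hY0 : ∀ e ∈ w, Y e = 0 := fun e he => ((hY.mem_iff e).1 he).2
  have hzero : ∀ Z ∈ M.covectors, Z (n + 1) = 0 → (∀ e ∈ w, Z e = 0) → Z = 0 :=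
    fun Z hZ h1 h2 => hcol Z hZ (hY.min Z hZ h1 h2)
  -- Only the constraints tight at `w`, together with `f`, matter for the choice of an edge.
  obtain ⟨D, hD, hDg, hDw, hDf, hU⟩ : ∃ D ∈ M.covectors, D (n + 1) = 0 ∧
      (∀ e ∈ w, D e = 0 ∨ D e = 1) ∧ D n = X n ∧
      ∀ Z ∈ M.covectors, Z (n + 1) = 0 → Z n = 0 → (∀ e ∈ w, D e = 0 → Z e = 0) → Z = 0 := by
    let A : Set ℕ := {e | e ∉ w ∧ e ≠ n}
    let N := del (con M {n + 1}) A
    have hmemN : ∀ Z, Z ∈ N.covectors ↔ ∃ B ∈ M.covectors, B (n + 1) = 0 ∧ restrictAway A B = Z := by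
      intro Z
      constructor
      · rintro ⟨B, hB, rfl⟩
        exact ⟨B, hB.1, hB.2 _ rfl, rfl⟩
      · rintro ⟨B, hB, hBg, rfl⟩
        exact ⟨B, ⟨hB, fun a ha => by rw [ha, hBg]⟩, rfl⟩
    have hnA : n ∉ A := fun h => h.2 rfl
    have hwA : ∀ e ∈ w, e ∉ A := fun e he h => h.1 he
    obtain ⟨D₀, hD₀, hD₀f, hD₀le⟩ := exists_cocircuit_le N ((hmemN _).2 ⟨X, hX, hXg, rfl⟩)
      (e := n) (by rwa [res_not_mem hnA])
    rw [res_not_mem hnA] at hD₀f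
    obtain ⟨D, hD, hDg, hDD⟩ := (hmemN _).1 hD₀.1
    refine ⟨D, hD, hDg, fun e he => ?_, by rw [← hD₀f, ← hDD, res_not_mem hnA], ?_⟩
    · have h1 := hD₀le e
      rw [← hDD, res_not_mem (hwA e he), res_not_mem (hwA e he)] at h1
      rcases h1 with h1 | h1
      · exact Or.inl h1
      · rw [h1]; exact hXw e he
    · intro Z hZ hZg hZn hZw
      refine hzero Z hZ hZg fun e he => ?_
      by_contra hZe
      have hne : restrictAway A Z ≠ 0 := fun h => hZe (by
        rw [← res_not_mem (X := Z) (hwA e he), h]; rfl)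
      have := hD₀.2.2 _ ((hmemN _).2 ⟨Z, hZ, hZg, rfl⟩) hne (by
        intro a ha
        have haA : a ∉ A := fun h => ha (res_mem h)
        rw [mem_supp, res_not_mem haA] at ha
        have han : a ≠ n := by rintro rfl; exact ha hZn
        have haw : a ∈ w := by
          by_contra h
          exact haA ⟨h, han⟩
        rw [← hDD, mem_supp, res_not_mem haA]
        exact fun h => ha (hZw a haw h))
      have hn : n ∈ supp D₀ := by rw [mem_supp, hD₀f]; exact hXf
      rw [← this, mem_supp, res_not_mem hnA] at hn
      exact hn hZn
  have hDf0 : D n ≠ 0 := by rwa [hDf]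
  obtain ⟨a, haw, haD⟩ : ∃ a ∈ w, D a ≠ 0 := by
    by_contra hc
    push Not at hc
    exact hDf0 (by rw [hzero D hD hDg hc]; rfl)
  have han : a ≠ n := (hwn a haw).ne
  obtain ⟨w', W, hw', hW, hWa, hWle⟩ := hP.exists_node_le (M.compose_mem Y hY.mem D hD)
    (fun e he => by
      by_cases h0 : Y e = 0
      · rw [compose_of_eq h0]
        by_cases hew : e ∈ w
        · exact hDw e hew
        · left
          by_contra hDe
          have heg : e ≠ n + 1 := by rintro rfl; exact hDe hDg
          exact hew ((hY.mem_iff e).2 ⟨hP.lt_of_mem (M.supp_subset D hD hDe) he heg, h0⟩)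
      · rw [compose_of_ne h0]; exact hY.nonneg e he) han
    (by rw [compose_of_eq (hY0 a haw)]; exact haD)
  -- The direction to the new node agrees with `D`.
  obtain ⟨X', hX', hXg', h1, h2⟩ := hW.direction hY
  have hXw' : ∀ e ∈ w, X' e = W e := fun e he => h2 e (hY0 e he)
  have hWD : ∀ e ∈ w, W e = 0 ∨ W e = D e := fun e he => by
    have := hWle e (hwn e he).ne
    rwa [compose_of_eq (hY0 e he)] at this
  have hWD0 : ∀ e ∈ w, D e = 0 → W e = 0 := fun e he h => (hWD e he).elim id fun h' => by rw [h', h]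
  -- Since `D` spans its face, covectors in that face with opposite values at `f` are opposite.
  have elimf : ∀ A ∈ M.covectors, ∀ B ∈ M.covectors, A (n + 1) = 0 → B (n + 1) = 0 →
      A n = -B n → A n ≠ 0 → (∀ e ∈ w, D e = 0 → A e = 0 ∧ B e = 0) →
      ∀ e, A e = -B e := by
    intro A hA B hB hAg hBg hAB hAn hw e
    obtain ⟨Z, hZ, hZn, hZs⟩ := M.elim A hA B hB n ⟨hAB, hAn⟩
    have hZ0 : ∀ e, A e = 0 → B e = 0 → Z e = 0 := fun e h1 h2 => by
      rw [hZs e (fun h => h.2 h1), compose_of_eq h1, h2]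
    have hZz := hU Z hZ (hZ0 _ hAg hBg) hZn fun e he hDe => hZ0 e (hw e he hDe).1 (hw e he hDe).2
    by_contra hne
    have hs : e ∉ sep A B := fun h => hne h.1
    have h := hZs e hs
    rw [hZz] at h
    by_cases h0 : A e = 0
    · rw [compose_of_eq h0] at h
      exact hne (by rw [h0, ← h]; rfl)
    · rw [compose_of_ne h0] at h
      exact h0 h.symm
  have hXn : X' n ≠ 0 := fun h0 => by
    have := hU X' hX' hXg' h0 fun e he hDe => by rw [hXw' e he, hWD0 e he hDe]
    have ha := hXw' a haw
    rw [this, hWa] at ha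
    exact absurd (show (0 : SignType) = 1 from ha) (by decide)
  have hDa : D a = 1 := (hDw a haw).resolve_left haD
  have hXDn : X' n = D n := by
    by_contra hne
    have hop : X' n = -D n := by
      revert hne hXn hDf0; generalize X' n = x; generalize D n = y; clear * -; revert x y; decide
    have := elimf X' hX' D hD hXg' hDg hop hXn
      (fun e he hDe => ⟨by rw [hXw' e he, hWD0 e he hDe], hDe⟩) a
    rw [hXw' a haw, hWa, hDa] at this
    exact absurd this (by decide)
  obtain ⟨C, hC, hCn, hCle⟩ := exists_cocircuit_le M hX' hXn
  have hCX : ∀ e, X' e = C e := by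
    intro e
    have hC0 : ∀ e, X' e = 0 → C e = 0 := fun e h => (hCle e).elim id fun h' => by rw [h', h]
    have := elimf X' hX' (-C) (M.neg_mem C hC.1) hXg' (by rw [Pi.neg_apply, hC0 _ hXg']; rfl)
      (by rw [Pi.neg_apply, hCn, neg_neg]) hXn
      (fun e he hDe => by
        have : X' e = 0 := by rw [hXw' e he, hWD0 e he hDe]
        exact ⟨this, by rw [Pi.neg_apply, hC0 e this]; rfl⟩) e
    rwa [Pi.neg_apply, neg_neg] at this
  have hXD : ∀ e, X' e = D e := by
    intro e
    have := elimf X' hX' (-D) (M.neg_mem D hD) hXg' (by rw [Pi.neg_apply, hDg]; rfl)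
      (by rw [Pi.neg_apply, hXDn, neg_neg]) hXn
      (fun e he hDe => ⟨by rw [hXw' e he, hWD0 e he hDe], by rw [Pi.neg_apply, hDe]; rfl⟩) e
    rwa [Pi.neg_apply, neg_neg] at this
  have hCD : C = D := funext fun e => by rw [← hCX, hXD]
  have hw0 : ∀ e ∈ w, (e ∈ w' ↔ D e = 0) := fun e he => by
    rw [hW.mem_iff, ← hXD, hXw' e he]
    exact ⟨fun h => h.2, fun h => ⟨hwn e he, h⟩⟩
  refine ⟨w', D, hw', ?_, ?_, hCD ▸ hC, hDg, fun e he => ?_, fun e he => ?_, fun e he => ?_, hDf⟩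
  · rintro rfl
    exact haD ((hw0 a haw).1 haw)
  -- A basis of the common zeros together with `f` and `g` is a basis of `M`.
  · obtain ⟨I, hIA, hI, hIc⟩ := exists_indep_rk M (w ∩ w')
    have hIw : ∀ e ∈ I, e ∈ w ∧ D e = 0 := fun e he =>
      ⟨(hIA he).1, (hw0 e (hIA he).1).1 (hIA he).2⟩
    have hgI : n + 1 ∉ I := fun h => absurd (hwn _ (hIw _ h).1) (by omega)
    have hnI : n ∉ insert (n + 1) I := by
      rintro (h | h)
      · omega
      · exact absurd (hwn _ (hIw _ h).1) (by omega)
    have hIf : I.Finite := M.ground_finite.subset hI.1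
    have hJ1 := indep_insert hI hY.mem (fun e he => hY0 e (hIw e he).1) (e := n + 1)
      (by rw [hY.rhs]; decide)
    have hJ := indep_insert hJ1 hD (by
      rintro e (rfl | he)
      exacts [hDg, (hIw e he).2]) hDf0
    have hJc : (insert n (insert (n + 1) I)).ncard = I.ncard + 2 := by
      rw [Set.ncard_insert_of_notMem hnI (hIf.insert _), Set.ncard_insert_of_notMem hgI hIf]
    have hle := ncard_le_rank M hJ
    obtain ⟨B, -, hB, hBc⟩ := exists_indep_rk M M.ground
    have hBr : B.ncard = r := by rw [hBc]; exact hP.2.1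
    have hge := ((indep_iff M B).1 hB).ncard_le (J := insert n (insert (n + 1) I))
      ((hIf.insert _).insert _) (fun Z hZ _ hZJ => by
        refine hU Z hZ (hZJ _ (by simp)) (hZJ _ (by simp)) fun e he hDe => ?_
        by_contra hZe
        have hZI : ∀ a ∈ I, Z a = 0 := fun a ha => hZJ a (by simp [ha])
        have heI : e ∉ I := fun h => hZe (hZI e h)
        have := ncard_le_rk M (A := w ∩ w') (Set.insert_subset ⟨he, (hw0 e he).2 hDe⟩ hIA)
          (indep_insert hI hZ hZI hZe)
        rw [Set.ncard_insert_of_notMem heI hIf] at this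
        omega)
    rw [hP.2.1] at hle
    omega
  · have := (hDw e he.1).resolve_left fun h => he.2 ((hw0 e he.1).2 h)
    exact this
  · have hWe := (hW.mem_iff e).1 he.1
    rw [← hXD, h1 e hWe.2]
    have : Y e ≠ 0 := fun h => he.2 ((hY.mem_iff e).2 ⟨hWe.1, h⟩)
    rw [(hY.nonneg e hWe.1.ne).resolve_left this]
  · exact (hw0 e he.1).1 he.2

/-- No direction that stays weakly feasible at the sink increases the objective. -/
theorem IsProgram.direction_sink (hP : IsProgram M Mf n r)
    (hcol : ∀ Z ∈ M.covectors, (∀ e, e ≠ n → Z e = 0) → Z = 0)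
    {w : Set ℕ} (hw : IsSink M Mf n r w) {Y X : SignVec ℕ} (hY : IsNodeLift M n w Y)
    (hX : X ∈ M.covectors) (hXg : X (n + 1) = 0) (hXw : ∀ e ∈ w, X e = 0 ∨ X e = 1) :
    X n ≠ 1 := by
  intro hXf
  obtain ⟨w', D, hw', hne, hrk, hD, hDg, h1, h2, h0, hDf⟩ :=
    hP.exists_edge hcol hY hX hXg hXw (by rw [hXf]; decide)
  have hs : supp (-D) = supp D := Set.ext fun e => by
    rw [mem_supp, mem_supp, Pi.neg_apply]
    generalize D e = x; revert x; decide
  refine hw.2 w' ⟨hw.1, hw', hne, hrk, -D, ⟨M.neg_mem D hD.1, fun h => ?_, ?_⟩, ?_, ?_, ?_, ?_, ?_,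
    ?_⟩
  · have := congrFun h n
    rw [Pi.neg_apply, hDf, hXf] at this
    exact absurd (show (-1 : SignType) = 0 from this) (by decide)
  · rw [hs]; exact hD.2.2
  · rw [Pi.neg_apply, hDg]; rfl
  · intro e he; rw [Pi.neg_apply, h2 e he]; rfl
  · intro e he; rw [Pi.neg_apply, h1 e he]
  · intro e he; rw [Pi.neg_apply, h0 e he]; rfl
  · rw [Pi.neg_apply, hDf, hXf]; decide
  · intro e he; rw [Pi.neg_apply, Pi.neg_apply, h1 e he, hDf, hXf]

/-- No direction that stays weakly feasible at the source decreases the objective. -/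
theorem IsProgram.direction_source (hP : IsProgram M Mf n r)
    (hcol : ∀ Z ∈ M.covectors, (∀ e, e ≠ n → Z e = 0) → Z = 0)
    {w : Set ℕ} (hw : IsSource M Mf n r w) {Y X : SignVec ℕ} (hY : IsNodeLift M n w Y)
    (hX : X ∈ M.covectors) (hXg : X (n + 1) = 0) (hXw : ∀ e ∈ w, X e = 0 ∨ X e = 1) :
    X n ≠ -1 := by
  intro hXf
  obtain ⟨w', D, hw', hne, hrk, hD, hDg, h1, h2, h0, hDf⟩ :=
    hP.exists_edge hcol hY hX hXg hXw (by rw [hXf]; decide)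
  refine hw.2 w' ⟨hw', hw.1, hne.symm, by rw [Set.inter_comm]; exact hrk, D, hD, hDg, h1, h2,
    by rw [Set.inter_comm]; exact h0, by rw [hDf, hXf]; decide, fun e he => by
      rw [hDf, hXf, h2 e he]⟩

end Program

section Contraction

variable {M Mf Mfg : OrientedMatroid ℕ} {n r : ℕ}

/-! ### Topes of the contraction that are positive on a node -/

/-- A circuit through `f` in a program is a basis together with `f`, so a covector vanishing on the
rest of the circuit is zero. -/
theorem IsProgram.eq_zero_of_circuit (hP : IsProgram M Mf n r) {C X : SignVec ℕ}
    (hC : M.IsCircuit C) (hCn : C n ≠ 0) (hX : X ∈ M.covectors)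
    (h0 : ∀ e, e ≠ n → C e ≠ 0 → X e = 0) : X = 0 := by
  have hfin : (supp C).Finite := M.ground_finite.subset hC.1.1
  have hI : M.Indep (supp C \ {n}) := by
    rw [indep_iff_vector]
    refine ⟨Set.sdiff_subset.trans hC.1.1, fun V hV hVs => ?_⟩
    by_contra hne
    have hn : n ∈ supp C := hCn
    rw [← hC.2.2 V hV hne (hVs.trans Set.sdiff_subset)] at hn
    exact (hVs hn).2 rfl
  refine eq_zero_of_basis hI ?_ hX fun e he => h0 e he.2 he.1
  have h1 := hP.2.2.2.2.2 C hC hCn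
  have h2 := Set.ncard_sdiff_singleton_add_one (show n ∈ supp C from hCn) hfin
  rw [hP.2.1]
  omega

/-- A node other than the source and the sink has a covector of `M` vanishing at `f` and `g` and
positive on the node. A vector obstructing this would, by orthogonality, force the direction from
the sink to the node to increase the objective, or the one from the source to decrease it. -/
theorem IsProgram.exists_positive (hP : IsProgram M Mf n r) {src snk v : Set ℕ}
    (hsrc : IsSource M Mf n r src) (hsnk : IsSink M Mf n r snk) (hv : IsNode Mf n v)
    (h1 : v ≠ src) (h2 : v ≠ snk) :
    ∃ X ∈ (con M {n, n + 1}).covectors, ∀ e ∈ v, X e = 1 := by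
  obtain ⟨Y, hY⟩ := hP.exists_lift hv
  have hvn : ∀ e ∈ v, e < n := fun e he => ((hY.mem_iff e).1 he).1
  have hY0 : ∀ e ∈ v, Y e = 0 := fun e he => ((hY.mem_iff e).1 he).2
  have mul_ne : ∀ x y : SignType, (x = 0 ∨ x = 1) → (y = 0 ∨ y = -1) → x * y ≠ 1 := by decide
  have key : ∀ e ∈ v, ∃ U ∈ (con M {n, n + 1}).covectors, U e = 1 ∧
      ∀ a ∈ v, U a = 0 ∨ U a = 1 := by
    intro e he
    have heg : e ∈ (con M {n, n + 1}).ground := by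
      refine ⟨?_, ?_⟩
      · rw [hP.1]; exact Or.inl (hvn e he)
      · have := hvn e he
        simp only [Set.mem_insert_iff, Set.mem_singleton_iff]
        omega
    rcases paint (con M {n, n + 1}) vᶜ (fun _ => 1) heg (fun h => h he) (by decide) with
      ⟨U, hU, hUe, hUv⟩ | ⟨V, hV, hVe, hV0, hV1⟩
    · exact ⟨U, hU, hUe, fun a ha => hUv a fun h => h ha⟩
    -- Otherwise a vector `W` of `M` is nonnegative on `v`, and zero elsewhere except at `f` and `g`.
    exfalso
    obtain ⟨W, hW, rfl⟩ := (vector_con_iff M _ V).1 hV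
    have hre : ∀ a, a ≠ n → a ≠ n + 1 → restrictAway {n, n + 1} W a = W a := fun a h1 h2 =>
      res_not_mem (by simp [h1, h2])
    have hWv : ∀ a ∈ v, W a = 0 ∨ W a = 1 := fun a ha => by
      have := hvn a ha
      rw [← hre a (by omega) (by omega)]
      exact hV1 a (fun h => h ha) (by decide)
    have hW0 : ∀ a, a ∉ v → a ≠ n → a ≠ n + 1 → W a = 0 := fun a ha h1 h2 => by
      rw [← hre a h1 h2]; exact hV0 a ha
    have hWe : W e = 1 := by
      have := hvn e he
      rw [← hre e (by omega) (by omega)]; exact hVe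
    -- If `W` vanishes at `f`, it also vanishes at `g`, so it is nonnegative; this contradicts the
    -- nonnegative cocircuit that is positive at `e`.
    by_cases hWn : W n = 0
    · have hWY : ∀ a, a ≠ n + 1 → W a * Y a = 0 := fun a ha => by
        by_cases hav : a ∈ v
        · rw [hY0 a hav, mul_zero]
        · by_cases han : a = n
          · rw [han, hWn, zero_mul]
          · rw [hW0 a hav han ha, zero_mul]
      have hWg : W (n + 1) = 0 := by
        have ho := hW.2 Y hY.mem
        by_contra hne
        rcases sign_cases (W (n + 1)) with h | h | h
        · exact hne h
        · have := orth_nonneg ho (fun a => by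
            by_cases ha : a = n + 1
            · rw [ha, h, hY.rhs]; decide
            · rw [hWY a ha]; decide) (n + 1)
          rw [h, hY.rhs] at this
          exact absurd this (by decide)
        · have := orth_nonpos ho (fun a => by
            by_cases ha : a = n + 1
            · rw [ha, h, hY.rhs]; decide
            · rw [hWY a ha]; decide) (n + 1)
          rw [h, hY.rhs] at this
          exact absurd this (by decide)
      obtain ⟨Q, hQ, hQn, hQe⟩ := hP.2.2.2.2.1 e (hvn e he)
      obtain ⟨Q', hQ', hQQ⟩ := hP.lift hQ hQn
      have := orth_nonneg (hW.2 Q' hQ'.mem) (fun a => by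
        by_cases ha : a = n
        · rw [ha, hWn, zero_mul]; decide
        · have hWa : W a = 0 ∨ W a = 1 := by
            by_cases hag : a = n + 1
            · rw [hag]; exact Or.inl hWg
            · by_cases hav : a ∈ v
              · exact hWv a hav
              · exact Or.inl (hW0 a hav ha hag)
          have := hQ'.nonneg a ha
          revert this hWa; generalize W a = x; generalize Q' a = y; clear * -; revert x y; decide) e
      rw [hWe, hQQ e (hvn e he).ne, hQe] at this
      exact absurd this (by decide)
    · obtain ⟨C, hC, hCn, hCle⟩ := exists_circuit_le M hW hWn
      have hCn0 : C n ≠ 0 := by rwa [hCn]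
      have hCv : ∀ a ∈ v, C a = 0 ∨ C a = 1 := fun a ha => by
        rcases hCle a with h | h
        · exact Or.inl h
        · rw [h]; exact hWv a ha
      have hC0 : ∀ a, a ∉ v → a ≠ n → a ≠ n + 1 → C a = 0 := fun a ha h1 h2 => by
        rcases hCle a with h | h
        · exact h
        · rw [h, hW0 a ha h1 h2]
      have hcol : ∀ Z ∈ M.covectors, (∀ a, a ≠ n → Z a = 0) → Z = 0 := fun Z hZ h =>
        hP.eq_zero_of_circuit hC hCn0 hZ fun a ha _ => h a ha
      -- The direction from any other node to `v` changes the objective by the sign `C n`.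
      have dir : ∀ w Yw, IsNodeLift M n w Yw → v ≠ w → ∃ X ∈ M.covectors, X (n + 1) = 0 ∧
          (∀ a ∈ w, X a = 0 ∨ X a = 1) ∧ X n = C n := by
        intro w Yw hYw hne
        obtain ⟨X, hX, hXg, hXv, hXw⟩ := hY.direction hYw
        refine ⟨X, hX, hXg, fun a ha => ?_, ?_⟩
        · have := (hYw.mem_iff a).1 ha
          rw [hXw a this.2]
          exact hY.nonneg a this.1.ne
        · have ho := hC.1.2 X hX
          have hXv' : ∀ a ∈ v, X a = 0 ∨ X a = -1 := fun a ha => by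
            rw [hXv a (hY0 a ha)]
            rcases hYw.nonneg a (hvn a ha).ne with h | h <;> rw [h]
            exacts [Or.inl rfl, Or.inr rfl]
          have hmul : ∀ a, a ≠ n → C a * X a ≠ 1 := by
            intro a ha
            by_cases hag : a = n + 1
            · rw [hag, hXg, mul_zero]; decide
            · by_cases hav : a ∈ v
              · exact mul_ne _ _ (hCv a hav) (hXv' a hav)
              · rw [hC0 a hav ha hag, zero_mul]; decide
          by_contra hXC
          have hn1 : C n * X n ≠ 1 := by
            revert hXC hCn0; generalize C n = x; generalize X n = y; clear * -; revert x y; decide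
          have hall := orth_nonpos ho fun a => by
            by_cases ha : a = n
            · rw [ha]; exact hn1
            · exact hmul a ha
          have hX0 : X = 0 := hP.eq_zero_of_circuit hC hCn0 hX fun a _ hCa =>
            (mul_eq_zero.1 (hall a)).resolve_left hCa
          obtain ⟨a, hav, haw⟩ := hY.exists_not_mem hYw hne
          have h := hXv a (hY0 a hav)
          rw [hX0] at h
          have hYa : Yw a ≠ 0 := fun h0 => haw ((hYw.mem_iff a).2 ⟨hvn a hav, h0⟩)
          rw [(hYw.nonneg a (hvn a hav).ne).resolve_left hYa] at h
          exact absurd (show (0 : SignType) = -1 from h) (by decide)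
      rcases sign_cases (C n) with h | h | h
      · exact hCn0 h
      · obtain ⟨Yw, hYw⟩ := hP.exists_lift hsnk.1
        obtain ⟨X, hX, hXg, hXw, hXn⟩ := dir _ Yw hYw h2
        exact hP.direction_sink hcol hsnk hYw hX hXg hXw (hXn.trans h)
      · obtain ⟨Yw, hYw⟩ := hP.exists_lift hsrc.1
        obtain ⟨X, hX, hXg, hXw, hXn⟩ := dir _ Yw hYw h1
        exact hP.direction_source hcol hsrc hYw hX hXg hXw (hXn.trans h)
  classical
  obtain ⟨U, hU, hUv⟩ := compose_all (C := (con M {n, n + 1}).covectors)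
    (con M {n, n + 1}).zero_mem (con M {n, n + 1}).compose_mem
    (S := fun e => if e ∈ v then 1 else 0)
    ((Set.finite_lt_nat n).subset fun e he => by
      by_contra h
      refine he (if_neg fun hev => h (hvn e hev)))
    (Q := v) (fun e he _ => by
      obtain ⟨U, hU, hUe, hUv⟩ := key e he
      refine ⟨U, hU, by rw [hUe, if_pos he], fun a ha => ?_⟩
      rw [if_pos ha]; exact hUv a ha)
  exact ⟨U, hU, fun e he => by rw [hUv e he, if_pos he]⟩

/-! ### The rank of the contraction -/

/-- For `r ≥ 3`, any `r - 1` elements of `M / {f, g}` are dependent. -/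
theorem IsProgram.dep_contraction (hP : IsProgram M Mf n r) (hr : 3 ≤ r) {v : Set ℕ}
    (hv : IsNode Mf n v) {S : Set ℕ} (hS : S ⊆ (con M {n, n + 1}).ground)
    (hSc : S.ncard = r - 1) :
    ∃ V, (con M {n, n + 1}).IsVector V ∧ V ≠ 0 ∧ supp V ⊆ S := by
  by_contra hc
  push Not at hc
  obtain ⟨Y, hY⟩ := hP.exists_lift hv
  have hgr : n ∈ M.ground ∧ n + 1 ∈ M.ground := by
    rw [hP.1]; exact ⟨Or.inr (by simp), Or.inr (by simp)⟩
  have hSf : S.Finite := M.ground_finite.subset fun e he => (hS he).1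
  have hgS : n + 1 ∉ S := fun h => (hS h).2 (by simp)
  have hnS : n ∉ insert (n + 1) S := by
    rintro (h | h)
    · omega
    · exact (hS h).2 (by simp)
  have hI : M.Indep (insert n (insert (n + 1) S)) := by
    rw [indep_iff_vector]
    refine ⟨Set.insert_subset hgr.1 (Set.insert_subset hgr.2 fun e he => (hS he).1),
      fun V hV hVs => ?_⟩
    have h0 : restrictAway {n, n + 1} V = 0 := by
      by_contra hne
      refine hc _ ((vector_con_iff M _ _).2 ⟨V, hV, rfl⟩) hne fun e he => ?_
      have hen : e ∉ ({n, n + 1} : Set ℕ) := fun h => he (res_mem h)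
      rw [mem_supp, res_not_mem hen] at he
      rcases hVs he with rfl | rfl | h
      exacts [absurd (by simp) hen, absurd (by simp) hen, h]
    have hV0 : ∀ e, e ≠ n → e ≠ n + 1 → V e = 0 := fun e h1 h2 => by
      rw [← res_not_mem (A := {n, n + 1}) (X := V) (e := e) (by simp [h1, h2]), h0]; rfl
    have hVn : V n = 0 := by
      by_contra hne
      obtain ⟨C, hC, hCn, hCle⟩ := exists_circuit_le M hV hne
      have h1 := hP.2.2.2.2.2 C hC (by rwa [hCn])
      have h2 : (supp C).ncard ≤ ({n, n + 1} : Set ℕ).ncard := by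
        refine Set.ncard_le_ncard (fun e he => ?_) (by simp)
        by_contra h
        simp only [Set.mem_insert_iff, Set.mem_singleton_iff, not_or] at h
        rcases hCle e with h' | h'
        · exact he h'
        · exact he (by rw [h', hV0 e h.1 h.2])
      rw [Set.ncard_pair (by omega)] at h2
      omega
    funext e
    show V e = 0
    by_cases hen : e = n
    · rw [hen, hVn]
    by_cases heg : e = n + 1
    · subst heg
      by_contra hne
      have hz : ∀ a, a ≠ n + 1 → V a * Y a = 0 := fun a ha => by
        by_cases han : a = n
        · rw [han, hVn, zero_mul]
        · rw [hV0 a han ha, zero_mul]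
      have hmul : V (n + 1) * Y (n + 1) = 0 := by
        rcases sign_cases (V (n + 1)) with h | h | h
        · exact absurd h hne
        · exact orth_nonneg (hV.2 Y hY.mem) (fun a => by
            by_cases ha : a = n + 1
            · rw [ha, h, hY.rhs]; decide
            · rw [hz a ha]; decide) (n + 1)
        · exact orth_nonpos (hV.2 Y hY.mem) (fun a => by
            by_cases ha : a = n + 1
            · rw [ha, h, hY.rhs]; decide
            · rw [hz a ha]; decide) (n + 1)
      rw [hY.rhs, mul_one] at hmul
      exact hne hmul
    · exact hV0 e hen heg
  have := ncard_le_rank M hI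
  rw [Set.ncard_insert_of_notMem hnS (hSf.insert _), Set.ncard_insert_of_notMem hgS hSf, hSc,
    hP.2.1] at this
  omega

/-- `M / {f, g}` has rank at least `r - 2`. -/
theorem IsProgram.indep_contraction (hP : IsProgram M Mf n r) :
    ∃ I, CIndep (con M {n, n + 1}) ∅ I ∧ I.ncard = r - 2 := by
  obtain ⟨B, -, hB, hBc⟩ := exists_indep_rk M M.ground
  have hBr : B.ncard = r := by rw [hBc]; exact hP.2.1
  obtain ⟨I₁, -, hI₁, hc₁⟩ := ((indep_iff M B).1 hB).exchange (n + 1)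
  obtain ⟨I₂, -, hI₂, hc₂⟩ := hI₁.exchange n
  obtain ⟨I, hI, hIc⟩ := Set.exists_subset_card_eq (show r - 2 ≤ I₂.ncard by omega)
  refine ⟨I, fun i hi => ?_, hIc⟩
  obtain ⟨Z, hZ, hZ0, hZi, hZj⟩ := hI₂.mono hI i hi
  exact ⟨Z, ⟨hZ, fun a ha => hZ0 a (by simpa using ha)⟩, fun _ h => absurd h (by simp), hZi, hZj⟩

end Contraction

/-- Let `M` be an oriented matroid program of rank `r ≤ 5`
on `[n] ∪ {f, g}` (`f = n`, `g = n + 1`, `Mf = M ∖ f`, `Mfg = M / {f, g}`,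
so `M / {f, g}` has rank at most 3), and let `vt 1, …, vt (r-2)` be nodes of
`K_f`, none the source or sink of `K_f`.  Then there is an extension
`Mtilde` of `M / {f, g}` by the element `h = n + 2` such that for each `i`
there is a cocircuit `Zⁱ` of `Mtilde` with `Zⁱ h = +` and `Zⁱ e ∈ {+, 0}`
for all `e ∈ vt i`. -/
theorem extension_exists_low_rank (M Mf Mfg : OrientedMatroid ℕ) (n r : ℕ)
    (src snk : Set ℕ) (vt : Fin (r - 2) → Set ℕ)
    (hProg : IsProgram M Mf n r) (hr : r ≤ 5)
    (hMfg : IsContraction M {n, n + 1} Mfg)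
    (hsrc : IsSource M Mf n r src)
    (hsnk : IsSink M Mf n r snk)
    (hnodes : ∀ i, IsNode Mf n (vt i) ∧ vt i ≠ src ∧ vt i ≠ snk) :
    ∃ Mtilde : OrientedMatroid ℕ, IsExtension Mfg (n + 2) Mtilde ∧
      ∀ i, ∃ Z : SignVec ℕ, Mtilde.IsCocircuit Z ∧ Z (n + 2) = 1 ∧
        ∀ e ∈ vt i, Z e = 1 ∨ Z e = 0 := by
  have hg : Mfg.ground = (con M {n, n + 1}).ground := hMfg.1
  have hcov : Mfg.covectors = (con M {n, n + 1}).covectors := covectors_of_isContraction hMfg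
  have hh : n + 2 ∉ Mfg.ground := by
    rw [hMfg.1]
    rintro ⟨h1, h2⟩
    have := hProg.lt_of_mem h1 (by omega) (by omega)
    omega
  have hT : ∀ i, ∃ T, IsTope Mfg T ∧ ∀ e ∈ vt i, T e = 1 := by
    intro i
    obtain ⟨X, hX, hXv⟩ :=
      hProg.exists_positive hsrc hsnk (hnodes i).1 (hnodes i).2.1 (hnodes i).2.2
    obtain ⟨T, hT⟩ := exists_tope Mfg
    refine ⟨compose X T, hT.compose (hcov ▸ hX), fun e he => ?_⟩
    rw [compose_of_ne (by rw [hXv e he]; decide), hXv e he]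
  choose T hT hTv using hT
  obtain ⟨Nh, hN, hX⟩ := exists_extension_low Mfg hh (r - 2) (by omega) T hT
    (fun hr0 S hS hSc => by
      obtain ⟨V, hV, hV0, hVS⟩ := hProg.dep_contraction (by omega) hsrc.1 (hg ▸ hS)
        (show S.ncard = r - 1 by omega)
      exact ⟨V, (vector_congr hg hcov V).2 hV, hV0, hVS⟩)
    (fun _ => by
      obtain ⟨I, hI, hIc⟩ := hProg.indep_contraction
      refine ⟨I, fun i hi => ?_, hIc⟩
      rw [hcov]
      exact hI i hi)
    ⟨n, by omega⟩
  refine ⟨Nh, hN, fun i => ?_⟩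
  obtain ⟨X, hXm, hXh, hXT⟩ := hX i
  obtain ⟨Z, hZ, hZh, hZle⟩ := exists_cocircuit_le Nh hXm (e := n + 2) (by rw [hXh]; decide)
  refine ⟨Z, hZ, hZh.trans hXh, fun e he => ?_⟩
  have hen : e < n := by
    obtain ⟨Y, -, -, hv⟩ := (hnodes i).1
    rw [hv] at he
    exact he.1
  rcases hZle e with h | h
  · exact Or.inr h
  · left
    rw [h, hXT e (by omega), hTv i e he]

end OMHK
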